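/- arXiv:1405.6634 — 8 statements merged into one kernel-verified Lean document; each statement's English description precedes it below -/
import Mathlib

section
/- Let ν be a compactly supported probability measure on ℝ with ∫ v dν(v) = 0, let I_ν be the smallest closed interval containing supp ν, and assume there is ϖ > 0 such that ∫ dν(v)/(v − x)² ≥ 1 + ϖ for every x ∈ I_ν (the integral possibly being +∞). Then the equation ∫ dν(v)/(v − ζ)² = 1 has exactly two real solutions; both lie outside I_ν, and denoting them ζ− < ζ+, one has ζ− < inf I_ν ≤ 0 ≤ sup I_ν < ζ+; in particular ζ− < 0 < ζ+. -/
open MeasureTheory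

open Filter Topology

lemma aux_cont (v : ℝ) : Continuous (fun x : ℝ => (ENNReal.ofReal ((v - x) ^ 2))⁻¹) :=
  (ENNReal.continuous_ofReal.comp (by fun_prop : Continuous fun x : ℝ => (v - x) ^ 2)).inv

lemma aux_meas (x : ℝ) : Measurable (fun v : ℝ => (ENNReal.ofReal ((v - x) ^ 2))⁻¹) := by
  fun_prop

lemma aux_bound {v b c x : ℝ} (hv : v ≤ b) (hc : b < c) (hx : c ≤ x) :
    (ENNReal.ofReal ((v - x) ^ 2))⁻¹ ≤ (ENNReal.ofReal ((c - b) ^ 2))⁻¹ := by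
  apply ENNReal.inv_le_inv.2
  apply ENNReal.ofReal_le_ofReal
  nlinarith

lemma aux_fin {b c : ℝ} (hc : b < c) : (ENNReal.ofReal ((c - b) ^ 2))⁻¹ ≠ ⊤ := by
  have : c - b ≠ 0 := (sub_pos.2 hc).ne'
  simpa using this

lemma aux_side (ν : Measure ℝ) [IsProbabilityMeasure ν] (b : ℝ) (hb : ∀ᵐ v ∂ν, v ≤ b)
    (hF : 1 < ∫⁻ v, (ENNReal.ofReal ((v - b) ^ 2))⁻¹ ∂ν) :
    ∃ z : ℝ, b < z ∧ (∫⁻ v, (ENNReal.ofReal ((v - z) ^ 2))⁻¹ ∂ν) = 1 ∧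
      ∀ y : ℝ, b < y → (∫⁻ v, (ENNReal.ofReal ((v - y) ^ 2))⁻¹ ∂ν) = 1 → y = z := by
  set F : ℝ → ENNReal := fun x => ∫⁻ v, (ENNReal.ofReal ((v - x) ^ 2))⁻¹ ∂ν with hFdef
  have hle : ∀ c x : ℝ, b < c → c ≤ x → F x ≤ (ENNReal.ofReal ((c - b) ^ 2))⁻¹ := by
    intro c x hc hx
    calc F x ≤ ∫⁻ v, (ENNReal.ofReal ((c - b) ^ 2))⁻¹ ∂ν := by
          apply lintegral_mono_ae
          filter_upwards [hb] with v hv using aux_bound hv hc hx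
      _ = _ := by simp
  have hanti : ∀ x y : ℝ, b < x → x < y → F y < F x := by
    intro x y hx hxy
    apply lintegral_strict_mono (IsProbabilityMeasure.ne_zero ν) (aux_meas x).aemeasurable
    · exact ne_top_of_le_ne_top (aux_fin (hx.trans hxy)) (hle y y (hx.trans hxy) le_rfl)
    · filter_upwards [hb] with v hv
      apply ENNReal.inv_lt_inv.2
      apply (ENNReal.ofReal_lt_ofReal_iff_of_nonneg (by positivity)).2
      nlinarith
  have hseq : Tendsto (fun n : ℕ => b + 1 / ((n : ℝ) + 1)) atTop (𝓝 b) := by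
    simpa using tendsto_one_div_add_atTop_nhds_zero_nat.const_add b
  have hfat : F b ≤ liminf (fun n : ℕ => F (b + 1 / ((n : ℝ) + 1))) atTop := by
    calc F b = ∫⁻ v, liminf (fun n : ℕ =>
            (ENNReal.ofReal ((v - (b + 1 / ((n : ℝ) + 1))) ^ 2))⁻¹) atTop ∂ν := by
          apply lintegral_congr
          intro v
          exact ((((aux_cont v).tendsto b).comp hseq).liminf_eq).symm
      _ ≤ _ := lintegral_liminf_le (fun n => aux_meas _)
  obtain ⟨n, hn⟩ := (eventually_lt_of_lt_liminf (lt_of_lt_of_le hF hfat)).exists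
  set c := b + 1 / ((n : ℝ) + 1) with hc
  have hbc : b < c := by
    have : 0 < 1 / ((n : ℝ) + 1) := by positivity
    linarith
  have hcont : ContinuousOn F (Set.Icc c (c + 2)) := by
    intro x hx
    apply tendsto_lintegral_filter_of_dominated_convergence
      (fun _ => (ENNReal.ofReal ((c - b) ^ 2))⁻¹)
    · exact Eventually.of_forall fun y => aux_meas y
    · filter_upwards [self_mem_nhdsWithin] with y hy
      filter_upwards [hb] with v hv using aux_bound hv hbc hy.1
    · simpa using aux_fin hbc
    · exact Eventually.of_forall fun v => ((aux_cont v).tendsto x).mono_left nhdsWithin_le_nhds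
  have hend : F (c + 2) ≤ 1 := by
    refine (hle (c + 2) (c + 2) (by linarith) le_rfl).trans ?_
    rw [ENNReal.inv_le_one, ENNReal.one_le_ofReal]
    nlinarith
  obtain ⟨z, hz, hz1⟩ := intermediate_value_Icc' (by linarith : c ≤ c + 2) hcont ⟨hend, hn.le⟩
  refine ⟨z, lt_of_lt_of_le hbc hz.1, hz1, ?_⟩
  intro y hy hy1
  have hbz := lt_of_lt_of_le hbc hz.1
  rcases lt_trichotomy y z with h | h | h
  · have := hanti y z hy h
    rw [hz1] at this
    exact absurd hy1 this.ne'
  · exact h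
  · have := hanti z y hbz h
    rw [hz1] at this
    exact absurd hy1 this.ne

/-- Let `ν` be a compactly supported centered probability measure on `ℝ`,
with `Set.Icc a b` its smallest closed supporting interval, satisfying the edge assumption
`∫ dν(v)/(v − x)² ≥ 1 + ϖ` for all `x ∈ [a,b]` (the integral possibly `+∞`, formalized via
the `ℝ≥0∞`-valued integral).  Then the equation `∫ dν(v)/(v − ζ)² = 1` has exactly two real
solutions `ζ− < ζ+`, both outside `[a,b]`, and `ζ− < a ≤ 0 ≤ b < ζ+`; in particular
`ζ− < 0 < ζ+`. -/
theorem stmt_1 (ν : Measure ℝ) [IsProbabilityMeasure ν]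
    (a b : ℝ) (hab : a ≤ b)
    (hsupp : ν (Set.Icc a b)ᶜ = 0)
    (hmin : ∀ a' b' : ℝ, ν (Set.Icc a' b')ᶜ = 0 → Set.Icc a b ⊆ Set.Icc a' b')
    (hcent : ∫ v, v ∂ν = 0)
    (ϖ : ℝ) (hϖ : 0 < ϖ)
    (hedge : ∀ x ∈ Set.Icc a b,
      ENNReal.ofReal (1 + ϖ) ≤ ∫⁻ v, (ENNReal.ofReal ((v - x) ^ 2))⁻¹ ∂ν) :
    ∃ ζm ζp : ℝ, ζm < ζp ∧
      (∫⁻ v, (ENNReal.ofReal ((v - ζm) ^ 2))⁻¹ ∂ν) = 1 ∧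
      (∫⁻ v, (ENNReal.ofReal ((v - ζp) ^ 2))⁻¹ ∂ν) = 1 ∧
      ζm ∉ Set.Icc a b ∧ ζp ∉ Set.Icc a b ∧
      ζm < a ∧ a ≤ 0 ∧ 0 ≤ b ∧ b < ζp ∧
      ζm < 0 ∧ 0 < ζp ∧
      (∀ ζ : ℝ, (∫⁻ v, (ENNReal.ofReal ((v - ζ) ^ 2))⁻¹ ∂ν) = 1 → ζ = ζm ∨ ζ = ζp) := by
  have hae : ∀ᵐ v ∂ν, v ∈ Set.Icc a b := hsupp
  have h1 : ∀ x ∈ Set.Icc a b, 1 < ∫⁻ v, (ENNReal.ofReal ((v - x) ^ 2))⁻¹ ∂ν := fun x hx =>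
    lt_of_lt_of_le (ENNReal.one_lt_ofReal.2 (by linarith)) (hedge x hx)
  have hint : Integrable (fun v : ℝ => v) ν :=
    Integrable.of_mem_Icc a b aemeasurable_id hae
  have ha0 : a ≤ 0 := by
    have := integral_mono_ae (integrable_const a) hint (hae.mono fun v hv => hv.1)
    simpa [hcent] using this
  have hb0 : 0 ≤ b := by
    have := integral_mono_ae hint (integrable_const b) (hae.mono fun v hv => hv.2)
    simpa [hcent] using this
  obtain ⟨p, hp, hp1, hpu⟩ := aux_side ν b (hae.mono fun v hv => hv.2) (h1 b ⟨hab, le_rfl⟩)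
  have hmap : ∀ x : ℝ, (∫⁻ v, (ENNReal.ofReal ((v - x) ^ 2))⁻¹ ∂(ν.map (fun v => -v))) =
      ∫⁻ v, (ENNReal.ofReal ((v - (-x)) ^ 2))⁻¹ ∂ν := by
    intro x
    rw [lintegral_map (aux_meas x) measurable_neg]
    apply lintegral_congr
    intro v
    congr 2
    ring
  haveI : IsProbabilityMeasure (ν.map (fun v : ℝ => -v)) :=
    Measure.isProbabilityMeasure_map measurable_neg.aemeasurable
  obtain ⟨m, hm, hm1, hmu⟩ := aux_side (ν.map (fun v => -v)) (-a)
    (by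
      rw [ae_map_iff measurable_neg.aemeasurable measurableSet_Iic]
      exact hae.mono fun v hv => neg_le_neg hv.1)
    (by rw [hmap, neg_neg]; exact h1 a ⟨le_rfl, hab⟩)
  rw [hmap] at hm1
  refine ⟨-m, p, by linarith, hm1, hp1, fun h => by linarith [h.1], fun h => by linarith [h.2],
    by linarith, ha0, hb0, hp, by linarith, by linarith, ?_⟩
  intro z hz
  by_cases hzb : b < z
  · exact Or.inr (hpu z hzb hz)
  by_cases hza : z < a
  · left
    have := hmu (-z) (by linarith) (by rw [hmap, neg_neg]; exact hz)
    linarith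
  · exact absurd hz (h1 z ⟨not_lt.1 hza, not_lt.1 hzb⟩).ne'
end

section
/- Let ν be a compactly supported probability measure on ℝ with ∫ v dν(v) = 0 satisfying the edge assumption, and let ζ− < ζ+ be the two real solutions of ∫ dν(v)/(v − ζ)² = 1 (both lying outside I_ν). Define L− := ζ− − ∫ dν(v)/(v − ζ−) and L+ := ζ+ − ∫ dν(v)/(v − ζ+). Then L− ≤ −2 and L+ ≥ 2; in particular L− < 0 < L+. -/
open MeasureTheory

/-- AM-GM: a positive variable bounded away from zero. -/
theorem aux_amgm (ν : Measure ℝ) [IsProbabilityMeasure ν] (f : ℝ → ℝ) (hf : Measurable f)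
    (c C : ℝ) (hc : 0 < c) (h : ∀ᵐ v ∂ν, c ≤ f v ∧ f v ≤ C) :
    2 ≤ (∫ v, f v ∂ν) + ∫ v, (f v)⁻¹ ∂ν := by
  have i1 : Integrable f ν := by
    refine Integrable.of_bound hf.aestronglyMeasurable C ?_
    filter_upwards [h] with v hv
    rw [Real.norm_eq_abs, abs_of_pos (hc.trans_le hv.1)]
    exact hv.2
  have i2 : Integrable (fun v => (f v)⁻¹) ν := by
    refine Integrable.of_bound hf.inv.aestronglyMeasurable c⁻¹ ?_
    filter_upwards [h] with v hv
    rw [Real.norm_eq_abs, abs_of_pos (inv_pos.2 (hc.trans_le hv.1))]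
    exact inv_anti₀ hc hv.1
  rw [← integral_add i1 i2]
  have : (2 : ℝ) = ∫ _v, (2 : ℝ) ∂ν := by simp
  rw [this]
  refine integral_mono_ae (integrable_const _) (i1.add i2) ?_
  filter_upwards [h] with v hv
  have hp : 0 < f v := hc.trans_le hv.1
  have e : f v + (f v)⁻¹ - 2 = (f v - 1) ^ 2 * (f v)⁻¹ := by
    field_simp
    ring
  have : 0 ≤ (f v - 1) ^ 2 * (f v)⁻¹ := by positivity
  show 2 ≤ f v + (f v)⁻¹
  linarith

/-- Under the standing assumptions on the compactly supported centered
probability measure `ν` (smallest supporting interval `[a,b]`, edge assumption with `ϖ > 0`),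
let `ζ− < ζ+` be the two real solutions of `∫ dν(v)/(v − ζ)² = 1`, lying outside `[a,b]`.
Define `L± := ζ± − ∫ dν(v)/(v − ζ±)`.  Then `L− ≤ −2` and `L+ ≥ 2`; in particular
`L− < 0 < L+`. -/
theorem stmt_2 (ν : Measure ℝ) [IsProbabilityMeasure ν]
    (a b : ℝ) (hab : a ≤ b)
    (hsupp : ν (Set.Icc a b)ᶜ = 0)
    (hmin : ∀ a' b' : ℝ, ν (Set.Icc a' b')ᶜ = 0 → Set.Icc a b ⊆ Set.Icc a' b')
    (hcent : ∫ v, v ∂ν = 0)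
    (ϖ : ℝ) (hϖ : 0 < ϖ)
    (hedge : ∀ x ∈ Set.Icc a b,
      ENNReal.ofReal (1 + ϖ) ≤ ∫⁻ v, (ENNReal.ofReal ((v - x) ^ 2))⁻¹ ∂ν)
    (ζm ζp : ℝ) (hζζ : ζm < ζp)
    (hζm_out : ζm < a) (hζp_out : b < ζp)
    (hζm : ∫ v, ((v - ζm) ^ 2)⁻¹ ∂ν = 1)
    (hζp : ∫ v, ((v - ζp) ^ 2)⁻¹ ∂ν = 1) :
    (ζm - ∫ v, (v - ζm)⁻¹ ∂ν) ≤ -2 ∧ 2 ≤ ζp - ∫ v, (v - ζp)⁻¹ ∂ν ∧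
    (ζm - ∫ v, (v - ζm)⁻¹ ∂ν) < 0 ∧ 0 < ζp - ∫ v, (v - ζp)⁻¹ ∂ν := by
  have hae : ∀ᵐ v ∂ν, v ∈ Set.Icc a b := hsupp
  have iid : Integrable (fun v : ℝ => v) ν := by
    refine Integrable.of_bound measurable_id.aestronglyMeasurable (max |a| |b|) ?_
    filter_upwards [hae] with v hv
    exact abs_le_max_abs_abs hv.1 hv.2
  have h1 := aux_amgm ν (fun v => v - ζm) (by fun_prop) (a - ζm) (b - ζm) (by linarith) (by
    filter_upwards [hae] with v hv
    exact ⟨by linarith [hv.1], by linarith [hv.2]⟩)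
  have h2 := aux_amgm ν (fun v => ζp - v) (by fun_prop) (ζp - b) (ζp - a) (by linarith) (by
    filter_upwards [hae] with v hv
    exact ⟨by linarith [hv.2], by linarith [hv.1]⟩)
  have e1 : ∫ v, (v - ζm) ∂ν = -ζm := by
    rw [integral_sub iid (integrable_const _), hcent]
    simp
  have e2 : ∫ v, (ζp - v) ∂ν = ζp := by
    rw [integral_sub (integrable_const _) iid, hcent]
    simp
  have e3 : ∫ v, (ζp - v)⁻¹ ∂ν = -∫ v, (v - ζp)⁻¹ ∂ν := by
    rw [← integral_neg]
    congr 1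
    ext v
    rw [← inv_neg, neg_sub]
  rw [e1] at h1
  rw [e2, e3] at h2
  refine ⟨?_, ?_, ?_, ?_⟩ <;> linarith
end

section
/- Let ν be a probability measure on ℝ and let ζ ∈ ℝ satisfy either ζ > sup(supp ν) or ζ < inf(supp ν). If ∫ dν(v)/(v − ζ)² = 1, then |∫ dν(v)/(v − ζ)³| ≥ 1. -/
open MeasureTheory

lemma aux_cube (ν : Measure ℝ) [IsProbabilityMeasure ν] (f : ℝ → ℝ) (hf : Measurable f) (C : ℝ)
    (h : ∀ᵐ v ∂ν, 0 ≤ f v ∧ f v ≤ C) (h1 : ∫ v, f v ^ 2 ∂ν = 1) :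
    1 ≤ ∫ v, f v ^ 3 ∂ν := by
  have hi : ∀ n : ℕ, Integrable (fun v => f v ^ n) ν := by
    intro n
    refine Integrable.of_bound (hf.pow_const n).aestronglyMeasurable (C ^ n) ?_
    filter_upwards [h] with v hv
    rw [Real.norm_eq_abs, abs_of_nonneg (pow_nonneg hv.1 n)]
    exact pow_le_pow_left₀ hv.1 hv.2 n
  have h2 : ∫ v, (3 / 2 * f v ^ 2 - 1 / 2) ∂ν ≤ ∫ v, f v ^ 3 ∂ν := by
    refine integral_mono_ae (((hi 2).const_mul _).sub (integrable_const _)) (hi 3) ?_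
    filter_upwards [h] with v hv
    have := mul_nonneg (sq_nonneg (f v - 1)) (by linarith [hv.1] : 0 ≤ 2 * f v + 1)
    nlinarith
  rw [integral_sub ((hi 2).const_mul _) (integrable_const _), integral_const_mul, h1] at h2
  simp at h2
  linarith

/-- Let `ν` be a probability measure on `ℝ` supported in a closed interval
`[a,b]` and let `ζ ∈ ℝ` lie strictly outside this interval (i.e. `ζ > sup(supp ν)` or
`ζ < inf(supp ν)`).  If `∫ dν(v)/(v − ζ)² = 1`, then `|∫ dν(v)/(v − ζ)³| ≥ 1`. -/
theorem stmt_3 (ν : Measure ℝ) [IsProbabilityMeasure ν]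
    (a b : ℝ) (hsupp : ν (Set.Icc a b)ᶜ = 0)
    (ζ : ℝ) (hζ : ζ < a ∨ b < ζ)
    (h1 : ∫ v, ((v - ζ) ^ 2)⁻¹ ∂ν = 1) :
    1 ≤ |∫ v, ((v - ζ) ^ 3)⁻¹ ∂ν| := by
  have hae : ∀ᵐ v ∂ν, v ∈ Set.Icc a b := hsupp
  rcases hζ with hζ | hζ
  · have := aux_cube ν (fun v => (v - ζ)⁻¹) (by fun_prop) (a - ζ)⁻¹ (by
      filter_upwards [hae] with v hv
      exact ⟨inv_nonneg.2 (by linarith [hv.1]),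
        inv_anti₀ (by linarith) (by linarith [hv.1])⟩) (by simpa only [inv_pow] using h1)
    simp only [inv_pow] at this
    exact this.trans (le_abs_self _)
  · have := aux_cube ν (fun v => (ζ - v)⁻¹) (by fun_prop) (ζ - b)⁻¹ (by
      filter_upwards [hae] with v hv
      exact ⟨inv_nonneg.2 (by linarith [hv.2]),
        inv_anti₀ (by linarith) (by linarith [hv.2])⟩) (by
        rw [← h1]; congr 1; ext v; rw [inv_pow]; congr 1; ring)
    have e : ∫ v, ((ζ - v)⁻¹) ^ 3 ∂ν = -∫ v, ((v - ζ) ^ 3)⁻¹ ∂ν := by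
      rw [← integral_neg]; congr 1; ext v; rw [inv_pow, ← inv_neg]; congr 1; ring
    rw [e] at this
    exact this.trans (neg_le_abs _)
end

section
/- Let ν be a compactly supported probability measure on ℝ, let t₀ ∈ ℝ, and set ϑ(t) := e^{−(t−t₀)/2}. Let m : [0,∞) × ℂ⁺ → ℂ be continuously differentiable as a function of (t, Re z, Im z), holomorphic in z ∈ ℂ⁺ for each fixed t, satisfy Im m(t,z) ≥ 0, and satisfy the functional equation m(t,z) = ∫ dν(v)/(ϑ(t) v − z − m(t,z)) for all t ≥ 0 and z ∈ ℂ⁺. Then m satisfies the complex Burgers equation ∂_t m(t,z) = ½ ∂_z[ m(t,z) (m(t,z) + z) ] for all t ≥ 0 and z ∈ ℂ⁺. -/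
open MeasureTheory

lemma stieltjes_ne (v : ℝ) (u : ℂ) (hu : 0 < u.im) : (v : ℂ) - u ≠ 0 := by
  intro h
  have := congrArg Complex.im h
  simp at this
  linarith

lemma stieltjes_norm_ge (v : ℝ) (u : ℂ) : u.im ≤ ‖(v : ℂ) - u‖ := by
  have h := Complex.abs_im_le_norm ((v : ℂ) - u)
  simp at h
  exact (le_abs_self _).trans h

lemma stieltjes_diff (ν : Measure ℝ) [IsProbabilityMeasure ν] (u : ℂ) (hu : 0 < u.im) :
    ∃ g : ℂ, HasDerivAt (fun w : ℂ => ∫ v : ℝ, ((v : ℂ) - w)⁻¹ ∂ν) g u := by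
  have hball : ∀ w ∈ Metric.ball u (u.im / 2), u.im / 2 ≤ w.im := by
    intro w hw
    rw [Metric.mem_ball, dist_eq_norm] at hw
    have h := (Complex.abs_im_le_norm (w - u)).trans_lt hw
    rw [Complex.sub_im, abs_lt] at h
    linarith [h.1]
  have hmeas : ∀ w : ℂ, Measurable (fun v : ℝ => ((v : ℂ) - w)⁻¹) := by
    intro w
    exact (Complex.measurable_ofReal.sub_const w).inv
  refine ⟨_, (hasDerivAt_integral_of_dominated_loc_of_deriv_le (μ := ν)
    (F := fun (w : ℂ) (v : ℝ) => ((v : ℂ) - w)⁻¹)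
    (F' := fun (w : ℂ) (v : ℝ) => (((v : ℂ) - w)⁻¹) ^ 2)
    (bound := fun _ => ((u.im / 2)⁻¹) ^ 2) (s := Metric.ball u (u.im / 2))
    (Metric.ball_mem_nhds u (by linarith)) ?_ ?_ ?_ ?_ ?_ ?_).2⟩
  · exact Filter.Eventually.of_forall fun w => (hmeas w).aestronglyMeasurable
  · refine Integrable.of_bound (hmeas u).aestronglyMeasurable (u.im)⁻¹ ?_
    refine Filter.Eventually.of_forall fun v => ?_
    rw [norm_inv]
    exact inv_anti₀ hu (stieltjes_norm_ge v u)
  · exact ((hmeas u).pow_const 2).aestronglyMeasurable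
  · refine Filter.Eventually.of_forall fun v w hw => ?_
    rw [norm_pow, norm_inv]
    have := (hball w hw).trans (stieltjes_norm_ge v w)
    have h2 : 0 < u.im / 2 := by linarith
    gcongr
  · exact integrable_const _
  · refine Filter.Eventually.of_forall fun v w hw => ?_
    have hw' : 0 < w.im := by have := hball w hw; linarith
    have h := ((hasDerivAt_id w).const_sub (v : ℂ)).inv (stieltjes_ne v w hw')
    refine HasDerivAt.congr_deriv h ?_
    simp [div_eq_mul_inv]

/-- Let `ν` be a compactly supported probability measure on `ℝ`, `t₀ ∈ ℝ`,
and `ϑ(t) := exp(−(t−t₀)/2)`.  Suppose `m : [0,∞) × ℂ⁺ → ℂ` is continuously differentiable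
(partial derivatives `mt` in `t` and `mz` in `z` exist and are jointly continuous),
holomorphic in `z` for each fixed `t`, has nonnegative imaginary part, and satisfies the
functional equation `m(t,z) = ∫ dν(v)/(ϑ(t) v − z − m(t,z))`.  Then `m` satisfies the
complex Burgers equation `∂_t m(t,z) = ½ ∂_z [ m(t,z)(m(t,z) + z) ]` on `[0,∞) × ℂ⁺`. -/
theorem stmt_5 (ν : Measure ℝ) [IsProbabilityMeasure ν]
    (K : ℝ) (hsupp : ν (Set.Icc (-K) K)ᶜ = 0)
    (t₀ : ℝ) (m mt mz : ℝ → ℂ → ℂ)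
    (him : ∀ t ≥ (0:ℝ), ∀ z : ℂ, 0 < z.im → 0 ≤ (m t z).im)
    (heq : ∀ t ≥ (0:ℝ), ∀ z : ℂ, 0 < z.im →
      m t z = ∫ v : ℝ, (((Real.exp (-(t - t₀) / 2) * v : ℝ) : ℂ) - z - m t z)⁻¹ ∂ν)
    (hholo : ∀ t ≥ (0:ℝ), DifferentiableOn ℂ (m t) {z : ℂ | 0 < z.im})
    (hmt : ∀ t ≥ (0:ℝ), ∀ z : ℂ, 0 < z.im →
      HasDerivWithinAt (fun s => m s z) (mt t z) (Set.Ici 0) t)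
    (hmz : ∀ t ≥ (0:ℝ), ∀ z : ℂ, 0 < z.im → HasDerivAt (fun w => m t w) (mz t z) z)
    (hcontm : ContinuousOn (fun p : ℝ × ℂ => m p.1 p.2) (Set.Ici 0 ×ˢ {z : ℂ | 0 < z.im}))
    (hcontt : ContinuousOn (fun p : ℝ × ℂ => mt p.1 p.2) (Set.Ici 0 ×ˢ {z : ℂ | 0 < z.im}))
    (hcontz : ContinuousOn (fun p : ℝ × ℂ => mz p.1 p.2) (Set.Ici 0 ×ˢ {z : ℂ | 0 < z.im})) :
    ∀ t ≥ (0:ℝ), ∀ z : ℂ, 0 < z.im →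
      mt t z = (1 / 2) * deriv (fun w => m t w * (m t w + w)) z := by
  intro t ht z hz
  set G : ℂ → ℂ := fun w : ℂ => ∫ v : ℝ, ((v : ℂ) - w)⁻¹ ∂ν with hG
  set e : ℝ → ℂ := fun s => ((Real.exp ((s - t₀) / 2) : ℝ) : ℂ) with he
  have key : ∀ s ≥ (0:ℝ), ∀ w : ℂ, 0 < w.im → m s w = e s * G (e s * (w + m s w)) := by
    intro s hs w hw
    conv_lhs => rw [heq s hs w hw]
    simp only [hG]
    rw [← integral_const_mul]
    congr 1
    ext v
    have h1 : e s ≠ 0 := by simp only [he]; exact_mod_cast (Real.exp_pos _).ne'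
    have h2 : ((Real.exp (-(s - t₀) / 2) * v : ℝ) : ℂ) = (e s)⁻¹ * v := by
      simp only [he]
      rw [← Complex.ofReal_inv, ← Real.exp_neg, Complex.ofReal_mul, neg_div]
    rw [h2, ← inv_inj, inv_inv, mul_inv, inv_inv]
    field_simp
    ring
  have hpos : 0 < (e t * (z + m t z)).im := by
    simp only [he]
    rw [Complex.im_ofReal_mul, Complex.add_im]
    have := him t ht z hz
    have := Real.exp_pos ((t - t₀) / 2)
    positivity
  obtain ⟨g, hg⟩ := stieltjes_diff ν _ hpos
  change HasDerivAt G g _ at hg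
  have hed : HasDerivAt e (e t / 2) t := by
    have h := ((((hasDerivAt_id t).sub_const t₀).div_const 2).exp).ofReal_comp
    refine HasDerivAt.congr_deriv h ?_
    simp [he, div_eq_mul_inv]
  have hm := hmz t ht z hz
  have hT := hmt t ht z hz
  have e1 : mz t z = e t * (g * (e t * (1 + mz t z))) := by
    have h := (hg.comp z (((hasDerivAt_id z).add hm).const_mul (e t))).const_mul (e t)
    refine hm.unique (h.congr_of_eventuallyEq ?_)
    filter_upwards [(isOpen_lt continuous_const Complex.continuous_im).mem_nhds hz] with w hw
    exact key t ht w hw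
  have e2 : mt t z = e t / 2 * G (e t * (z + m t z))
      + e t * (g * (e t / 2 * (z + m t z) + e t * mt t z)) := by
    have hw := hed.hasDerivWithinAt (s := Set.Ici 0)
    have h := hw.mul (hg.comp_hasDerivWithinAt t (hw.mul (hT.const_add z)))
    refine (uniqueDiffOn_Ici (0:ℝ) t ht).eq_deriv _ hT (h.congr ?_ ?_)
    · intro s hs
      exact key s hs z hz
    · exact key t ht z hz
  have k := key t ht z hz
  have hd : deriv (fun w => m t w * (m t w + w)) z
      = mz t z * (m t z + z) + m t z * (mz t z + 1) :=
    (hm.mul (hm.add (hasDerivAt_id z))).deriv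
  rw [hd]
  set A := e t * g * e t with hA
  have hA1 : 1 - A ≠ 0 := by
    intro h
    have h3 : (1 - A) * mz t z = A := by rw [hA]; linear_combination e1
    rw [h, zero_mul] at h3
    rw [← h3] at h
    simp at h
  apply mul_left_cancel₀ hA1
  rw [hA]
  linear_combination e2 - (1/2) * k - (1/2) * (2 * m t z + z) * e1
end

section
/- Under the standing assumptions on ν and on the solution m of the functional equation, there exists a constant C > 1 such that: for every E ∈ (L−, L+), C⁻¹ √κ_E ≤ liminf_{η↓0} Im m(E + iη) ≤ limsup_{η↓0} Im m(E + iη) ≤ C √κ_E; and for every E ∈ ℝ \ [L−, L+], lim_{η↓0} Im m(E + iη) = 0. In particular, the deformed semicircle law ρ_fc is supported on [L−, L+] and has strictly positive density in (L−, L+). -/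
open MeasureTheory Filter

lemma aux_core (ν : Measure ℝ) [IsProbabilityMeasure ν] (p : ℝ → ℝ) (hp : Measurable p)
    (δ R t y : ℝ) (hδ : 0 < δ) (hy : 0 < y) (hpb : ∀ᵐ v ∂ν, δ ≤ p v ∧ p v ≤ R)
    (h1 : ∫ v, ((p v) ^ 2)⁻¹ ∂ν = 1) (h2 : ∫ v, ((p v - t) ^ 2 + y ^ 2)⁻¹ ∂ν = 1) (X : ℝ)
    (hX : X = t + ∫ v, (p v)⁻¹ ∂ν - ∫ v, (p v - t) / ((p v - t) ^ 2 + y ^ 2) ∂ν) :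
    0 < t ∧ 2 * t * δ ^ 2 / R ^ 2 ≤ X ∧ X ≤ 2 * t * R ^ 2 / δ ^ 2 ∧ y ^ 2 ≤ 2 * t * R ∧
      t * (2 * δ - t) ≤ y ^ 2 ∧ 0 < X := by
  obtain ⟨v0, hv0⟩ := hpb.exists
  have hR : 0 < R := by linarith
  have hint : ∀ f : ℝ → ℝ, Measurable f → ∀ K : ℝ, (∀ᵐ v ∂ν, |f v| ≤ K) → Integrable f ν := by
    intro f hf K hK
    exact Integrable.of_bound hf.aestronglyMeasurable K hK
  have hq : ∀ v, 0 < (p v - t) ^ 2 + y ^ 2 := fun v => by positivity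
  have hqi : ∀ v, ((p v - t) ^ 2 + y ^ 2)⁻¹ ≤ (y ^ 2)⁻¹ := fun v => by
    apply inv_anti₀ (by positivity); nlinarith [sq_nonneg (p v - t)]
  have hqi0 : ∀ v, 0 ≤ ((p v - t) ^ 2 + y ^ 2)⁻¹ := fun v => (inv_pos.2 (hq v)).le
  set w : ℝ → ℝ := fun v => ((p v) ^ 2)⁻¹ * ((p v - t) ^ 2 + y ^ 2)⁻¹ with hw
  have i1 : Integrable (fun v => ((p v) ^ 2)⁻¹) ν := by
    apply hint _ (by fun_prop) ((δ ^ 2)⁻¹)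
    filter_upwards [hpb] with v hv
    have : 0 < p v := by linarith
    rw [abs_of_nonneg (by positivity)]
    apply inv_anti₀ (by positivity); gcongr; exact hv.1
  have i2 : Integrable (fun v => ((p v - t) ^ 2 + y ^ 2)⁻¹) ν := by
    apply hint _ (by fun_prop) ((y ^ 2)⁻¹)
    refine Eventually.of_forall fun v => ?_
    rw [abs_of_nonneg (hqi0 v)]; exact hqi v
  have i3 : Integrable (fun v => (p v)⁻¹) ν := by
    apply hint _ (by fun_prop) (δ⁻¹)
    filter_upwards [hpb] with v hv
    have : 0 < p v := by linarith
    rw [abs_of_nonneg (by positivity)]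
    exact inv_anti₀ hδ hv.1
  have i4 : Integrable (fun v => (p v - t) / ((p v - t) ^ 2 + y ^ 2)) ν := by
    have : Integrable (fun v => (p v - t) * ((p v - t) ^ 2 + y ^ 2)⁻¹) ν := by
      apply i2.bdd_mul (c := R + |t|) (by fun_prop)
      filter_upwards [hpb] with v hv
      have : 0 < p v := by linarith
      rw [Real.norm_eq_abs]
      calc |p v - t| ≤ |p v| + |t| := abs_sub _ _
        _ ≤ _ := by rw [abs_of_pos this]; linarith [hv.2]
    simpa [div_eq_mul_inv] using this
  have iw : Integrable w ν := by
    apply i2.bdd_mul (c := (δ ^ 2)⁻¹) (by fun_prop)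
    filter_upwards [hpb] with v hv
    have : 0 < p v := by linarith
    rw [Real.norm_eq_abs, abs_of_nonneg (by positivity)]
    apply inv_anti₀ (by positivity); gcongr; exact hv.1
  have ip : Integrable (fun v => p v * w v) ν := by
    apply iw.bdd_mul (c := R) (by fun_prop)
    filter_upwards [hpb] with v hv
    have : 0 < p v := by linarith
    rw [Real.norm_eq_abs, abs_of_pos this]; exact hv.2
  set S := t ^ 2 + y ^ 2 with hS
  set W := ∫ v, w v ∂ν with hWd
  set P := ∫ v, p v * w v ∂ν with hPd
  have e1 : S * W = 2 * t * P := by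
    have : ∫ v, (S * w v - 2 * t * (p v * w v)) ∂ν =
        ∫ v, (((p v) ^ 2)⁻¹ - ((p v - t) ^ 2 + y ^ 2)⁻¹) ∂ν := by
      apply integral_congr_ae
      filter_upwards [hpb] with v hv
      have : p v ≠ 0 := by linarith
      have := (hq v).ne'
      simp only [hw, hS]
      field_simp
      ring
    rw [integral_sub (iw.const_mul _) (ip.const_mul _), integral_sub i1 i2, h1, h2,
      integral_const_mul, integral_const_mul] at this
    linarith
  have e2 : X = S * P := by
    have : ∫ v, (S * (p v * w v)) ∂ν =
        ∫ v, (t * ((p v - t) ^ 2 + y ^ 2)⁻¹ + (p v)⁻¹ - (p v - t) / ((p v - t) ^ 2 + y ^ 2)) ∂ν := by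
      apply integral_congr_ae
      filter_upwards [hpb] with v hv
      have : p v ≠ 0 := by linarith
      have := (hq v).ne'
      simp only [hw, hS]
      field_simp
      ring
    have i5 : Integrable (fun v => t * ((p v - t) ^ 2 + y ^ 2)⁻¹ + (p v)⁻¹) ν :=
      (i2.const_mul _).add i3
    rw [integral_sub i5 i4, integral_add (i2.const_mul _) i3,
      integral_const_mul, integral_const_mul, h2] at this
    rw [hX]; linarith
  have b1 : δ * W ≤ P := by
    rw [hWd, ← integral_const_mul]
    apply integral_mono_ae (iw.const_mul _) ip
    filter_upwards [hpb] with v hv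
    have : 0 ≤ w v := mul_nonneg (by positivity) (hqi0 v)
    exact mul_le_mul_of_nonneg_right hv.1 this
  have b2 : P ≤ R * W := by
    rw [hWd, ← integral_const_mul]
    apply integral_mono_ae ip (iw.const_mul _)
    filter_upwards [hpb] with v hv
    have : 0 ≤ w v := mul_nonneg (by positivity) (hqi0 v)
    exact mul_le_mul_of_nonneg_right hv.2 this
  have b3 : (R ^ 2)⁻¹ ≤ W := by
    have : (R ^ 2)⁻¹ * ∫ v, ((p v - t) ^ 2 + y ^ 2)⁻¹ ∂ν ≤ W := by
      rw [← integral_const_mul]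
      apply integral_mono_ae (i2.const_mul _) iw
      filter_upwards [hpb] with v hv
      have : 0 < p v := by linarith
      refine mul_le_mul_of_nonneg_right ?_ (hqi0 v)
      apply inv_anti₀ (by positivity); gcongr; exact hv.2
    rwa [h2, mul_one] at this
  have b4 : W ≤ (δ ^ 2)⁻¹ := by
    have : W ≤ (δ ^ 2)⁻¹ * ∫ v, ((p v - t) ^ 2 + y ^ 2)⁻¹ ∂ν := by
      rw [← integral_const_mul]
      apply integral_mono_ae iw (i2.const_mul _)
      filter_upwards [hpb] with v hv
      have : 0 < p v := by linarith
      refine mul_le_mul_of_nonneg_right ?_ (hqi0 v)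
      apply inv_anti₀ (by positivity); gcongr; exact hv.1
    rwa [h2, mul_one] at this
  have hSp : 0 < S := by positivity
  have hWp : 0 < W := lt_of_lt_of_le (by positivity) b3
  have hPp : 0 < P := lt_of_lt_of_le (by positivity) b1
  have ht : 0 < t := by
    have : 0 < 2 * t * P := e1 ▸ mul_pos hSp hWp
    by_contra h
    push Not at h
    nlinarith
  have hSR : S ≤ 2 * t * R := by
    have : S * W ≤ (2 * t * R) * W := by rw [e1]; nlinarith
    exact le_of_mul_le_mul_right this hWp
  have hSd : 2 * t * δ ≤ S := by
    have : (2 * t * δ) * W ≤ S * W := by rw [e1]; nlinarith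
    exact le_of_mul_le_mul_right this hWp
  refine ⟨ht, ?_, ?_, ?_, ?_, ?_⟩
  · rw [e2]
    calc 2 * t * δ ^ 2 / R ^ 2 = (2 * t * δ) * (δ * (R ^ 2)⁻¹) := by rw [div_eq_mul_inv]; ring
      _ ≤ S * P := by
        gcongr
        exact le_trans (by gcongr) b1
  · rw [e2]
    calc S * P ≤ (2 * t * R) * (R * (δ ^ 2)⁻¹) := by
          gcongr
          exact le_trans b2 (by gcongr)
      _ = _ := by rw [div_eq_mul_inv]; ring
  · nlinarith [sq_nonneg t]
  · nlinarith
  · rw [e2]; positivity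

lemma aux_closed (ν : Measure ℝ) :
    IsClosed {ζ : ℂ | ∫⁻ v : ℝ, (ENNReal.ofReal (Complex.normSq ((v:ℂ) - ζ)))⁻¹ ∂ν ≤ 1} := by
  apply IsSeqClosed.isClosed
  intro x ζ hx hζ
  simp only [Set.mem_ofPred_eq] at hx ⊢
  have hlim : ∀ v : ℝ, Tendsto (fun n => (ENNReal.ofReal (Complex.normSq ((v:ℂ) - x n)))⁻¹) atTop
      (nhds (ENNReal.ofReal (Complex.normSq ((v:ℂ) - ζ)))⁻¹) := by
    intro v
    apply tendsto_inv_iff.2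
    apply ENNReal.tendsto_ofReal
    exact (Complex.continuous_normSq.tendsto _).comp (tendsto_const_nhds.sub hζ)
  calc ∫⁻ v : ℝ, (ENNReal.ofReal (Complex.normSq ((v:ℂ) - ζ)))⁻¹ ∂ν
      = ∫⁻ v : ℝ, liminf (fun n => (ENNReal.ofReal (Complex.normSq ((v:ℂ) - x n)))⁻¹) atTop ∂ν := by
        congr 1; ext v; exact (hlim v).liminf_eq.symm
    _ ≤ liminf (fun n => ∫⁻ v : ℝ, (ENNReal.ofReal (Complex.normSq ((v:ℂ) - x n)))⁻¹ ∂ν) atTop := by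
        apply lintegral_liminf_le
        intro n
        have : Measurable fun v : ℝ => Complex.normSq ((v:ℂ) - x n) := by
          apply Continuous.measurable
          exact Complex.continuous_normSq.comp (by fun_prop)
        fun_prop
    _ ≤ 1 := by
        apply liminf_le_of_le
        · isBoundedDefault
        · intro c hc
          obtain ⟨n, hn⟩ := hc.exists
          exact hn.trans (hx n)

lemma aux_y0 (ν : Measure ℝ) (a b : ℝ) (ϖ : ℝ) (hϖ : 0 < ϖ)
    (hedge : ∀ x ∈ Set.Icc a b,
      ENNReal.ofReal (1 + ϖ) ≤ ∫⁻ v, (ENNReal.ofReal ((v - x) ^ 2))⁻¹ ∂ν) :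
    ∃ y0 : ℝ, 0 < y0 ∧ ∀ ζ : ℂ, ζ.re ∈ Set.Icc a b → 0 ≤ ζ.im →
      ∫⁻ v : ℝ, (ENNReal.ofReal (Complex.normSq ((v:ℂ) - ζ)))⁻¹ ∂ν ≤ 1 → y0 ≤ ζ.im := by
  have hpos : ∀ ζ : ℂ, ζ.re ∈ Set.Icc a b → 0 ≤ ζ.im →
      ∫⁻ v : ℝ, (ENNReal.ofReal (Complex.normSq ((v:ℂ) - ζ)))⁻¹ ∂ν ≤ 1 → 0 < ζ.im := by
    intro ζ h1 h2 h3
    rcases h2.lt_or_eq with h | h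
    · exact h
    exfalso
    have := (hedge _ h1)
    have e : ∀ v : ℝ, Complex.normSq ((v:ℂ) - ζ) = (v - ζ.re) ^ 2 := by
      intro v; simp [Complex.normSq_apply, ← h]; ring
    simp only [e] at h3
    have h4 := this.trans h3
    rw [ENNReal.ofReal_le_one] at h4
    linarith
  set K := {ζ : ℂ | ∫⁻ v : ℝ, (ENNReal.ofReal (Complex.normSq ((v:ℂ) - ζ)))⁻¹ ∂ν ≤ 1} ∩
    (Set.Icc a b ×ℂ Set.Icc 0 1) with hK
  have hKc : IsCompact K :=
    (IsCompact.reProdIm isCompact_Icc isCompact_Icc).inter_left (aux_closed ν)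
  rcases K.eq_empty_or_nonempty with h | h
  · refine ⟨1, one_pos, fun ζ h1 h2 h3 => ?_⟩
    by_contra hh
    push Not at hh
    have : ζ ∈ K := ⟨h3, h1, h2, hh.le⟩
    simp [h] at this
  · obtain ⟨ζ0, h0, hmin⟩ := hKc.exists_isMinOn h Complex.continuous_im.continuousOn
    refine ⟨min 1 ζ0.im, lt_min one_pos (hpos _ h0.2.1 h0.2.2.1 h0.1), fun ζ h1 h2 h3 => ?_⟩
    by_contra hh
    push Not at hh
    have hlt := lt_min_iff.1 hh
    have : ζ ∈ K := ⟨h3, h1, h2, hlt.1.le⟩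
    exact absurd (hmin this) (not_le.2 hlt.2)

lemma aux_real (ν : Measure ℝ) [IsProbabilityMeasure ν] (p : ℝ → ℝ) (hp : Measurable p)
    (δ R t ε : ℝ) (hδ : 0 < δ) (hε : 0 < ε) (hpb : ∀ᵐ v ∂ν, δ ≤ p v ∧ p v ≤ R)
    (hpt : ∀ᵐ v ∂ν, ε ≤ p v - t)
    (h1 : ∫ v, ((p v) ^ 2)⁻¹ ∂ν = 1)
    (h2 : ∫⁻ v, (ENNReal.ofReal ((p v - t) ^ 2))⁻¹ ∂ν ≤ 1) :
    t + ∫ v, (p v)⁻¹ ∂ν - ∫ v, (p v - t)⁻¹ ∂ν ≤ 0 := by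
  obtain ⟨v0, hv0⟩ := hpb.exists
  have hR : 0 < R := by linarith
  have hint : ∀ f : ℝ → ℝ, Measurable f → ∀ c : ℝ, 0 < c → (∀ᵐ v ∂ν, c ≤ f v) →
      Integrable (fun v => (f v)⁻¹) ν := by
    intro f hf c hc hK
    refine Integrable.of_bound hf.inv.aestronglyMeasurable c⁻¹ ?_
    filter_upwards [hK] with v hv
    rw [Real.norm_eq_abs, abs_of_pos (inv_pos.2 (by linarith))]
    exact inv_anti₀ hc hv
  have i1 : Integrable (fun v => ((p v) ^ 2)⁻¹) ν := by
    apply hint _ (by fun_prop) (δ ^ 2) (by positivity)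
    filter_upwards [hpb] with v hv
    gcongr; exact hv.1
  have i2 : Integrable (fun v => ((p v - t) ^ 2)⁻¹) ν := by
    apply hint _ (by fun_prop) (ε ^ 2) (by positivity)
    filter_upwards [hpt] with v hv
    gcongr
  have i3 : Integrable (fun v => (p v)⁻¹) ν := by
    apply hint _ (by fun_prop) δ (by positivity)
    filter_upwards [hpb] with v hv using hv.1
  have i4 : Integrable (fun v => (p v - t)⁻¹) ν := by
    apply hint _ (by fun_prop) ε (by positivity) hpt
  have h2' : ∫ v, ((p v - t) ^ 2)⁻¹ ∂ν ≤ 1 := by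
    rw [← ENNReal.ofReal_le_one, ofReal_integral_eq_lintegral_ofReal i2
      (Eventually.of_forall fun v => by positivity)]
    refine le_trans (le_of_eq ?_) h2
    apply lintegral_congr_ae
    filter_upwards [hpt] with v hv
    have : 0 < p v - t := by linarith
    exact ENNReal.ofReal_inv_of_pos (by positivity)
  have ht : t ≤ 0 := by
    by_contra ht
    push Not at ht
    have : ∫ v, (t / R ^ 3) ∂ν ≤ ∫ v, (((p v - t) ^ 2)⁻¹ - ((p v) ^ 2)⁻¹) ∂ν := by
      apply integral_mono_ae (integrable_const _) (i2.sub i1)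
      filter_upwards [hpt, hpb] with v hv hv'
      have k1 : 0 < p v - t := by linarith
      have k2 : 0 < p v := by linarith
      have e : ((p v - t) ^ 2)⁻¹ - ((p v) ^ 2)⁻¹ = t * (p v + (p v - t)) / ((p v) ^ 2 * (p v - t) ^ 2) := by
        field_simp; ring
      show _ ≤ ((p v - t) ^ 2)⁻¹ - ((p v) ^ 2)⁻¹
      rw [e]
      calc t / R ^ 3 ≤ t / (p v) ^ 3 := by gcongr; exact hv'.2
        _ = t * p v / ((p v) ^ 2 * (p v) ^ 2) := by field_simp
        _ ≤ _ := by gcongr <;> linarith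
    rw [integral_sub i2 i1, h1, integral_const] at this
    have h3 : 0 < t / R ^ 3 := by positivity
    simp at this
    linarith
  have : ∫ v, ((p v)⁻¹ - (p v - t)⁻¹) ∂ν ≤ ∫ v, (-t) * ((p v) ^ 2)⁻¹ ∂ν := by
    apply integral_mono_ae (i3.sub i4) (i1.const_mul _)
    filter_upwards [hpt, hpb] with v hv hv'
    have k1 : 0 < p v - t := by linarith
    have k2 : 0 < p v := by linarith
    have e : (p v)⁻¹ - (p v - t)⁻¹ = (-t) * (p v * (p v - t))⁻¹ := by
      field_simp; ring
    show (p v)⁻¹ - (p v - t)⁻¹ ≤ _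
    rw [e]
    apply mul_le_mul_of_nonneg_left _ (by linarith)
    apply inv_anti₀ (by positivity)
    nlinarith
  rw [integral_sub i3 i4, integral_const_mul, h1] at this
  linarith

lemma aux_int (ν : Measure ℝ) [IsProbabilityMeasure ν] (ζ : ℂ) (h : 0 < ζ.im) :
    Integrable (fun v : ℝ => (Complex.normSq ((v:ℂ) - ζ))⁻¹) ν ∧
    Integrable (fun v : ℝ => ((v:ℂ) - ζ)⁻¹) ν ∧
    (∫ v : ℝ, ((v:ℂ) - ζ)⁻¹ ∂ν).im = ζ.im * ∫ v : ℝ, (Complex.normSq ((v:ℂ) - ζ))⁻¹ ∂ν ∧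
    (∫ v : ℝ, ((v:ℂ) - ζ)⁻¹ ∂ν).re = ∫ v : ℝ, (v - ζ.re) / (Complex.normSq ((v:ℂ) - ζ)) ∂ν ∧
    ∫⁻ v : ℝ, (ENNReal.ofReal (Complex.normSq ((v:ℂ) - ζ)))⁻¹ ∂ν =
      ENNReal.ofReal (∫ v : ℝ, (Complex.normSq ((v:ℂ) - ζ))⁻¹ ∂ν) := by
  have hn : ∀ v : ℝ, ζ.im ^ 2 ≤ Complex.normSq ((v:ℂ) - ζ) := by
    intro v; simp [Complex.normSq_apply]; nlinarith [sq_nonneg (v - ζ.re)]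
  have hn0 : ∀ v : ℝ, 0 < Complex.normSq ((v:ℂ) - ζ) := fun v =>
    lt_of_lt_of_le (by positivity) (hn v)
  have hc : Continuous fun v : ℝ => Complex.normSq ((v:ℂ) - ζ) :=
    Complex.continuous_normSq.comp (by fun_prop)
  have i1 : Integrable (fun v : ℝ => (Complex.normSq ((v:ℂ) - ζ))⁻¹) ν := by
    refine Integrable.of_bound (hc.measurable.inv.aestronglyMeasurable) ((ζ.im ^ 2)⁻¹) ?_
    refine Eventually.of_forall fun v => ?_
    rw [Real.norm_eq_abs, abs_of_pos (inv_pos.2 (hn0 v))]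
    exact inv_anti₀ (by positivity) (hn v)
  have i2 : Integrable (fun v : ℝ => ((v:ℂ) - ζ)⁻¹) ν := by
    refine Integrable.of_bound (Measurable.aestronglyMeasurable (by fun_prop)) ((ζ.im)⁻¹) ?_
    refine Eventually.of_forall fun v => ?_
    rw [norm_inv]
    apply inv_anti₀ h
    have := Complex.abs_im_le_norm ((v:ℂ) - ζ)
    simp at this
    exact (le_abs_self _).trans this
  refine ⟨i1, i2, ?_, ?_, ?_⟩
  · have := integral_im i2
    simp only [RCLike.im_to_complex] at this
    rw [← this, ← integral_const_mul]
    congr 1; ext v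
    simp [Complex.inv_im, div_eq_mul_inv]
  · have := integral_re i2
    simp only [RCLike.re_to_complex] at this
    rw [← this]
    congr 1; ext v
    simp [Complex.inv_re]
  · rw [ofReal_integral_eq_lintegral_ofReal i1
      (Eventually.of_forall fun v => (inv_pos.2 (hn0 v)).le)]
    congr 1; ext v
    exact (ENNReal.ofReal_inv_of_pos (hn0 v)).symm

lemma aux_cont_s7 (ν : Measure ℝ) [IsProbabilityMeasure ν] (a b : ℝ) 
    (hsupp : ∀ᵐ v ∂ν, v ∈ Set.Icc a b) (ζ : ℂ) (hζ : ζ ∉ Complex.ofReal '' Set.Icc a b) :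
    ContinuousAt (fun ζ : ℂ => ∫ v : ℝ, ((v:ℂ) - ζ)⁻¹ ∂ν) ζ := by
  have hcl : IsClosed (Complex.ofReal '' Set.Icc a b) :=
    (isCompact_Icc.image Complex.continuous_ofReal).isClosed
  obtain ⟨r, hr, hball⟩ := Metric.isOpen_iff.1 hcl.isOpen_compl ζ hζ
  have hd : ∀ v ∈ Set.Icc a b, r ≤ ‖(v:ℂ) - ζ‖ := by
    intro v hv
    by_contra hh
    push Not at hh
    exact hball (by simpa [dist_eq_norm] using hh : (v:ℂ) ∈ Metric.ball ζ r) ⟨v, hv, rfl⟩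
  apply continuousAt_of_dominated (bound := fun _ => (r/2)⁻¹)
  · exact Eventually.of_forall fun ζ => Measurable.aestronglyMeasurable (by fun_prop)
  · filter_upwards [Metric.ball_mem_nhds ζ (half_pos hr)] with z hz
    filter_upwards [hsupp] with v hv
    rw [norm_inv]
    apply inv_anti₀ (half_pos hr)
    rw [Metric.mem_ball, dist_eq_norm] at hz
    have h3 := hd v hv
    have h4 : ‖(v:ℂ) - ζ‖ ≤ ‖(v:ℂ) - z‖ + ‖z - ζ‖ := by
      simpa using norm_add_le ((v:ℂ) - z) (z - ζ)
    linarith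
  · exact integrable_const _
  · filter_upwards [hsupp] with v hv
    have : (v:ℂ) - ζ ≠ 0 := by
      have := hd v hv
      exact norm_pos_iff.1 (by linarith)
    exact ContinuousAt.inv₀ (by fun_prop) this

lemma aux_pre (ν : Measure ℝ) [IsProbabilityMeasure ν] (m : ℂ → ℂ) 
    (him : ∀ z : ℂ, 0 < z.im → 0 ≤ (m z).im)
    (heq : ∀ z : ℂ, 0 < z.im → m z = ∫ v : ℝ, ((v : ℂ) - z - m z)⁻¹ ∂ν) (z : ℂ) (hz : 0 < z.im) :
    m z = ∫ v : ℝ, ((v:ℂ) - (z + m z))⁻¹ ∂ν ∧ ‖m z‖ ≤ 1 ∧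
    ∫⁻ v : ℝ, (ENNReal.ofReal (Complex.normSq ((v:ℂ) - (z + m z))))⁻¹ ∂ν ≤ 1 := by
  have h0 : m z = ∫ v : ℝ, ((v:ℂ) - (z + m z))⁻¹ ∂ν := by
    have := heq z hz
    simpa only [sub_sub] using this
  have hpos : 0 < (z + m z).im := by
    rw [Complex.add_im]; linarith [him z hz]
  obtain ⟨i1, i2, e1, -, e3⟩ := aux_int ν (z + m z) hpos
  have hI : ∫ v : ℝ, (Complex.normSq ((v:ℂ) - (z + m z)))⁻¹ ∂ν ≤ 1 := by
    rw [← h0] at e1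
    have : (z + m z).im = z.im + (m z).im := Complex.add_im _ _
    by_contra hh
    push Not at hh
    nlinarith
  refine ⟨h0, ?_, ?_⟩
  · rw [h0]
    have i3 : Integrable (fun v : ℝ => (1 + (Complex.normSq ((v:ℂ) - (z + m z)))⁻¹) / 2) ν :=
      ((integrable_const 1).add i1).div_const 2
    refine (norm_integral_le_of_norm_le i3 (Eventually.of_forall fun v => ?_)).trans ?_
    · rw [norm_inv, Complex.normSq_eq_norm_sq, ← inv_pow]
      nlinarith [sq_nonneg (‖(v:ℂ) - (z + m z)‖⁻¹ - 1)]
    · rw [integral_div, integral_add (integrable_const 1) i1]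
      simp
      linarith
  · rw [e3, ENNReal.ofReal_le_one]; exact hI

lemma aux_lim (ν : Measure ℝ) [IsProbabilityMeasure ν] (a b : ℝ) 
    (hsupp : ∀ᵐ v ∂ν, v ∈ Set.Icc a b) (ϖ : ℝ) (hϖ : 0 < ϖ)
    (hedge : ∀ x ∈ Set.Icc a b,
      ENNReal.ofReal (1 + ϖ) ≤ ∫⁻ v, (ENNReal.ofReal ((v - x) ^ 2))⁻¹ ∂ν)
    (m : ℂ → ℂ) (him : ∀ z : ℂ, 0 < z.im → 0 ≤ (m z).im)
    (heq : ∀ z : ℂ, 0 < z.im → m z = ∫ v : ℝ, ((v : ℂ) - z - m z)⁻¹ ∂ν) (E : ℝ)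
    (U : Ultrafilter ℝ) (hU : (U : Filter ℝ) ≤ nhdsWithin 0 (Set.Ioi 0)) :
    ∃ ζ : ℂ, Tendsto (fun η : ℝ => (m (E + η * Complex.I)).im) U (nhds ζ.im) ∧ 0 ≤ ζ.im ∧
      ∫⁻ v : ℝ, (ENNReal.ofReal (Complex.normSq ((v:ℂ) - ζ)))⁻¹ ∂ν ≤ 1 ∧
      ζ ∉ Complex.ofReal '' Set.Icc a b ∧ (E : ℂ) = ζ - ∫ v : ℝ, ((v:ℂ) - ζ)⁻¹ ∂ν := by
  have hpos : ∀ᶠ η : ℝ in U, 0 < η := hU self_mem_nhdsWithin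
  have hz0 : Tendsto (fun η : ℝ => η) U (nhds 0) := hU.trans nhdsWithin_le_nhds
  have hzt : Tendsto (fun η : ℝ => (E + η * Complex.I : ℂ)) U (nhds (E:ℂ)) := by
    have : Continuous (fun η : ℝ => (E + η * Complex.I : ℂ)) := by fun_prop
    have := (this.tendsto 0).comp hz0
    simpa [Function.comp_def] using this
  have hzim : ∀ η : ℝ, ((E + η * Complex.I : ℂ)).im = η := by intro η; simp
  set Z : ℝ → ℂ := fun η => (E + η * Complex.I : ℂ) + m (E + η * Complex.I) with hZ
  have hbd : ∀ᶠ η : ℝ in U, ‖m (E + η * Complex.I)‖ ≤ 1 := by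
    filter_upwards [hpos] with η hη
    exact (aux_pre ν m him heq _ (by rw [hzim]; exact hη)).2.1
  obtain ⟨μ, -, hμ⟩ := (isCompact_closedBall (0:ℂ) 1).ultrafilter_le_nhds'
    (U.map (fun η : ℝ => m (E + η * Complex.I))) (by
      rw [Ultrafilter.mem_map]
      filter_upwards [hbd] with η hη
      simpa using hη)
  have hmt : Tendsto (fun η : ℝ => m (E + η * Complex.I)) U (nhds μ) := hμ
  have hZt : Tendsto Z U (nhds (E + μ)) := hzt.add hmt
  have hg : ∫⁻ v : ℝ, (ENNReal.ofReal (Complex.normSq ((v:ℂ) - (E + μ))))⁻¹ ∂ν ≤ 1 := by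
    refine (aux_closed ν).mem_of_tendsto hZt ?_
    filter_upwards [hpos] with η hη
    exact (aux_pre ν m him heq _ (by rw [hzim]; exact hη)).2.2
  have himt : Tendsto (fun η : ℝ => (m (E + η * Complex.I)).im) U (nhds ((E:ℂ) + μ).im) := by
    have := (Complex.continuous_im.tendsto μ).comp hmt
    simpa [Function.comp_def] using this
  have hnn : 0 ≤ ((E:ℂ) + μ).im := by
    refine ge_of_tendsto himt ?_
    filter_upwards [hpos] with η hη
    exact him _ (by rw [hzim]; exact hη)
  have hout : (E:ℂ) + μ ∉ Complex.ofReal '' Set.Icc a b := by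
    rintro ⟨x, hx, hxe⟩
    obtain ⟨y0, hy0, hy⟩ := aux_y0 ν a b ϖ hϖ hedge
    have := hy (x:ℂ) (by simpa using hx) (by simp) (by rw [hxe]; exact hg)
    simp at this
    linarith
  refine ⟨E + μ, himt, hnn, hg, hout, ?_⟩
  have hc := (aux_cont_s7 ν a b hsupp _ hout).tendsto.comp hZt
  have : Tendsto (fun η : ℝ => m (E + η * Complex.I)) U
      (nhds (∫ v : ℝ, ((v:ℂ) - (E + μ))⁻¹ ∂ν)) := by
    refine hc.congr' ?_
    filter_upwards [hpos] with η hη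
    exact (aux_pre ν m him heq _ (by rw [hzim]; exact hη)).1.symm
  rw [← tendsto_nhds_unique hmt this]
  ring

lemma aux_edge (ν : Measure ℝ) [IsProbabilityMeasure ν] (p : ℝ → ℝ) (hp : Measurable p)
    (δ R t y : ℝ) (hδ : 0 < δ) (hy : 0 < y) (hpb : ∀ᵐ v ∂ν, δ ≤ p v ∧ p v ≤ R)
    (h1 : ∫ v, ((p v) ^ 2)⁻¹ ∂ν = 1) (h2 : ∫ v, ((p v - t) ^ 2 + y ^ 2)⁻¹ ∂ν = 1) (X : ℝ)
    (hX : X = t + ∫ v, (p v)⁻¹ ∂ν - ∫ v, (p v - t) / ((p v - t) ^ 2 + y ^ 2) ∂ν) :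
    0 < X ∧ y ^ 2 ≤ R ^ 3 / δ ^ 2 * X ∧ (t ≤ δ → X ≤ 2 * R ^ 2 / δ ^ 3 * y ^ 2) := by
  obtain ⟨v0, hv0⟩ := hpb.exists
  have hR : 0 < R := by linarith
  obtain ⟨ht, h3, h4, h5, h6, h7⟩ := aux_core ν p hp δ R t y hδ hy hpb h1 h2 X hX
  refine ⟨h7, ?_, fun htd => ?_⟩
  · calc y ^ 2 ≤ 2 * t * R := h5
      _ = R ^ 3 / δ ^ 2 * (2 * t * δ ^ 2 / R ^ 2) := by field_simp
      _ ≤ _ := by gcongr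
  · calc X ≤ 2 * t * R ^ 2 / δ ^ 2 := h4
      _ = 2 * R ^ 2 / δ ^ 3 * (t * δ) := by field_simp
      _ ≤ _ := by gcongr; nlinarith

set_option maxHeartbeats 1000000 in
lemma aux_main (ν : Measure ℝ) [IsProbabilityMeasure ν]
    (a b : ℝ) (hab : a ≤ b)
    (hsupp : ∀ᵐ v ∂ν, v ∈ Set.Icc a b)
    (ϖ : ℝ) (hϖ : 0 < ϖ)
    (hedge : ∀ x ∈ Set.Icc a b,
      ENNReal.ofReal (1 + ϖ) ≤ ∫⁻ v, (ENNReal.ofReal ((v - x) ^ 2))⁻¹ ∂ν)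
    (ζm ζp : ℝ) (hζm_out : ζm < a) (hζp_out : b < ζp)
    (hζm : ∫ v, ((v - ζm) ^ 2)⁻¹ ∂ν = 1)
    (hζp : ∫ v, ((v - ζp) ^ 2)⁻¹ ∂ν = 1)
    (Lm Lp : ℝ)
    (hLm : Lm = ζm - ∫ v, (v - ζm)⁻¹ ∂ν)
    (hLp : Lp = ζp - ∫ v, (v - ζp)⁻¹ ∂ν) :
    ∃ C : ℝ, 1 < C ∧ ∀ (E : ℝ) (ζ : ℂ), 0 ≤ ζ.im →
      ∫⁻ v : ℝ, (ENNReal.ofReal (Complex.normSq ((v:ℂ) - ζ)))⁻¹ ∂ν ≤ 1 →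
      ζ ∉ Complex.ofReal '' Set.Icc a b → (E : ℂ) = ζ - ∫ v : ℝ, ((v:ℂ) - ζ)⁻¹ ∂ν →
      (E ∈ Set.Ioo Lm Lp → C⁻¹ * Real.sqrt (min |E - Lm| |E - Lp|) ≤ ζ.im ∧
        ζ.im ≤ C * Real.sqrt (min |E - Lm| |E - Lp|)) ∧
      (E ∉ Set.Icc Lm Lp → ζ.im = 0) := by
  obtain ⟨y0, hy0, hy0'⟩ := aux_y0 ν a b ϖ hϖ hedge
  have hδp : 0 < ζp - b := by linarith
  have hδm : 0 < a - ζm := by linarith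
  have hRp : 0 < ζp - a := by linarith
  have hRm : 0 < b - ζm := by linarith
  have hpbp : ∀ᵐ v ∂ν, ζp - b ≤ ζp - v ∧ ζp - v ≤ ζp - a := by
    filter_upwards [hsupp] with v hv
    constructor <;> linarith [hv.1, hv.2]
  have hpbm : ∀ᵐ v ∂ν, a - ζm ≤ v - ζm ∧ v - ζm ≤ b - ζm := by
    filter_upwards [hsupp] with v hv
    constructor <;> linarith [hv.1, hv.2]
  have hζp' : ∫ v, ((ζp - v) ^ 2)⁻¹ ∂ν = 1 := by
    rw [← hζp]; congr 1; ext v; congr 1; ring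
  have hLp' : Lp = ζp + ∫ v, (ζp - v)⁻¹ ∂ν := by
    rw [hLp, sub_eq_add_neg, ← integral_neg]; congr 2; ext v; rw [← inv_neg, neg_sub]
  set K1 := (ζp - a) ^ 3 / (ζp - b) ^ 2 with hK1
  set K2 := 2 * (ζp - a) ^ 2 / (ζp - b) ^ 3 with hK2
  set K3 := (b - ζm) ^ 3 / (a - ζm) ^ 2 with hK3
  set K4 := 2 * (b - ζm) ^ 2 / (a - ζm) ^ 3 with hK4
  set K5 := |Lp - Lm| / y0 ^ 2 with hK5
  have k1 : 0 < K1 := by positivity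
  have k2 : 0 < K2 := by positivity
  have k3 : 0 < K3 := by positivity
  have k4 : 0 < K4 := by positivity
  have k5 : 0 ≤ K5 := by positivity
  refine ⟨1 + K1 + K2 + K3 + K4 + K5, by linarith, ?_⟩
  set C := 1 + K1 + K2 + K3 + K4 + K5 with hC
  intro E ζ hy hg hout hE
  have cmp : ∀ κ y : ℝ, 0 ≤ κ → 0 < y → y ^ 2 ≤ C * κ → κ ≤ C * y ^ 2 →
      C⁻¹ * Real.sqrt κ ≤ y ∧ y ≤ C * Real.sqrt κ := by
    intro κ y hκ hy h1 h2
    have hC1 : 1 ≤ C := by linarith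
    have hC0 : 0 < C := by linarith
    have hs := Real.sq_sqrt hκ
    have hs0 := Real.sqrt_nonneg κ
    have hCC : C ≤ C ^ 2 := by nlinarith
    constructor
    · rw [inv_mul_le_iff₀ hC0]
      apply Real.sqrt_le_iff.2 ⟨by positivity, ?_⟩
      rw [mul_pow]
      exact h2.trans (by gcongr)
    · refine (sq_le_sq₀ hy.le (by positivity)).1 ?_
      rw [mul_pow, hs]
      exact h1.trans (by gcongr)
  rcases hy.lt_or_eq with hy | hy
  · obtain ⟨i1, i2, e1, e2, -⟩ := aux_int ν ζ hy
    have hns : ∀ v : ℝ, Complex.normSq ((v:ℂ) - ζ) = (v - ζ.re) ^ 2 + ζ.im ^ 2 := by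
      intro v; simp [Complex.normSq_apply]; ring
    have hEi := congrArg Complex.im hE
    have hEr := congrArg Complex.re hE
    rw [Complex.sub_im, e1, Complex.ofReal_im] at hEi
    rw [Complex.sub_re, e2, Complex.ofReal_re] at hEr
    simp only [hns] at hEi hEr
    have hI : ∫ v, ((v - ζ.re) ^ 2 + ζ.im ^ 2)⁻¹ ∂ν = 1 := by
      apply mul_left_cancel₀ hy.ne'
      linarith
    obtain ⟨p1, p2, p3⟩ := aux_edge ν (fun v => ζp - v) (by fun_prop) _ _ (ζp - ζ.re) ζ.im hδp hy
      hpbp hζp' (by rw [← hI]; congr 1; ext v; congr 1; ring) (Lp - E) (by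
        rw [hLp', hEr]
        have : ∫ v, (ζp - v - (ζp - ζ.re)) / ((ζp - v - (ζp - ζ.re)) ^ 2 + ζ.im ^ 2) ∂ν =
            - ∫ v, (v - ζ.re) / ((v - ζ.re) ^ 2 + ζ.im ^ 2) ∂ν := by
          rw [← integral_neg]; congr 1; ext v; rw [← neg_div]; congr 1 <;> ring
        rw [this]; ring)
    obtain ⟨m1, m2, m3⟩ := aux_edge ν (fun v => v - ζm) (by fun_prop) _ _ (ζ.re - ζm) ζ.im hδm hy
      hpbm hζm (by rw [← hI]; congr 1; ext v; congr 1; ring) (E - Lm) (by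
        rw [hLm, hEr]
        have : ∫ v, (v - ζm - (ζ.re - ζm)) / ((v - ζm - (ζ.re - ζm)) ^ 2 + ζ.im ^ 2) ∂ν =
            ∫ v, (v - ζ.re) / ((v - ζ.re) ^ 2 + ζ.im ^ 2) ∂ν := by
          congr 1; ext v; congr 1 <;> ring
        rw [this]; ring)
    refine ⟨fun _ => ?_, fun h => absurd ⟨by linarith, by linarith⟩ h⟩
    have a1 : |E - Lm| = E - Lm := abs_of_pos m1
    have a2 : |E - Lp| = Lp - E := by rw [abs_sub_comm]; exact abs_of_pos p1
    rw [a1, a2]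
    have hy2 : 0 < ζ.im ^ 2 := by positivity
    apply cmp _ _ (le_min m1.le p1.le) hy
    · rcases min_choice (E - Lm) (Lp - E) with h | h <;> rw [h]
      · exact m2.trans (by gcongr; linarith)
      · exact p2.trans (by gcongr; linarith)
    · by_cases c1 : ζp - ζ.re ≤ ζp - b
      · exact (min_le_right _ _).trans ((p3 c1).trans (by gcongr; linarith))
      by_cases c2 : ζ.re - ζm ≤ a - ζm
      · exact (min_le_left _ _).trans ((m3 c2).trans (by gcongr; linarith))
      have hyy := hy0' ζ ⟨by linarith, by linarith⟩ hy.le hg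
      calc min (E - Lm) (Lp - E) ≤ Lp - E := min_le_right _ _
        _ ≤ |Lp - Lm| := le_trans (by linarith) (le_abs_self _)
        _ = K5 * y0 ^ 2 := by rw [hK5]; field_simp
        _ ≤ C * ζ.im ^ 2 := by gcongr; linarith
  · refine ⟨fun hEI => ?_, fun _ => hy.symm⟩
    exfalso
    have hζr : ζ = (ζ.re : ℂ) := Complex.ext (by simp) (by simp [← hy])
    set ξ := ζ.re with hξ
    have hξo : ξ ∉ Set.Icc a b := fun h => hout ⟨ξ, h, hζr.symm⟩
    have hg' : ∫⁻ v : ℝ, (ENNReal.ofReal ((v - ξ) ^ 2))⁻¹ ∂ν ≤ 1 := by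
      refine le_trans (le_of_eq ?_) hg
      congr 1; ext v; rw [hζr, ← Complex.ofReal_sub, Complex.normSq_ofReal, sq]
    have hE' : E = ξ - ∫ v : ℝ, (v - ξ)⁻¹ ∂ν := by
      rw [hζr] at hE
      have : ∫ v : ℝ, ((v:ℂ) - (ξ:ℂ))⁻¹ ∂ν = ((∫ v : ℝ, (v - ξ)⁻¹ ∂ν : ℝ) : ℂ) := by
        rw [← integral_complex_ofReal]; congr 1; ext v; simp
      rw [this] at hE
      exact_mod_cast hE
    rcases lt_or_ge ξ a with h | h
    · have := aux_real ν (fun v => v - ζm) (by fun_prop) _ _ (ξ - ζm) (a - ξ) hδm (by linarith)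
        hpbm (by filter_upwards [hsupp] with v hv; linarith [hv.1]) hζm
        (by simpa only [sub_sub_sub_cancel_right] using hg')
      simp only [sub_sub_sub_cancel_right] at this
      linarith [hEI.1]
    · have hb : b < ξ := by
        by_contra hh
        push Not at hh
        exact hξo ⟨h, hh⟩
      have := aux_real ν (fun v => ζp - v) (by fun_prop) _ _ (ζp - ξ) (ξ - b) hδp (by linarith)
        hpbp (by filter_upwards [hsupp] with v hv; linarith [hv.2]) hζp'
        (by
          refine le_trans (le_of_eq ?_) hg'
          congr 1; ext v; congr 2; ring)
      have e : ∫ v, (ζp - v - (ζp - ξ))⁻¹ ∂ν = - ∫ v, (v - ξ)⁻¹ ∂ν := by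
        rw [← integral_neg]; congr 1; ext v; rw [← inv_neg]; congr 1; ring
      rw [e] at this
      linarith [hEI.2]

/-- Under the standing assumptions there is `C > 1` such that for every
`E ∈ (L−, L+)`, `C⁻¹ √κ_E ≤ liminf_{η↓0} Im m(E+iη) ≤ limsup_{η↓0} Im m(E+iη) ≤ C √κ_E`,
and for every `E ∉ [L−, L+]`, `lim_{η↓0} Im m(E+iη) = 0` (`κ_E := min(|E−L−|,|E−L+|)`).
In particular, the deformed semicircle law is supported on `[L−,L+]` with strictly positive
density inside. -/
theorem stmt_7 (ν : Measure ℝ) [IsProbabilityMeasure ν]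
    -- `[a,b]` is the smallest closed interval containing `supp ν`
    (a b : ℝ) (hab : a ≤ b)
    (hsupp : ν (Set.Icc a b)ᶜ = 0)
    (hmin : ∀ a' b' : ℝ, ν (Set.Icc a' b')ᶜ = 0 → Set.Icc a b ⊆ Set.Icc a' b')
    -- `ν` is centered
    (hcent : ∫ v, v ∂ν = 0)
    -- edge assumption: `∫ dν(v)/(v − x)² ≥ 1 + ϖ` on `[a,b]` (value possibly `+∞`)
    (ϖ : ℝ) (hϖ : 0 < ϖ)
    (hedge : ∀ x ∈ Set.Icc a b,
      ENNReal.ofReal (1 + ϖ) ≤ ∫⁻ v, (ENNReal.ofReal ((v - x) ^ 2))⁻¹ ∂ν)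
    -- `m` is the Stieltjes transform of the deformed semicircle law
    (m : ℂ → ℂ)
    (hholo : DifferentiableOn ℂ m {z : ℂ | 0 < z.im})
    (him : ∀ z : ℂ, 0 < z.im → 0 ≤ (m z).im)
    (heq : ∀ z : ℂ, 0 < z.im → m z = ∫ v : ℝ, ((v : ℂ) - z - m z)⁻¹ ∂ν)
    (hbdd : ∀ E : ℝ, IsBoundedUnder (· ≤ ·) (nhdsWithin (0:ℝ) (Set.Ioi 0))
      (fun η : ℝ => (m (E + η * Complex.I)).im))
    -- `ζ− < ζ+` are the two real solutions of `∫ dν(v)/(v − ζ)² = 1`, outside `[a,b]`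
    (ζm ζp : ℝ) (hζζ : ζm < ζp)
    (hζm_out : ζm < a) (hζp_out : b < ζp)
    (hζm : ∫ v, ((v - ζm) ^ 2)⁻¹ ∂ν = 1)
    (hζp : ∫ v, ((v - ζp) ^ 2)⁻¹ ∂ν = 1)
    -- `L± := ζ± − ∫ dν(v)/(v − ζ±)` are the edges of the support of `ρ_fc`
    (Lm Lp : ℝ)
    (hLm : Lm = ζm - ∫ v, (v - ζm)⁻¹ ∂ν)
    (hLp : Lp = ζp - ∫ v, (v - ζp)⁻¹ ∂ν) :
    ∃ C : ℝ, 1 < C ∧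
      (∀ E : ℝ, E ∈ Set.Ioo Lm Lp →
        C⁻¹ * Real.sqrt (min |E - Lm| |E - Lp|)
            ≤ liminf (fun η : ℝ => (m (E + η * Complex.I)).im) (nhdsWithin 0 (Set.Ioi 0)) ∧
        liminf (fun η : ℝ => (m (E + η * Complex.I)).im) (nhdsWithin 0 (Set.Ioi 0))
            ≤ limsup (fun η : ℝ => (m (E + η * Complex.I)).im) (nhdsWithin 0 (Set.Ioi 0)) ∧
        limsup (fun η : ℝ => (m (E + η * Complex.I)).im) (nhdsWithin 0 (Set.Ioi 0))
            ≤ C * Real.sqrt (min |E - Lm| |E - Lp|)) ∧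
      (∀ E : ℝ, E ∉ Set.Icc Lm Lp →
        Tendsto (fun η : ℝ => (m (E + η * Complex.I)).im)
          (nhdsWithin 0 (Set.Ioi 0)) (nhds 0)) := by
  have hs : ∀ᵐ v ∂ν, v ∈ Set.Icc a b := hsupp
  obtain ⟨C, hC, hmain⟩ := aux_main ν a b hab hs ϖ hϖ hedge ζm ζp hζm_out hζp_out hζm hζp Lm Lp
    hLm hLp
  refine ⟨C, hC, fun E hE => ?_, fun E hE => ?_⟩
  · set f : ℝ → ℝ := fun η : ℝ => (m (E + η * Complex.I)).im with hf
    set κ := Real.sqrt (min |E - Lm| |E - Lp|) with hκ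
    have hlim : ∀ U : Ultrafilter ℝ, (U : Filter ℝ) ≤ nhdsWithin 0 (Set.Ioi 0) →
        ∃ y, Tendsto f U (nhds y) ∧ C⁻¹ * κ ≤ y ∧ y ≤ C * κ := by
      intro U hU
      obtain ⟨ζ, h1, h2, h3, h4, h5⟩ := aux_lim ν a b hs ϖ hϖ hedge m him heq E U hU
      exact ⟨ζ.im, h1, (hmain E ζ h2 h3 h4 h5).1 hE⟩
    have hev1 : ∀ c, c < C⁻¹ * κ → ∀ᶠ η in nhdsWithin 0 (Set.Ioi 0), c ≤ f η := by
      intro c hc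
      apply Filter.mem_iff_ultrafilter.2
      intro U hU
      obtain ⟨y, h1, h2, h3⟩ := hlim U hU
      exact (h1.eventually (lt_mem_nhds (hc.trans_le h2))).mono fun _ h => h.le
    have hev2 : ∀ c, C * κ < c → ∀ᶠ η in nhdsWithin 0 (Set.Ioi 0), f η ≤ c := by
      intro c hc
      apply Filter.mem_iff_ultrafilter.2
      intro U hU
      obtain ⟨y, h1, h2, h3⟩ := hlim U hU
      exact (h1.eventually (gt_mem_nhds (h3.trans_lt hc))).mono fun _ h => h.le
    have hb1 : IsBoundedUnder (· ≤ ·) (nhdsWithin (0:ℝ) (Set.Ioi 0)) f := hbdd E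
    have hb2 : IsBoundedUnder (· ≥ ·) (nhdsWithin (0:ℝ) (Set.Ioi 0)) f :=
      ⟨C⁻¹ * κ - 1, by simpa using hev1 (C⁻¹ * κ - 1) (by linarith)⟩
    refine ⟨?_, liminf_le_limsup hb1 hb2, ?_⟩
    · apply le_of_forall_lt_imp_le_of_dense
      intro c hc
      exact le_liminf_of_le hb1.isCoboundedUnder_ge (hev1 c hc)
    · apply le_of_forall_gt_imp_ge_of_dense
      intro c hc
      exact limsup_le_of_le hb2.isCoboundedUnder_le (hev2 c hc)
  · rw [tendsto_iff_ultrafilter]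
    intro U hU
    obtain ⟨ζ, h1, h2, h3, h4, h5⟩ := aux_lim ν a b hs ϖ hϖ hedge m him heq E U hU
    rw [(hmain E ζ h2 h3 h4 h5).2 hE] at h1
    exact h1
end

section
/- Under the standing assumptions on ν and on the solution m of the functional equation, there exists a constant C > 1 such that for all z = E + iη ∈ D′: if E ∈ [L−, L+] then C⁻¹ √(κ_E + η) ≤ Im m(z) ≤ C √(κ_E + η), while if E ∉ [L−, L+] then C⁻¹ η/√(κ_E + η) ≤ Im m(z) ≤ C η/√(κ_E + η). -/
open MeasureTheory Filter

lemma alg_a {c u y q g e η : ℝ} (hc : 0 < c) (hy : 0 < y) (hq : c ≤ q) (hg : c ≤ g) 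
    (hA : 0 ≤ 2*u*q + (u^2+y^2)*g)
    (he : e = (u^2-y^2)*q + u*(u^2+y^2)*g) (hη : η = y*(2*u*q + (u^2+y^2)*g)) :
    c * y^2 ≤ 2 * (|e| + η) := by
  have hη0 : 0 ≤ η := by rw [hη]; positivity
  have h1 : -e ≤ |e| := neg_le_abs e
  have hq0 : 0 < q := by linarith
  have hg0 : 0 < g := by linarith
  have hcy : c * y^2 ≤ q * y^2 := by gcongr
  rcases le_total u 0 with hu | hu
  · have hP : 0 ≤ u*q + (u^2+y^2)*g := by
      have : 0 ≤ (u^2+y^2)*g := by positivity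
      linarith
    have : 0 ≤ (-u) * (u*q + (u^2+y^2)*g) := mul_nonneg (by linarith) hP
    nlinarith
  · rcases le_total (y/2) u with h2 | h2
    · have : y * (2*(y/2)*q) ≤ η := by
        rw [hη]
        have : 0 ≤ (u^2+y^2)*g := by positivity
        have h3 : 2*(y/2)*q ≤ 2*u*q := by gcongr
        gcongr; linarith
      have := abs_nonneg e
      nlinarith
    · have h3 : 0 ≤ (y-u)*((u^2+y^2)*g) := mul_nonneg (by linarith) (by positivity)
      have h4 : 0 ≤ y*u*q := by positivity
      have h5 : u^2 ≤ (y/2)^2 := by gcongr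
      have h6 : u^2*q ≤ (y/2)^2*q := by gcongr
      nlinarith

lemma alg_b {K u y q g e η : ℝ} (hK : 1 ≤ K) (hy : 0 < y) (hq0 : 0 < q) (hg0 : 0 < g) 
    (hq : q ≤ K) (hg : g ≤ K) (hD : u^2+y^2 ≤ K^2)
    (he : e = (u^2-y^2)*q + u*(u^2+y^2)*g) (hη : η = y*(2*u*q + (u^2+y^2)*g)) :
    |e| + η ≤ 4 * K^2 * (u^2+y^2) := by
  have hu1 : |u| ≤ K := abs_le_of_sq_le_sq (by nlinarith) (by linarith)
  have hy1 : y ≤ K := abs_le_of_sq_le_sq' (by nlinarith) (by linarith) |>.2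
  set D := u^2+y^2 with hDd
  have hD0 : 0 ≤ D := by positivity
  have hKK : K ≤ K^2 := by nlinarith
  have h1 : |e| ≤ D*K + K*D*K := by
    rw [he]
    refine (abs_add_le _ _).trans ?_
    rw [abs_mul, abs_mul, abs_mul, abs_of_pos hq0, abs_of_pos hg0, abs_of_nonneg hD0]
    gcongr
    rw [abs_le]; constructor <;> nlinarith [sq_nonneg u, sq_nonneg y]
  have h2 : η ≤ D*K + K*D*K := by
    have e1 : η = (2*u*y)*q + y*D*g := by rw [hη]; ring
    rw [e1]
    have e2 : 2*u*y ≤ D := by nlinarith [sq_nonneg (u-y)]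
    have : 2*u*y*q ≤ D*q := by gcongr
    have : D*q ≤ D*K := by gcongr
    have : y*D*g ≤ K*D*K := by gcongr
    linarith
  nlinarith

lemma alg_u {c K u y q g : ℝ} (hc : 0 < c) (hK : 1 ≤ K) (hcK : c ≤ K) (hy : 0 < y) (hq0 : c ≤ q)
    (hg0 : c ≤ g) 
    (hq : q ≤ K) (hg : g ≤ K) (hD : u^2+y^2 ≤ K^2) (hA : 0 < 2*u*q + (u^2+y^2)*g)
    (he : 0 ≤ (u^2-y^2)*q + u*(u^2+y^2)*g) : c * y ≤ 4 * K^2 * u := by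
  have hP : 0 < u*q + (u^2+y^2)*g := by
    have : 0 ≤ (u^2+y^2)*g := by have : 0 < g := by linarith
                                 positivity
    linarith
  have hyq : 0 < y^2*q := by have : 0 < q := by linarith
                             positivity
  have huP : y^2*q ≤ u * (u*q + (u^2+y^2)*g) := by nlinarith
  have hu : 0 < u := by
    by_contra h
    push Not at h
    have := mul_nonneg (neg_nonneg.2 h) hP.le
    nlinarith
  have hu1 : u ≤ K := abs_le_of_sq_le_sq' (by nlinarith) (by linarith) |>.2
  have hy1 : y ≤ K := abs_le_of_sq_le_sq' (by nlinarith) (by linarith) |>.2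
  by_contra hcon
  push Not at hcon
  have huy : u ≤ y := by
    have : 4*K^2*u < 4*K^2*y := by
      have : c * y ≤ 4*K^2*y := by gcongr; nlinarith
      linarith
    have hK2 : 0 < 4*K^2 := by positivity
    exact (lt_of_mul_lt_mul_left this hK2.le).le
  have h2 : u*q + (u^2+y^2)*g ≤ y*K + (y*K + y*K)*K := by
    have : 0 ≤ q := by linarith
    have : 0 ≤ g := by linarith
    gcongr
    · nlinarith
    · nlinarith
  have h3 : y*K + (y*K + y*K)*K ≤ 3*K^2*y := by nlinarith
  have h4 : y^2*c ≤ u*(3*K^2*y) := by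
    calc y^2*c ≤ y^2*q := by gcongr
      _ ≤ _ := huP
      _ ≤ _ := by gcongr; linarith
  have h5 : y*c ≤ 3*K^2*u := by
    have : y*(y*c) ≤ y*(3*K^2*u) := by nlinarith
    exact le_of_mul_le_mul_left this hy
  have : 0 < K^2*u := by positivity
  nlinarith

set_option maxHeartbeats 1000000 in
lemma alg_c {c K : ℝ} (hc : 0 < c) (hK : 1 ≤ K) (hcK : c ≤ K) : ∃ M : ℝ, 1 ≤ M ∧
    ∀ u y q g e η A : ℝ, 0 < y → c ≤ q → c ≤ g → q ≤ K → g ≤ K → u^2+y^2 ≤ K^2 →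
    A = 2*u*q + (u^2+y^2)*g → 0 < A → e = (u^2-y^2)*q + u*(u^2+y^2)*g → η = y * A → 
    (y^2 ≤ M * (|e| + η)) ∧ (|e| + η ≤ M * (u^2+y^2)) ∧
    (0 ≤ e → u^2+y^2 ≤ M * (|e|+η) ∧ u^2+y^2 ≤ M * A^2 ∧ A^2 ≤ M * (u^2+y^2)) ∧
    (e ≤ 0 → 0 ≤ u → u^2+y^2 ≤ M * y^2) ∧
    (u ≤ 0 → -u * g ≤ q → u^2+y^2 ≤ M * y^2) := by
  -- ε = c/(4K^2), N = 4K^2/c, y ≤ N u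
  set N := 4*K^2/c with hN
  have hK0 : 0 < K := by linarith
  have hKK : K ≤ K^2 := by nlinarith
  have hN0 : 0 < N := by positivity
  have hN1 : 1 ≤ N := by rw [hN, le_div_iff₀ hc]; nlinarith
  refine ⟨2 + 2/c + 4*K^2 + N/c + (1+N^2)/c^2 + (3*K^2)^2 + K^2/c, ?_, ?_⟩
  · have : 0 ≤ 2/c + 4*K^2 + N/c + (1+N^2)/c^2 + (3*K^2)^2+ K^2/c := by positivity
    linarith
  intro u y q g e η A hy hq hg hqK hgK hD hAd hA he hη
  have hq0 : 0 < q := by linarith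
  have hg0 : 0 < g := by linarith
  have hη0 : 0 < η := by rw [hη]; positivity
  have hη' : η = y*(2*u*q + (u^2+y^2)*g) := by rw [hη, hAd]
  have hA' : 0 < 2*u*q + (u^2+y^2)*g := by rw [← hAd]; exact hA
  set M := 2 + 2/c + 4*K^2 + N/c + (1+N^2)/c^2 + (3*K^2)^2+ K^2/c with hM
  have p1 : 0 ≤ 2/c := by positivity
  have p2 : 0 ≤ 4*K^2 := by positivity
  have p3 : 0 ≤ N/c := by positivity
  have p4 : 0 ≤ (1+N^2)/c^2 := by positivity
  have p5 : 0 ≤ (3*K^2)^2 := by positivity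
  have p6 : 0 ≤ K^2/c := by positivity
  have hu1 : |u| ≤ K := abs_le_of_sq_le_sq (by nlinarith) (by linarith)
  refine ⟨?_, ?_, ?_, ?_, ?_⟩
  · have h := alg_a hc hy hq hg hA'.le he hη'
    have : y^2 ≤ 2/c * (|e|+η) := by
      rw [div_mul_eq_mul_div, le_div_iff₀ hc]; linarith
    refine this.trans ?_
    gcongr; linarith
  · refine (alg_b hK hy hq0 hg0 hqK hgK hD he hη').trans ?_
    gcongr; linarith
  · intro he0
    have h := alg_u hc hK hcK hy hq hg hqK hgK hD hA' (he ▸ he0)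
    have hyu : y ≤ N * u := by
      rw [hN, div_mul_eq_mul_div, le_div_iff₀ hc]; linarith
    have hu : 0 < u := by
      by_contra hh
      push Not at hh
      nlinarith
    rw [abs_of_nonneg he0]
    have hD0 : 0 < u^2+y^2 := by positivity
    refine ⟨?_, ?_, ?_⟩
    · have k1 : u^2*q - y^2*q ≤ e := by
        have : 0 ≤ u*(u^2+y^2)*g := by positivity
        rw [he]; linarith
      have k2 : 2*u*y*q ≤ η := by
        have : 0 ≤ y*((u^2+y^2)*g) := by positivity
        rw [hη']; linarith
      have k3 : 2*y^2*q ≤ N*η := by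
        calc 2*y^2*q = 2*y*y*q := by ring
          _ ≤ 2*(N*u)*y*q := by gcongr
          _ = N*(2*u*y*q) := by ring
          _ ≤ _ := by gcongr
      have k4 : (u^2+y^2)*q ≤ N*(e+η) := by nlinarith
      have k5 : (u^2+y^2)*c ≤ N*(e+η) := le_trans (by gcongr) k4
      have : u^2+y^2 ≤ N/c * (e+η) := by
        rw [div_mul_eq_mul_div, le_div_iff₀ hc]; linarith
      refine this.trans ?_
      gcongr; linarith
    · have k1 : c*u ≤ A := by
        have : 0 ≤ (u^2+y^2)*g := by positivity
        have : c*u ≤ q*u := by gcongr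
        have : 0 < q*u := by positivity
        rw [hAd]; linarith
      have k2 : u^2+y^2 ≤ (1+N^2)*u^2 := by
        have : y^2 ≤ (N*u)^2 := by gcongr
        linarith
      have k3 : u^2 ≤ A^2/c^2 := by
        rw [le_div_iff₀ (by positivity)]
        calc u^2*c^2 = (c*u)^2 := by ring
          _ ≤ _ := by gcongr
      calc u^2+y^2 ≤ (1+N^2)*u^2 := k2
        _ ≤ (1+N^2)*(A^2/c^2) := by gcongr
        _ = (1+N^2)/c^2 * A^2 := by ring
        _ ≤ _ := by gcongr; linarith
    · set D := Real.sqrt (u^2+y^2) with hDs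
      have d1 : D^2 = u^2+y^2 := Real.sq_sqrt hD0.le
      have d0 : 0 ≤ D := Real.sqrt_nonneg _
      have d2 : D ≤ K := by
        apply Real.sqrt_le_iff.2 ⟨by linarith, hD⟩
      have d3 : u ≤ D := Real.le_sqrt_of_sq_le (by nlinarith)
      have : A ≤ 3*K^2*D := by
        rw [hAd, ← d1]
        have : 2*u*q ≤ 2*D*K := by gcongr
        have : D^2*g ≤ D*K*K := by
          rw [pow_two]; gcongr
        have : D*K ≤ D*K^2 := mul_le_mul_of_nonneg_left hKK d0
        linarith
      calc A^2 ≤ (3*K^2*D)^2 := by gcongr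
        _ = (3*K^2)^2 * (u^2+y^2) := by rw [mul_pow, d1]
        _ ≤ _ := by gcongr; linarith
  · intro he0 hu
    have k : u^2*q ≤ y^2*q := by
      have : 0 ≤ u*(u^2+y^2)*g := by positivity
      nlinarith
    have k' : u^2 ≤ y^2 := le_of_mul_le_mul_right k hq0
    calc u^2+y^2 ≤ 2*y^2 := by linarith
      _ ≤ _ := by gcongr; linarith
  · intro hu hug
    have k1 : -u*q ≤ y^2*g := by
      have : 0 ≤ (-u)*(q - -u*g) := mul_nonneg (by linarith) (by linarith)
      nlinarith
    have k2 : -u ≤ K := (neg_le_abs u).trans hu1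
    have k3 : u^2*c ≤ K^2*y^2 := by
      calc u^2*c = (-u)*(-u*c) := by ring
        _ ≤ K*(-u*q) := by
          have : -u*c ≤ -u*q := by apply mul_le_mul_of_nonneg_left hq; linarith
          have : 0 ≤ -u*c := mul_nonneg (by linarith) hc.le
          gcongr
        _ ≤ K*(y^2*g) := by gcongr
        _ ≤ K*(y^2*K) := by gcongr
        _ = _ := by ring
    have : u^2 ≤ K^2/c*y^2 := by
      rw [div_mul_eq_mul_div, le_div_iff₀ hc]; linarith
    calc u^2+y^2 ≤ (K^2/c+1)*y^2 := by linarith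
      _ ≤ _ := by gcongr; linarith

lemma edge_int (ν : Measure ℝ) [IsProbabilityMeasure ν] {ζ x y s δ R L E u : ℝ}
    (hs : s^2 = 1) (hδ : 0 < δ) (hR : 0 < R) (hy : 0 < y)
    (h1 : ∀ᵐ v ∂ν, δ ≤ s*(ζ-v)) (h2 : ∀ᵐ v ∂ν, s*(ζ-v) ≤ R)
    (h3 : ∀ᵐ v ∂ν, (v-x)^2+y^2 ≤ R^2)
    (hζ : ∫ v, ((v - ζ) ^ 2)⁻¹ ∂ν = 1)
    (hS : ∫ v, ((v-x)^2+y^2)⁻¹ ∂ν ≤ 1)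
    (hL : L = ζ - ∫ v, (v - ζ)⁻¹ ∂ν)
    (hE : E = x - ∫ v, (v-x)*((v-x)^2+y^2)⁻¹ ∂ν)
    (hu : u = s*(x-ζ)) :
    ∃ q g : ℝ, R⁻¹^3 ≤ q ∧ q ≤ δ⁻¹ ∧ R⁻¹^4 ≤ g ∧ g ≤ δ⁻¹^2 ∧
      1 - ∫ v, ((v-x)^2+y^2)⁻¹ ∂ν = 2*u*q + (u^2+y^2)*g ∧
      s*(E-L) = (u^2-y^2)*q + u*(u^2+y^2)*g ∧
      ((∀ᵐ v ∂ν, 0 ≤ s*(x-v)) → -u*g ≤ q) := by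
  set k : ℝ → ℝ := fun v => ((v-x)^2+y^2)⁻¹ with hk
  set h : ℝ → ℝ := fun v => (s*(ζ-v))⁻¹ with hh
  have kpos : ∀ v, 0 < k v := fun v => by simp only [hk]; positivity
  have kle : ∀ v, k v ≤ (y^2)⁻¹ := fun v => by
    simp only [hk]; gcongr; nlinarith [sq_nonneg (v-x)]
  have km : Measurable k := by fun_prop
  have hm : Measurable h := by fun_prop
  have hpos : ∀ᵐ v ∂ν, 0 < h v := by
    filter_upwards [h1] with v hv
    simp only [hh]; exact inv_pos.2 (by linarith)
  have hle : ∀ᵐ v ∂ν, h v ≤ δ⁻¹ := by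
    filter_upwards [h1] with v hv
    simp only [hh]; gcongr
  have hge : ∀ᵐ v ∂ν, R⁻¹ ≤ h v := by
    filter_upwards [h1, h2] with v hv hv2
    simp only [hh]; gcongr; linarith
  have kge : ∀ᵐ v ∂ν, R⁻¹^2 ≤ k v := by
    filter_upwards [h3] with v hv
    simp only [hk]; rw [inv_pow]; gcongr
  have ik : Integrable k ν := by
    refine Integrable.of_bound km.aestronglyMeasurable (y^2)⁻¹ (ae_of_all _ fun v => ?_)
    rw [Real.norm_of_nonneg (kpos v).le]; exact kle v
  have ih : Integrable h ν := by
    refine Integrable.of_bound hm.aestronglyMeasurable δ⁻¹ ?_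
    filter_upwards [hpos, hle] with v a b
    rw [Real.norm_of_nonneg a.le]; exact b
  have ikh : Integrable (fun v => k v * h v) ν := by
    refine ik.mul_bdd (c := δ⁻¹) hm.aestronglyMeasurable ?_
    filter_upwards [hpos, hle] with v a b
    rw [Real.norm_of_nonneg a.le]; exact b
  have ikh2 : Integrable (fun v => k v * h v * h v) ν := by
    refine ikh.mul_bdd (c := δ⁻¹) hm.aestronglyMeasurable ?_
    filter_upwards [hpos, hle] with v a b
    rw [Real.norm_of_nonneg a.le]; exact b
  have ih2 : Integrable (fun v => h v * h v) ν := by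
    refine ih.mul_bdd (c := δ⁻¹) hm.aestronglyMeasurable ?_
    filter_upwards [hpos, hle] with v a b
    rw [Real.norm_of_nonneg a.le]; exact b
  have ivk : Integrable (fun v => (v-x) * k v) ν := by
    refine ik.bdd_mul (c := R) (by fun_prop) ?_
    filter_upwards [h3] with v hv
    exact abs_le_of_sq_le_sq (by nlinarith) hR.le
  have hs0 : s ≠ 0 := by rintro rfl; norm_num at hs
  have eh2 : ∫ v, h v * h v ∂ν = 1 := by
    rw [← hζ]
    congr 1; ext v
    simp only [hh]
    rw [← mul_inv]; congr 1
    calc s*(ζ-v)*(s*(ζ-v)) = s^2*(v-ζ)^2 := by ring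
      _ = _ := by rw [hs, one_mul]
  have sinv : s⁻¹ = s := inv_eq_of_mul_eq_one_right (by rw [← hs]; ring)
  have eL : s*(L - ζ) = ∫ v, h v ∂ν := by
    rw [hL, show s*(ζ - ∫ v, (v - ζ)⁻¹ ∂ν - ζ) = (-s)*∫ v, (v - ζ)⁻¹ ∂ν by ring,
      ← integral_const_mul]
    congr 1; ext v
    simp only [hh]
    rw [mul_inv, sinv, ← neg_sub v ζ, inv_neg]; ring
  refine ⟨∫ v, k v * h v ∂ν, ∫ v, k v * h v * h v ∂ν, ?_, ?_, ?_, ?_, ?_, ?_, ?_⟩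
  · have : ∫ v, R⁻¹^3 ∂ν ≤ ∫ v, k v * h v ∂ν := by
      apply integral_mono_ae (integrable_const _) ikh
      filter_upwards [hge, kge] with v a b
      rw [pow_succ]
      have := kpos v
      gcongr
    simpa using this
  · have : ∫ v, k v * h v ∂ν ≤ ∫ v, k v * δ⁻¹ ∂ν := by
      apply integral_mono_ae ikh (ik.mul_const _)
      filter_upwards [hle] with v a 
      have := kpos v
      gcongr
    rw [integral_mul_const] at this
    refine this.trans ?_
    have : 0 < δ⁻¹ := inv_pos.2 hδ
    nlinarith
  · have : ∫ v, R⁻¹^4 ∂ν ≤ ∫ v, k v * h v * h v ∂ν := by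
      apply integral_mono_ae (integrable_const _) ikh2
      filter_upwards [hge, kge, hpos] with v a b c
      rw [pow_succ, pow_succ]
      have := kpos v
      gcongr
    simpa using this
  · have : ∫ v, k v * h v * h v ∂ν ≤ ∫ v, k v * δ⁻¹ * δ⁻¹ ∂ν := by
      apply integral_mono_ae ikh2 ((ik.mul_const _).mul_const _)
      filter_upwards [hle, hpos] with v a b
      have := kpos v
      gcongr
    rw [integral_mul_const, integral_mul_const] at this
    refine this.trans ?_
    have : 0 < δ⁻¹ := inv_pos.2 hδ
    have : 0 < δ⁻¹^2 := by positivity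
    nlinarith
  · rw [← eh2, ← integral_const_mul, ← integral_const_mul, ← integral_sub ih2 ik,
      ← integral_add (ikh.const_mul _) (ikh2.const_mul _)]
    apply integral_congr_ae
    filter_upwards [h1] with v hv
    have ht : 0 < s*(ζ-v) := by linarith
    simp only [hk, hh]
    have e1 : (v-x)^2 = (u + s*(ζ-v))^2 := by
      rw [hu]
      calc (v-x)^2 = s^2*(v-x)^2 := by rw [hs, one_mul]
        _ = _ := by ring
    rw [e1]
    set t := s*(ζ-v)
    have : 0 < (u+t)^2+y^2 := by positivity
    field_simp
    ring
  · have e0 : s*(E-L) = u + -s * (∫ v, (v-x)*k v ∂ν) - ∫ v, h v ∂ν := by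
      rw [← eL, hE, hu]; ring
    have e0' : u = ∫ v, u * (h v * h v) ∂ν := by
      rw [integral_const_mul, eh2, mul_one]
    have e00 : s*(E-L) = (∫ v, u * (h v * h v) ∂ν) + -s * (∫ v, (v-x)*k v ∂ν) - ∫ v, h v ∂ν := by
      rw [← e0']; exact e0
    rw [e00, ← integral_const_mul, ← integral_const_mul, ← integral_const_mul,
      ← integral_add (ih2.const_mul _) (ivk.const_mul _),
      ← integral_sub (f := fun v => u * (h v * h v) + -s * ((v-x)*k v))
        ((ih2.const_mul _).add (ivk.const_mul _)) ih,
      ← integral_add (ikh.const_mul _) (ikh2.const_mul _)]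
    apply integral_congr_ae
    filter_upwards [h1] with v hv
    have ht : 0 < s*(ζ-v) := by linarith
    simp only [hk, hh]
    have e1 : (v-x)^2 = (u + s*(ζ-v))^2 := by
      rw [hu]
      calc (v-x)^2 = s^2*(v-x)^2 := by rw [hs, one_mul]
        _ = _ := by ring
    have e2 : -s*((v-x)*((v-x)^2+y^2)⁻¹) = (u + s*(ζ-v)) * ((v-x)^2+y^2)⁻¹ := by
      rw [hu]; ring
    rw [e2, e1]
    set t := s*(ζ-v)
    have : 0 < (u+t)^2+y^2 := by positivity
    field_simp
    ring
  · intro hx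
    rw [← integral_const_mul]
    apply integral_mono_ae (ikh2.const_mul _) ikh
    filter_upwards [hx, h1, hpos] with v a b c
    have hth : s*(ζ-v) * h v = 1 := by
      simp only [hh]; apply mul_inv_cancel₀; linarith
    have : -u * h v ≤ 1 := by
      rw [← hth]; gcongr
      rw [hu]; linarith
    calc -u * (k v * h v * h v) = (k v * h v) * (-u * h v) := by ring
      _ ≤ (k v * h v) * 1 := by
        have := kpos v
        gcongr
      _ = _ := mul_one _

lemma bulk_bound (ν : Measure ℝ) [IsProbabilityMeasure ν] {a b ϖ : ℝ} (hϖ : 0 < ϖ)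
    (hedge : ∀ x ∈ Set.Icc a b,
      ENNReal.ofReal (1 + ϖ) ≤ ∫⁻ v, (ENNReal.ofReal ((v - x) ^ 2))⁻¹ ∂ν) :
    ∃ y0 : ℝ, 0 < y0 ∧ ∀ x ∈ Set.Icc a b, ∀ y : ℝ, 0 < y →
      ∫ v, ((v-x)^2+y^2)⁻¹ ∂ν ≤ 1 → y0 ≤ y := by
  by_contra hcon
  push Not at hcon
  have hc : ∀ n : ℕ, ∃ p : ℝ × ℝ, p.1 ∈ Set.Icc a b ∧ 0 < p.2 ∧ 
      ∫ v, ((v-p.1)^2+p.2^2)⁻¹ ∂ν ≤ 1 ∧ p.2 < 1/((n:ℝ)+1) := fun n => by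
    obtain ⟨x, hx, y, hy, h1, h2⟩ := hcon (1/((n:ℝ)+1)) (by positivity)
    exact ⟨(x,y), hx, hy, h1, h2⟩
  choose p hp1 hp2 hp3 hp4 using hc
  obtain ⟨x0, hx0, φ, hφ, hlim⟩ := isCompact_Icc.tendsto_subseq hp1
  have hy : Tendsto (fun n => (p n).2) atTop (nhds 0) :=
    squeeze_zero (fun n => (hp2 n).le) (fun n => (hp4 n).le) tendsto_one_div_add_atTop_nhds_zero_nat
  have hy' := hy.comp hφ.tendsto_atTop
  have key := lintegral_liminf_le (μ := ν) (u := (atTop : Filter ℕ))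
    (f := fun n v => (ENNReal.ofReal ((v - (p (φ n)).1)^2 + (p (φ n)).2^2))⁻¹)
    (fun n => by fun_prop)
  have e1 : ∀ v, liminf (fun n => (ENNReal.ofReal ((v - (p (φ n)).1)^2 + (p (φ n)).2^2))⁻¹) atTop
      = (ENNReal.ofReal ((v - x0)^2))⁻¹ := fun v => by
    apply Tendsto.liminf_eq
    apply tendsto_inv_iff.2
    apply (ENNReal.continuous_ofReal.tendsto _).comp
    have := ((tendsto_const_nhds (x := v)).sub hlim).pow 2 |>.add (hy'.pow 2)
    simpa using this
  simp only [e1] at key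
  have e2 : ∀ n, ∫⁻ v, (ENNReal.ofReal ((v - (p (φ n)).1)^2 + (p (φ n)).2^2))⁻¹ ∂ν ≤ 1 := fun n => by
    have hpos := hp2 (φ n)
    have i1 : Integrable (fun v => ((v - (p (φ n)).1)^2 + (p (φ n)).2^2)⁻¹) ν := by
      refine Integrable.of_bound (by fun_prop) (((p (φ n)).2^2)⁻¹) (ae_of_all _ fun v => ?_)
      rw [Real.norm_of_nonneg (by positivity)]
      gcongr; nlinarith [sq_nonneg (v - (p (φ n)).1)]
    have := ofReal_integral_eq_lintegral_ofReal i1 (ae_of_all _ fun v => by positivity)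
    have e3 : ∀ v, ENNReal.ofReal (((v - (p (φ n)).1)^2 + (p (φ n)).2^2)⁻¹) =
        (ENNReal.ofReal ((v - (p (φ n)).1)^2 + (p (φ n)).2^2))⁻¹ := fun v =>
      ENNReal.ofReal_inv_of_pos (by positivity)
    simp only [e3] at this
    rw [← this]
    exact ENNReal.ofReal_le_one.2 (hp3 _)
  have e4 : liminf (fun n => ∫⁻ v, (ENNReal.ofReal ((v - (p (φ n)).1)^2 + (p (φ n)).2^2))⁻¹ ∂ν) atTop ≤ 1 := by
    calc _ ≤ liminf (fun n : ℕ => (1:ENNReal)) atTop := liminf_le_liminf (Eventually.of_forall e2)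
      _ = 1 := by simp
  have := (hedge x0 hx0).trans (key.trans e4)
  rw [ENNReal.ofReal_le_one] at this
  linarith

lemma fin_in {τ y S M c I : ℝ} (hτ : 0 ≤ τ) (hy : 0 < y) (hc : 0 < c) (hc1 : c ≤ 1) (hM : 1 ≤ M)
    (hcS : c ≤ S) (hS : S ≤ 1) (hI : I = y*S) (h1 : y^2 ≤ M*τ) (h2 : τ ≤ M^2*y^2) :
    (M/c+1)⁻¹ * √τ ≤ I ∧ I ≤ (M/c+1)*√τ := by
  have hMc : M ≤ M/c := by rw [le_div_iff₀ hc]; nlinarith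
  have hCpos : 0 < M/c+1 := by positivity
  have s1 : √τ ≤ M*y := Real.sqrt_le_iff.2 ⟨by positivity, by linarith [mul_pow M y 2]⟩
  have s2 : y ≤ M*√τ := by
    refine abs_le_of_sq_le_sq' ?_ (by positivity) |>.2
    rw [mul_pow, Real.sq_sqrt hτ]
    refine h1.trans ?_
    gcongr; nlinarith
  have hIy : I ≤ y := by rw [hI]; nlinarith
  constructor
  · rw [inv_mul_le_iff₀ hCpos]
    have : M*y = (M/c)*(y*c) := by field_simp
    have : (M/c)*(y*c) ≤ (M/c)*I := by rw [hI]; gcongr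
    have : 0 ≤ I := by rw [hI]; have : 0 ≤ S := by linarith
                       positivity
    linarith
  · have : M*√τ ≤ (M/c+1)*√τ := by gcongr; linarith
    linarith

lemma fin_out {τ y S M c I A η : ℝ} (hτ : 0 < τ) (hy : 0 < y) (hc : 0 < c) (hc1 : c ≤ 1) (hM : 1 ≤ M)
    (hcS : c ≤ S) (hS : S ≤ 1) (hI : I = y*S) (hη : η = y*A) (hA : 0 < A)
    (h1 : τ ≤ M^2*A^2) (h2 : A^2 ≤ M^2*τ) :
    (M/c+1)⁻¹ * (η/√τ) ≤ I ∧ I ≤ (M/c+1)*(η/√τ) := by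
  have hMc : M ≤ M/c := by rw [le_div_iff₀ hc]; nlinarith
  have hCpos : 0 < M/c+1 := by positivity
  have hsτ : 0 < √τ := Real.sqrt_pos.2 hτ
  have s1 : √τ ≤ M*A := Real.sqrt_le_iff.2 ⟨by positivity, by linarith [mul_pow M A 2]⟩
  have s2 : A ≤ M*√τ := by
    refine abs_le_of_sq_le_sq' ?_ (by positivity) |>.2
    rw [mul_pow, Real.sq_sqrt hτ.le]
    exact h2
  have hIy : I ≤ y := by rw [hI]; nlinarith
  have t1 : η/√τ ≤ M*y := by
    rw [div_le_iff₀ hsτ, hη]; nlinarith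
  have t2 : y ≤ M*(η/√τ) := by
    rw [← mul_div_assoc, le_div_iff₀ hsτ, hη]; nlinarith
  constructor
  · rw [inv_mul_le_iff₀ hCpos]
    have : M*y = (M/c)*(y*c) := by field_simp
    have : (M/c)*(y*c) ≤ (M/c)*I := by rw [hI]; gcongr
    have : 0 ≤ I := by rw [hI]; have : 0 ≤ S := by linarith
                       positivity
    linarith
  · have : 0 ≤ η/√τ := by rw [hη]; positivity
    have : M*(η/√τ) ≤ (M/c+1)*(η/√τ) := by gcongr; linarith
    linarith

lemma stieltjes_parts (ν : Measure ℝ) [IsProbabilityMeasure ν] {w M : ℂ} {x y : ℝ} (hx : w.re = x)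
    (hyw : w.im = y) (hy : 0 < y) (h : M = ∫ v : ℝ, ((v:ℂ) - w)⁻¹ ∂ν) :
    M.re = ∫ v, (v-x)*((v-x)^2+y^2)⁻¹ ∂ν ∧ M.im = y * ∫ v, ((v-x)^2+y^2)⁻¹ ∂ν := by
  have hn : ∀ v : ℝ, Complex.normSq ((v:ℂ)-w) = (v-x)^2+y^2 := fun v => by
    rw [Complex.normSq_apply]; simp [hx, hyw]; ring
  have hi : Integrable (fun v : ℝ => ((v:ℂ)-w)⁻¹) ν := by
    refine Integrable.of_bound (by fun_prop) y⁻¹ (ae_of_all _ fun v => ?_)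
    rw [norm_inv]
    gcongr
    have := Complex.abs_im_le_norm ((v:ℂ)-w)
    simp [hyw, abs_of_pos hy] at this
    exact this
  constructor
  · rw [h, ← Complex.reCLM_apply, ← ContinuousLinearMap.integral_comp_comm _ hi]
    congr 1; ext v
    rw [Complex.reCLM_apply, Complex.inv_re, hn]
    simp [hx, div_eq_mul_inv]
  · rw [h, ← Complex.imCLM_apply, ← ContinuousLinearMap.integral_comp_comm _ hi, ← integral_const_mul]
    congr 1; ext v
    rw [Complex.imCLM_apply, Complex.inv_im, hn]
    simp [hyw, div_eq_mul_inv]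

lemma parts_bound (ν : Measure ℝ) [IsProbabilityMeasure ν] {x y : ℝ} (hy : 0 < y)
    (hS : ∫ v, ((v-x)^2+y^2)⁻¹ ∂ν ≤ 1) :
    |∫ v, (v-x)*((v-x)^2+y^2)⁻¹ ∂ν| ≤ 1 ∧ y * ∫ v, ((v-x)^2+y^2)⁻¹ ∂ν ≤ 1 := by
  have i1 : Integrable (fun v => ((v - x)^2 + y^2)⁻¹) ν := by
    refine Integrable.of_bound (by fun_prop) ((y^2)⁻¹) (ae_of_all _ fun v => ?_)
    rw [Real.norm_of_nonneg (by positivity)]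
    gcongr; nlinarith [sq_nonneg (v - x)]
  have i2 : Integrable (fun v => (((v - x)^2 + y^2)⁻¹ + 1)/2) ν :=
    (i1.add (integrable_const _)).div_const _
  have e2 : ∫ v, (((v - x)^2 + y^2)⁻¹ + 1)/2 ∂ν ≤ 1 := by
    rw [integral_div, integral_add i1 (integrable_const _)]
    simp; linarith
  constructor
  · refine le_trans (norm_integral_le_of_norm_le (f := fun v => (v-x)*((v-x)^2+y^2)⁻¹) i2 (ae_of_all _ fun v => ?_)) e2
    have hp : 0 < (v-x)^2+y^2 := by positivity
    rw [Real.norm_eq_abs, abs_mul, abs_of_pos (inv_pos.2 hp), ← div_eq_mul_inv,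
      div_le_iff₀ hp]
    have : (((v - x)^2 + y^2)⁻¹ + 1)/2 * ((v-x)^2+y^2) = (1 + ((v-x)^2+y^2))/2 := by field_simp
    rw [this]
    nlinarith [sq_abs (v-x), sq_nonneg (|v-x|-1), sq_nonneg y]
  · rw [← integral_const_mul]
    refine le_trans (integral_mono (i1.const_mul _) i2 fun v => ?_) e2
    have hp : 0 < (v-x)^2+y^2 := by positivity
    simp only
    rw [← div_eq_mul_inv, div_le_iff₀ hp]
    have : (((v - x)^2 + y^2)⁻¹ + 1)/2 * ((v-x)^2+y^2) = (1 + ((v-x)^2+y^2))/2 := by field_simp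
    rw [this]
    nlinarith [sq_nonneg (y-1), sq_nonneg (v-x)]

set_option maxHeartbeats 2000000 in

/-- Under the standing assumptions there is `C > 1` such that for all
`z = E + iη ∈ D′`: if `E ∈ [L−, L+]` then `C⁻¹ √(κ_E + η) ≤ Im m(z) ≤ C √(κ_E + η)`,
while if `E ∉ [L−, L+]` then `C⁻¹ η/√(κ_E + η) ≤ Im m(z) ≤ C η/√(κ_E + η)`. -/
theorem stmt_8 (ν : Measure ℝ) [IsProbabilityMeasure ν]
    -- `[a,b]` is the smallest closed interval containing `supp ν`
    (a b : ℝ) (hab : a ≤ b)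
    (hsupp : ν (Set.Icc a b)ᶜ = 0)
    (hmin : ∀ a' b' : ℝ, ν (Set.Icc a' b')ᶜ = 0 → Set.Icc a b ⊆ Set.Icc a' b')
    -- `ν` is centered
    (hcent : ∫ v, v ∂ν = 0)
    -- edge assumption: `∫ dν(v)/(v − x)² ≥ 1 + ϖ` on `[a,b]` (value possibly `+∞`)
    (ϖ : ℝ) (hϖ : 0 < ϖ)
    (hedge : ∀ x ∈ Set.Icc a b,
      ENNReal.ofReal (1 + ϖ) ≤ ∫⁻ v, (ENNReal.ofReal ((v - x) ^ 2))⁻¹ ∂ν)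
    -- `m` is the Stieltjes transform of the deformed semicircle law
    (m : ℂ → ℂ)
    (hholo : DifferentiableOn ℂ m {z : ℂ | 0 < z.im})
    (him : ∀ z : ℂ, 0 < z.im → 0 ≤ (m z).im)
    (heq : ∀ z : ℂ, 0 < z.im → m z = ∫ v : ℝ, ((v : ℂ) - z - m z)⁻¹ ∂ν)
    (hbdd : ∀ E : ℝ, IsBoundedUnder (· ≤ ·) (nhdsWithin (0:ℝ) (Set.Ioi 0))
      (fun η : ℝ => (m (E + η * Complex.I)).im))
    -- `ζ− < ζ+` are the two real solutions of `∫ dν(v)/(v − ζ)² = 1`, outside `[a,b]`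
    (ζm ζp : ℝ) (hζζ : ζm < ζp)
    (hζm_out : ζm < a) (hζp_out : b < ζp)
    (hζm : ∫ v, ((v - ζm) ^ 2)⁻¹ ∂ν = 1)
    (hζp : ∫ v, ((v - ζp) ^ 2)⁻¹ ∂ν = 1)
    -- `L± := ζ± − ∫ dν(v)/(v − ζ±)` are the edges of the support of `ρ_fc`
    (Lm Lp : ℝ)
    (hLm : Lm = ζm - ∫ v, (v - ζm)⁻¹ ∂ν)
    (hLp : Lp = ζp - ∫ v, (v - ζp)⁻¹ ∂ν) :
    ∃ C : ℝ, 1 < C ∧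
      ∀ z : ℂ, |z.re| ≤ 1 + max |Lm| Lp → 0 < z.im → z.im ≤ 3 →
        (z.re ∈ Set.Icc Lm Lp →
          C⁻¹ * Real.sqrt (min |z.re - Lm| |z.re - Lp| + z.im) ≤ (m z).im ∧
          (m z).im ≤ C * Real.sqrt (min |z.re - Lm| |z.re - Lp| + z.im)) ∧
        (z.re ∉ Set.Icc Lm Lp →
          C⁻¹ * (z.im / Real.sqrt (min |z.re - Lm| |z.re - Lp| + z.im)) ≤ (m z).im ∧
          (m z).im ≤ C * (z.im / Real.sqrt (min |z.re - Lm| |z.re - Lp| + z.im))) := by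
  have hsm : ∀ᵐ v ∂ν, v ∈ Set.Icc a b := by
    rw [ae_iff]; exact hsupp
  obtain ⟨y0, hy0, hbulk⟩ := bulk_bound ν hϖ hedge
  -- Lm < Lp
  have hLL : Lm ≤ Lp := by
    have i1 : Integrable (fun v => (v - ζm)⁻¹) ν := by
      refine Integrable.of_bound (by fun_prop) ((a-ζm)⁻¹) ?_
      filter_upwards [hsm] with v hv
      have h1 : a - ζm ≤ v - ζm := by linarith [hv.1]
      have h0 : 0 < a - ζm := by linarith
      rw [norm_inv, Real.norm_of_nonneg (by linarith)]
      gcongr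
    have h1 : ∫ v, (v - ζp)⁻¹ ∂ν ≤ 0 := by
      apply integral_nonpos_of_ae
      filter_upwards [hsm] with v hv
      exact inv_nonpos.2 (by linarith [hv.2])
    have h1' : 0 ≤ ∫ v, (v - ζm)⁻¹ ∂ν := by
      apply integral_nonneg_of_ae
      filter_upwards [hsm] with v hv
      exact inv_nonneg.2 (by linarith [hv.1])
    linarith
  set E0 := 1 + max |Lm| Lp with hE0
  have hE0p : 0 < E0 := by
    have : |Lm| ≤ max |Lm| Lp := le_max_left _ _
    have := abs_nonneg Lm
    linarith
  set R := |a| + |b| + |ζm| + |ζp| + E0 + 5 with hR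
  have ha := abs_nonneg a
  have hb := abs_nonneg b
  have hzm := abs_nonneg ζm
  have hzp := abs_nonneg ζp
  have hR1 : 1 ≤ R := by linarith
  have hR0 : 0 < R := by linarith
  set δ := min (a - ζm) (ζp - b) with hδd
  have hδ : 0 < δ := lt_min (by linarith) (by linarith)
  have hδ1 : δ ≤ a - ζm := min_le_left _ _
  have hδ2 : δ ≤ ζp - b := min_le_right _ _
  set K := 1 + δ⁻¹ + δ⁻¹^2 + R with hK
  have hδi : 0 < δ⁻¹ := inv_pos.2 hδ
  have hδi2 : 0 < δ⁻¹^2 := by positivity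
  have hK1 : 1 ≤ K := by linarith
  set c := R⁻¹^4 with hcd
  have hRi : R⁻¹ ≤ 1 := inv_le_one_of_one_le₀ hR1
  have hRi0 : 0 < R⁻¹ := inv_pos.2 hR0
  have hc : 0 < c := by positivity
  have hc1 : c ≤ 1 := pow_le_one₀ hRi0.le hRi
  have hc3 : c ≤ R⁻¹^3 := pow_le_pow_of_le_one hRi0.le hRi (by norm_num)
  have hc2 : c ≤ R⁻¹^2 := pow_le_pow_of_le_one hRi0.le hRi (by norm_num)
  obtain ⟨M, hM1, hM⟩ := alg_c hc hK1 (hc1.trans hK1)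
  set M' := M + K^2/y0^2 with hM'
  have hp : 0 ≤ K^2/y0^2 := by positivity
  have hMM : M ≤ M' := by linarith
  have hM'1 : 1 ≤ M' := by linarith
  refine ⟨M'/c+1, by have : 0 < M'/c := by positivity
                     linarith, ?_⟩
  intro z hzre hzim hzim3
  set w := z + m z with hw
  obtain ⟨x, hx⟩ : ∃ x, w.re = x := ⟨_, rfl⟩
  obtain ⟨y, hyw⟩ : ∃ y, w.im = y := ⟨_, rfl⟩
  have hx' : z.re + (m z).re = x := by rw [← hx, hw, Complex.add_re]
  have hy' : z.im + (m z).im = y := by rw [← hyw, hw, Complex.add_im]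
  have hy : 0 < y := by have := him z hzim; linarith
  have hmw : m z = ∫ v : ℝ, ((v:ℂ) - w)⁻¹ ∂ν := by
    have := heq z hzim
    simp only [sub_sub] at this
    exact this
  obtain ⟨hre, himm⟩ := stieltjes_parts ν hx hyw hy hmw
  obtain ⟨S, hSd⟩ : ∃ S, S = ∫ v, ((v-x)^2+y^2)⁻¹ ∂ν := ⟨_, rfl⟩
  rw [← hSd] at himm
  have hηA : z.im = y * (1 - S) := by linarith
  have hA : 0 < 1 - S := (mul_pos_iff_of_pos_left hy).1 (by rw [← hηA]; exact hzim)
  have hS1 : ∫ v, ((v-x)^2+y^2)⁻¹ ∂ν ≤ 1 := by rw [← hSd]; linarith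
  obtain ⟨hb1, hb2⟩ := parts_bound ν hy hS1
  rw [← hre] at hb1
  rw [← hSd, ← himm] at hb2
  have hxa : |x| ≤ E0 + 1 := by
    rw [← hx']; exact (abs_add_le _ _).trans (by linarith)
  have hy4 : y ≤ 4 := by linarith
  obtain ⟨hx1, hx2⟩ := abs_le.1 hxa
  have bnd : ∀ t : ℝ, |t| ≤ |a| + |b| + |ζm| + |ζp| → (t-x)^2+y^2 ≤ R^2 := fun t ht => by
    have h1 : |t - x| ≤ R - 4 := (abs_sub _ _).trans (by linarith)
    have h2 : (t-x)^2 ≤ (R-4)^2 := by rw [← sq_abs]; gcongr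
    have h3 : y^2 ≤ 4^2 := by gcongr
    have h4 : (R-4)^2 + 4^2 = R^2 - 8*(R-4) := by ring
    linarith
  have hvab : ∀ᵐ v ∂ν, |v| ≤ |a| + |b| := by
    filter_upwards [hsm] with v hv
    rw [abs_le]; constructor
    · linarith [hv.1, neg_abs_le a]
    · linarith [hv.2, le_abs_self b]
  have hbv : ∀ᵐ v ∂ν, (v-x)^2+y^2 ≤ R^2 := by
    filter_upwards [hvab] with v hv
    exact bnd v (by linarith)
  have hSc : c ≤ S := by
    have i1 : Integrable (fun v => ((v - x)^2 + y^2)⁻¹) ν := by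
      refine Integrable.of_bound (by fun_prop) ((y^2)⁻¹) (ae_of_all _ fun v => ?_)
      rw [Real.norm_of_nonneg (by positivity)]
      gcongr; linarith [sq_nonneg (v - x)]
    have : ∫ v, R⁻¹^2 ∂ν ≤ S := by
      rw [hSd]
      apply integral_mono_ae (integrable_const _) i1
      filter_upwards [hbv] with v hv
      rw [inv_pow]; gcongr
    simp only [integral_const, probReal_univ, one_smul] at this
    linarith
  have hE : z.re = x - ∫ v, (v-x)*((v-x)^2+y^2)⁻¹ ∂ν := by rw [← hre]; linarith
  have edge : ∀ s ζ L : ℝ, s^2 = 1 → |ζ| ≤ |ζm| + |ζp| → (∀ᵐ v ∂ν, δ ≤ s*(ζ-v)) →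
      ∫ v, ((v - ζ) ^ 2)⁻¹ ∂ν = 1 → L = ζ - ∫ v, (v - ζ)⁻¹ ∂ν →
      (y^2 ≤ M * (|z.re - L| + z.im)) ∧ (|z.re-L| + z.im ≤ M * ((x-ζ)^2+y^2)) ∧
      (0 ≤ s*(z.re-L) → (x-ζ)^2+y^2 ≤ M * (|z.re-L|+z.im) ∧ (x-ζ)^2+y^2 ≤ M * (1-S)^2 ∧
        (1-S)^2 ≤ M * ((x-ζ)^2+y^2)) ∧
      (s*(z.re-L) ≤ 0 → (a ≤ x → x ≤ b → False) → (∀ᵐ v ∂ν, 0 ≤ s*(x-v)) → 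
        (x-ζ)^2+y^2 ≤ M * y^2) := by
    intro s ζ L hs hζb hsd hζ1 hL
    have hsabs : |s| = 1 := by
      rcases (sq_eq_sq_iff_eq_or_eq_neg (b := (1:ℝ))).1 (by rw [hs, one_pow]) with h | h <;> simp [h]
    have hsR : ∀ᵐ v ∂ν, s*(ζ-v) ≤ R := by
      filter_upwards [hvab] with v hv
      refine (le_abs_self _).trans ?_
      rw [abs_mul, hsabs, one_mul]
      exact (abs_sub _ _).trans (by linarith)
    obtain ⟨q, g, q1, q2, g1, g2, hAe, hee, hxx⟩ :=
      edge_int ν hs hδ hR0 hy hsd hsR hbv hζ1 hS1 hL hE rfl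
    have hu2 : (s*(x-ζ))^2 = (x-ζ)^2 := by rw [mul_pow, hs, one_mul]
    rw [← hSd] at hAe
    have hDK : (s*(x-ζ))^2 + y^2 ≤ K^2 := by
      rw [hu2]
      have := bnd ζ (by linarith)
      have : R^2 ≤ K^2 := by gcongr; linarith
      have e : (x-ζ)^2 = (ζ-x)^2 := by ring
      linarith
    have eabs : |s*(z.re-L)| = |z.re-L| := by rw [abs_mul, hsabs, one_mul]
    obtain ⟨r1, r2, r3, r4, r5⟩ := hM (s*(x-ζ)) y q g (s*(z.re-L)) z.im (1-S) hy (hc3.trans q1) g1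
      (by linarith) (by linarith) hDK hAe hA hee hηA
    rw [eabs] at r1 r2 r3
    rw [hu2] at r2 r3 r4 r5
    refine ⟨r1, r2, r3, ?_⟩
    intro he0 _ hxv
    rcases le_total 0 (s*(x-ζ)) with h | h
    · exact r4 he0 h
    · exact r5 h (hxx hxv)
  obtain ⟨p1, p2, p3, p4⟩ := edge 1 ζp Lp (by norm_num) (by linarith) (by
    filter_upwards [hsm] with v hv
    linarith [hv.2]) hζp hLp
  obtain ⟨n1, n2, n3, n4⟩ := edge (-1) ζm Lm (by norm_num) (by linarith) (by
    filter_upwards [hsm] with v hv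
    linarith [hv.1]) hζm hLm
  have hτ0 : 0 < min |z.re - Lm| |z.re - Lp| + z.im := by
    have : 0 ≤ min |z.re - Lm| |z.re - Lp| := le_min (abs_nonneg _) (abs_nonneg _)
    linarith
  have hcl := min_le_left |z.re - Lm| |z.re - Lp|
  have hcr := min_le_right |z.re - Lm| |z.re - Lp|
  have hM2 : M^2 ≤ M'^2 := by gcongr
  constructor
  · rintro ⟨hE1, hE2⟩
    refine fin_in hτ0.le hy hc hc1 hM'1 hSc (by linarith) himm ?_ ?_
    · have : y^2 ≤ M * (min |z.re - Lm| |z.re - Lp| + z.im) := by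
        rcases min_choice |z.re - Lm| |z.re - Lp| with h | h <;> rw [h] <;> assumption
      refine this.trans ?_
      gcongr
    · have fin : ∀ ζ L : ℝ, min |z.re - Lm| |z.re - Lp| ≤ |z.re - L| →
          |z.re-L| + z.im ≤ M * ((x-ζ)^2+y^2) → (x-ζ)^2+y^2 ≤ M' * y^2 →
          min |z.re - Lm| |z.re - Lp| + z.im ≤ M'^2*y^2 := by
        intro ζ L k1 k2 k3
        calc min |z.re - Lm| |z.re - Lp| + z.im ≤ M * ((x-ζ)^2+y^2) := by linarith
          _ ≤ M' * (M' * y^2) := by gcongr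
          _ = _ := by ring
      have hMy : M * y^2 ≤ M' * y^2 := by gcongr
      rcases lt_or_ge b x with hbx | hbx
      · refine fin ζp Lp hcr p2 ((p4 (by linarith) (fun _ h => by linarith) ?_).trans hMy)
        filter_upwards [hsm] with v hv
        linarith [hv.2]
      · rcases lt_or_ge x a with hax | hax
        · refine fin ζm Lm hcl n2 ((n4 (by linarith) (fun h _ => by linarith) ?_).trans hMy)
          filter_upwards [hsm] with v hv
          linarith [hv.1]
        · have hyy := hbulk x ⟨hax, hbx⟩ y hy hS1
          refine fin ζp Lp hcr p2 ?_
          have k1 := bnd ζp (by linarith)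
          have k2 : R^2 ≤ K^2 := by gcongr; linarith
          have k3 : K^2 ≤ K^2/y0^2*y^2 := by
            rw [div_mul_eq_mul_div, le_div_iff₀ (by positivity)]
            gcongr
          have k4 : 0 ≤ M * y^2 := by positivity
          rw [hM', add_mul]
          have e : (x-ζp)^2 = (ζp-x)^2 := by ring
          linarith
  · intro hEn
    have fin : ∀ ζ L : ℝ, min |z.re - Lm| |z.re - Lp| = |z.re - L| →
          |z.re-L| + z.im ≤ M * ((x-ζ)^2+y^2) → 
          ((x-ζ)^2+y^2 ≤ M * (|z.re-L|+z.im) ∧ (x-ζ)^2+y^2 ≤ M * (1-S)^2 ∧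
            (1-S)^2 ≤ M * ((x-ζ)^2+y^2)) → 
          min |z.re - Lm| |z.re - Lp| + z.im ≤ M'^2*(1-S)^2 ∧ 
          (1-S)^2 ≤ M'^2*(min |z.re - Lm| |z.re - Lp| + z.im) := by
      rintro ζ L k1 k2 ⟨k3, k4, k5⟩
      rw [k1] at hτ0 ⊢
      constructor
      · calc |z.re - L| + z.im ≤ M * ((x-ζ)^2+y^2) := k2
          _ ≤ M * (M * (1-S)^2) := by gcongr
          _ = M^2 * (1-S)^2 := by ring
          _ ≤ _ := by gcongr
      · calc (1-S)^2 ≤ M * ((x-ζ)^2+y^2) := k5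
          _ ≤ M * (M * (|z.re - L| + z.im)) := by gcongr
          _ = M^2 * (|z.re - L| + z.im) := by ring
          _ ≤ _ := by gcongr
    have key : min |z.re - Lm| |z.re - Lp| + z.im ≤ M'^2*(1-S)^2 ∧ 
          (1-S)^2 ≤ M'^2*(min |z.re - Lm| |z.re - Lp| + z.im) := by
      rcases lt_or_ge z.re Lm with h | h
      · refine fin ζm Lm (min_eq_left ?_) n2 (n3 (by linarith))
        rw [abs_of_nonpos (by linarith), abs_of_nonpos (by linarith)]; linarith
      · have h' : Lp < z.re := by
          by_contra hh
          exact hEn ⟨h, not_lt.1 hh⟩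
        refine fin ζp Lp (min_eq_right ?_) p2 (p3 (by linarith))
        rw [abs_of_nonneg (by linarith), abs_of_nonneg (by linarith)]; linarith
    exact fin_out hτ0 hy hc hc1 hM'1 hSc (by linarith) himm hηA hA key.1 key.2
end

section
/- Under the standing assumptions on ν and on the solution m of the functional equation, there exist r > 0, a constant c₊ > 0, and functions B, C analytic on the complex disc {|w| < r}, real-valued on the reals, with B(0) = 0, c₊ + B(x) > 0 and C(x) < 0 for all real x ∈ (−r, r), such that for every E ∈ ℝ with |E − L+| < r the limits lim_{η↓0} Im m(E+iη) and lim_{η↓0} Re m(E+iη) exist and: if E ≤ L+, then lim_{η↓0} Im m(E+iη) = √(L+ − E) · (c₊ + B(−(L+ − E))) and lim_{η↓0} Re m(E+iη) = C(−(L+ − E)); if E ≥ L+, then lim_{η↓0} Im m(E+iη) = 0 and lim_{η↓0} Re m(E+iη) = √(E − L+) · (c₊ + B(E − L+)) + C(E − L+). -/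
open MeasureTheory Filter
open scoped ComplexConjugate

lemma sub_ne (ζ : ℂ) (h : 0 < ζ.im) (v : ℝ) : (v:ℂ) - ζ ≠ 0 := by
  intro h0
  have := congrArg Complex.im h0
  simp at this
  linarith

lemma norm_ge (ζ : ℂ) (h : 0 < ζ.im) (v : ℝ) : ζ.im ≤ ‖(v:ℂ) - ζ‖ := by
  have := Complex.abs_im_le_norm ((v:ℂ) - ζ)
  simp at this
  exact (le_abs_self _).trans this

lemma norm_inv_le (ζ : ℂ) (h : 0 < ζ.im) (v : ℝ) : ‖((v:ℂ) - ζ)⁻¹‖ ≤ ζ.im⁻¹ := by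
  rw [norm_inv]
  exact inv_anti₀ h (norm_ge ζ h v)

lemma int1 (ν : Measure ℝ) [IsProbabilityMeasure ν] (ζ : ℂ) (h : 0 < ζ.im) :
    Integrable (fun v : ℝ => ((v:ℂ) - ζ)⁻¹) ν := by
  refine Integrable.of_bound (C := ζ.im⁻¹) ?_ (ae_of_all _ (norm_inv_le ζ h))
  exact (Measurable.inv (by fun_prop)).aestronglyMeasurable

lemma int2 (ν : Measure ℝ) [IsProbabilityMeasure ν] (ζ : ℂ) (h : 0 < ζ.im) :
    Integrable (fun v : ℝ => ‖((v:ℂ) - ζ)⁻¹‖^2) ν := by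
  refine Integrable.of_bound (C := ζ.im⁻¹^2) ?_ (ae_of_all _ fun v => ?_)
  · exact (((Measurable.inv (by fun_prop)).norm).pow_const 2).aestronglyMeasurable
  · rw [Real.norm_of_nonneg (by positivity)]
    gcongr
    exact norm_inv_le ζ h v

lemma lt1 (ν : Measure ℝ) [IsProbabilityMeasure ν] (z ζ : ℂ) (hz : 0 < z.im) (h : 0 < ζ.im)
    (e : ζ - ∫ v : ℝ, ((v:ℂ) - ζ)⁻¹ ∂ν = z) : ∫ v : ℝ, ‖((v:ℂ) - ζ)⁻¹‖^2 ∂ν < 1 := by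
  have h1 : (∫ v : ℝ, ((v:ℂ) - ζ)⁻¹ ∂ν).im = ζ.im * ∫ v : ℝ, ‖((v:ℂ) - ζ)⁻¹‖^2 ∂ν := by
    have := integral_im (𝕜 := ℂ) (int1 ν ζ h)
    simp only [RCLike.im_eq_complex_im] at this
    rw [← this, ← integral_const_mul]
    congr 1
    ext v
    rw [norm_inv, inv_pow, Complex.inv_im, Complex.sq_norm]
    simp
    ring
  have h2 := congrArg Complex.im e
  rw [Complex.sub_im, h1] at h2
  by_contra h3
  push Not at h3
  nlinarith

lemma uniq (ν : Measure ℝ) [IsProbabilityMeasure ν] (z ζ ξ : ℂ) (hz : 0 < z.im)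
    (h : 0 < ζ.im) (h' : 0 < ξ.im)
    (e : ζ - ∫ v : ℝ, ((v:ℂ) - ζ)⁻¹ ∂ν = z)
    (e' : ξ - ∫ v : ℝ, ((v:ℂ) - ξ)⁻¹ ∂ν = z) : ζ = ξ := by
  by_contra hne
  have k1 := lt1 ν z ζ hz h e
  have k2 := lt1 ν z ξ hz h' e'
  have h0 : ζ - ξ = (ζ - ξ) * ∫ v : ℝ, ((v:ℂ) - ζ)⁻¹ * ((v:ℂ) - ξ)⁻¹ ∂ν := by
    have : ζ - ξ = ∫ v : ℝ, (((v:ℂ) - ζ)⁻¹ - ((v:ℂ) - ξ)⁻¹) ∂ν := by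
      rw [integral_sub (int1 ν ζ h) (int1 ν ξ h')]
      linear_combination e - e'
    rw [← integral_const_mul]
    conv_lhs => rw [this]
    congr 1
    ext v
    have a1 := sub_ne ζ h v
    have a2 := sub_ne ξ h' v
    field_simp
    ring
  have h1 : ∫ v : ℝ, ((v:ℂ) - ζ)⁻¹ * ((v:ℂ) - ξ)⁻¹ ∂ν = 1 := by
    have := sub_ne_zero.2 hne
    exact mul_left_cancel₀ this (by rw [← h0, mul_one])
  have h2 : ‖∫ v : ℝ, ((v:ℂ) - ζ)⁻¹ * ((v:ℂ) - ξ)⁻¹ ∂ν‖ ≤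
      ∫ v : ℝ, (‖((v:ℂ) - ζ)⁻¹‖^2 * (1/2) + ‖((v:ℂ) - ξ)⁻¹‖^2 * (1/2)) ∂ν := by
    refine norm_integral_le_of_norm_le (((int2 ν ζ h).mul_const _).add ((int2 ν ξ h').mul_const _))
      (ae_of_all _ fun v => ?_)
    rw [norm_mul]
    nlinarith [sq_nonneg (‖((v:ℂ) - ζ)⁻¹‖ - ‖((v:ℂ) - ξ)⁻¹‖)]
  rw [h1, integral_add ((int2 ν ζ h).mul_const _) ((int2 ν ξ h').mul_const _),
    integral_mul_const, integral_mul_const, norm_one] at h2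
  linarith

lemma even_odd (h : ℂ → ℂ) (hh : AnalyticAt ℂ h 0) :
    ∃ s : ℝ, 0 < s ∧ ∃ He Ho : ℂ → ℂ, DifferentiableOn ℂ He (Metric.ball 0 (s^2)) ∧
      DifferentiableOn ℂ Ho (Metric.ball 0 (s^2)) ∧ Ho 0 = deriv h 0 ∧
      ∀ w : ℂ, ‖w‖ < s → h w = He (w^2) + w * Ho (w^2) := by
  obtain ⟨p, R, hp⟩ := hh
  obtain ⟨s', hs0', hs'⟩ := ENNReal.lt_iff_exists_nnreal_btwn.1 hp.r_pos
  obtain ⟨s, rfl⟩ : ∃ s : NNReal, s = s' := ⟨s', rfl⟩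
  have hs0 : (0:ℝ) < s := by exact_mod_cast hs0'
  have hsum : Summable fun n => ‖p.coeff n‖ * (s:ℝ)^n := by
    have := p.summable_norm_mul_pow (lt_of_lt_of_le hs' hp.r_le)
    simpa using this
  have he : Summable fun n => ‖p.coeff (2*n)‖ * (s:ℝ)^(2*n) :=
    hsum.comp_injective (i := fun n => 2*n) (fun x y hxy => by simpa using hxy)
  have ho : Summable fun n => ‖p.coeff (2*n+1)‖ * (s:ℝ)^(2*n) := by
    have : Summable fun n => ‖p.coeff (2*n+1)‖ * (s:ℝ)^(2*n+1) :=
      hsum.comp_injective (i := fun n => 2*n+1) (fun x y hxy => by simpa using hxy)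
    refine (this.mul_right (s:ℝ)⁻¹).congr fun n => ?_
    rw [pow_succ, ← mul_assoc, mul_assoc _ (s:ℝ), mul_inv_cancel₀ hs0.ne', mul_one]
  have be : ∀ (n : ℕ) (x : ℂ), x ∈ Metric.ball (0:ℂ) ((s:ℝ)^2) →
      ‖p.coeff (2*n) * x^n‖ ≤ ‖p.coeff (2*n)‖ * (s:ℝ)^(2*n) := by
    intro n x hx
    rw [norm_mul, norm_pow, pow_mul]
    simp only [Metric.mem_ball, dist_zero_right] at hx
    gcongr
  have bo : ∀ (n : ℕ) (x : ℂ), x ∈ Metric.ball (0:ℂ) ((s:ℝ)^2) →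
      ‖p.coeff (2*n+1) * x^n‖ ≤ ‖p.coeff (2*n+1)‖ * (s:ℝ)^(2*n) := by
    intro n x hx
    rw [norm_mul, norm_pow, pow_mul]
    simp only [Metric.mem_ball, dist_zero_right] at hx
    gcongr
  refine ⟨s, hs0, fun x => ∑' n, p.coeff (2*n) * x^n, fun x => ∑' n, p.coeff (2*n+1) * x^n,
    ?_, ?_, ?_, ?_⟩
  · exact Complex.differentiableOn_tsum_of_summable_norm he (fun n => by fun_prop) Metric.isOpen_ball be
  · exact Complex.differentiableOn_tsum_of_summable_norm ho (fun n => by fun_prop) Metric.isOpen_ball bo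
  · simp only
    rw [tsum_eq_single 0 (by intro n hn; simp [hn])]
    rw [hp.hasFPowerSeriesAt.deriv]
    simp
  · intro w hw
    have hw2 : w^2 ∈ Metric.ball (0:ℂ) ((s:ℝ)^2) := by
      simp only [Metric.mem_ball, dist_zero_right, norm_pow]
      gcongr
    have h1 := hp.hasSum (y := w) (by
      rw [Metric.mem_eball, edist_zero_right]
      refine lt_trans ?_ hs'
      rw [enorm_eq_nnnorm]
      exact_mod_cast hw)
    have s1 : Summable fun n => p.coeff (2*n) * (w^2)^n :=
      Summable.of_norm_bounded he (fun n => be n _ hw2)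
    have s2 : Summable fun n => p.coeff (2*n+1) * (w^2)^n :=
      Summable.of_norm_bounded ho (fun n => bo n _ hw2)
    have h2 := HasSum.even_add_odd (f := fun n => p n fun _ => w)
      (m := ∑' n, p.coeff (2*n) * (w^2)^n) (m' := w * ∑' n, p.coeff (2*n+1) * (w^2)^n) (by
        refine Eq.mpr (congrArg (fun f => HasSum f _) (funext fun n => ?_)) s1.hasSum
        rw [p.apply_eq_pow_smul_coeff, smul_eq_mul]; ring) (by
        refine Eq.mpr (congrArg (fun f => HasSum f _) (funext fun n => ?_)) (s2.hasSum.mul_left w)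
        rw [p.apply_eq_pow_smul_coeff, smul_eq_mul]; ring)
    rw [zero_add] at h1
    exact h1.unique h2

noncomputable def kk (ν : Measure ℝ) (ζp : ℝ) (ζ : ℂ) : ℂ :=
  ∫ v : ℝ, ((((v - ζp)^2)⁻¹ : ℝ) : ℂ) * (ζ - v)⁻¹ ∂ν

lemma wt_le {b ζp v : ℝ} (hb : b < ζp) (hv : v ≤ b) : ((v - ζp)^2)⁻¹ ≤ ((ζp - b)^2)⁻¹ := by
  have : 0 < ζp - b := by linarith
  apply inv_anti₀ (by positivity)
  nlinarith

lemma re_le_norm {b : ℝ} {v : ℝ} {ζ : ℂ} (hv : v ≤ b) : ζ.re - b ≤ ‖ζ - v‖ := by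
  have := Complex.re_le_norm (ζ - v)
  simp at this
  linarith

lemma kk_int (ν : Measure ℝ) [IsProbabilityMeasure ν] {b ζp : ℝ} (hv : ∀ᵐ v ∂ν, v ≤ b)
    (hb : b < ζp) (ζ : ℂ) (hζ : b < ζ.re) :
    Integrable (fun v : ℝ => ((((v - ζp)^2)⁻¹ : ℝ) : ℂ) * (ζ - v)⁻¹) ν := by
  refine Integrable.of_bound (C := ((ζp - b)^2)⁻¹ * (ζ.re - b)⁻¹) ?_ ?_
  · exact Measurable.aestronglyMeasurable (by fun_prop)
  · filter_upwards [hv] with v hv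
    rw [norm_mul, norm_inv, Complex.norm_real, Real.norm_of_nonneg (by positivity)]
    have h1 := wt_le hb hv
    have h2 := re_le_norm (ζ := ζ) hv
    have h3 : 0 < ζ.re - b := by linarith
    gcongr

lemma kk_diff (ν : Measure ℝ) [IsProbabilityMeasure ν] {b ζp : ℝ} (hv : ∀ᵐ v ∂ν, v ≤ b)
    (hb : b < ζp) (ζ : ℂ) (hζ : b < ζ.re) : DifferentiableAt ℂ (kk ν ζp) ζ := by
  set δ := (ζ.re - b)/2 with hδ
  have hδ0 : 0 < δ := by linarith
  have key : ∀ x ∈ Metric.ball ζ δ, b + δ ≤ x.re := by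
    intro x hx
    rw [Metric.mem_ball, dist_eq_norm] at hx
    have := Complex.abs_re_le_norm (x - ζ)
    rw [Complex.sub_re] at this
    have := neg_abs_le (x.re - ζ.re)
    linarith
  refine (hasDerivAt_integral_of_dominated_loc_of_deriv_le (μ := ν) (s := Metric.ball ζ δ)
    (F := fun (x : ℂ) (v : ℝ) => ((((v - ζp)^2)⁻¹ : ℝ) : ℂ) * (x - v)⁻¹)
    (F' := fun (x : ℂ) (v : ℝ) => ((((v - ζp)^2)⁻¹ : ℝ) : ℂ) * (-1 / (x - v)^2))
    (bound := fun _ => ((ζp - b)^2)⁻¹ * (1 / δ^2))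
    (Metric.ball_mem_nhds _ hδ0) ?_ (kk_int ν hv hb ζ hζ) ?_ ?_ ?_ ?_).2.differentiableAt
  · exact Eventually.of_forall fun x => Measurable.aestronglyMeasurable (by fun_prop)
  · exact Measurable.aestronglyMeasurable (by fun_prop)
  · filter_upwards [hv] with v hv x hx
    have h1 := wt_le hb hv
    have h2 := re_le_norm (ζ := x) hv
    have h3 := key x hx
    have h4 : δ ≤ ‖x - v‖ := by linarith
    rw [norm_mul, norm_div, norm_neg, norm_one, norm_pow, Complex.norm_real,
      Real.norm_of_nonneg (by positivity)]
    gcongr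
  · exact integrable_const _
  · filter_upwards [hv] with v hv x hx
    have h2 := re_le_norm (ζ := x) hv
    have h3 := key x hx
    have h4 : x - v ≠ 0 := by
      intro h0
      rw [h0, norm_zero] at h2
      linarith
    exact (((hasDerivAt_id x).sub_const (v:ℂ)).inv h4).const_mul _

lemma int_pos (ν : Measure ℝ) [IsProbabilityMeasure ν] {f : ℝ → ℝ} (hf : Integrable f ν)
    (hpos : ∀ᵐ v ∂ν, 0 < f v) : 0 < ∫ v, f v ∂ν := by
  have h0 : 0 ≤ᵐ[ν] f := hpos.mono fun v h => h.le
  refine lt_of_le_of_ne (integral_nonneg_of_ae h0) fun h => ?_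
  have h1 := (integral_eq_zero_iff_of_nonneg_ae h0 hf).1 h.symm
  obtain ⟨v, hv⟩ := (hpos.and h1).exists
  exact hv.1.ne' hv.2

lemma kk_re (ν : Measure ℝ) [IsProbabilityMeasure ν] {b ζp : ℝ} (hv : ∀ᵐ v ∂ν, v ≤ b)
    (hb : b < ζp) (ζ : ℂ) (hζ : b < ζ.re) : 0 < (kk ν ζp ζ).re := by
  have h0 := integral_re (𝕜 := ℂ) (kk_int ν hv hb ζ hζ)
  simp only [RCLike.re_eq_complex_re] at h0
  have hre := (kk_int ν hv hb ζ hζ).re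
  simp only [RCLike.re_eq_complex_re] at hre
  rw [kk, ← h0]
  have hpos : ∀ᵐ v : ℝ ∂ν, 0 < (((((v - ζp)^2)⁻¹ : ℝ) : ℂ) * (ζ - v)⁻¹).re := by
    filter_upwards [hv] with v hv
    rw [Complex.re_ofReal_mul, Complex.inv_re]
    have h1 : 0 < (ζ - v).re := by simp; linarith
    have h2 : 0 < Complex.normSq (ζ - v) := Complex.normSq_pos.2 (fun h => by simp [h] at h1)
    have h3 : v - ζp ≠ 0 := by linarith
    positivity
  exact int_pos ν hre hpos

lemma kk_conj (ν : Measure ℝ) (ζp : ℝ) (ζ : ℂ) : kk ν ζp (conj ζ) = conj (kk ν ζp ζ) := by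
  rw [kk, kk, ← integral_conj]
  congr 1
  ext v
  simp

lemma inv_int (ν : Measure ℝ) [IsProbabilityMeasure ν] {b : ℝ} (hv : ∀ᵐ v ∂ν, v ≤ b)
    (ζ : ℂ) (hζ : b < ζ.re) :
    Integrable (fun v : ℝ => ((v:ℂ) - ζ)⁻¹) ν := by
  refine Integrable.of_bound (C := (ζ.re - b)⁻¹) ?_ ?_
  · exact Measurable.aestronglyMeasurable (by fun_prop)
  · filter_upwards [hv] with v hv
    rw [norm_inv, norm_sub_rev]
    have h2 := re_le_norm (ζ := ζ) hv
    have h3 : 0 < ζ.re - b := by linarith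
    gcongr

lemma wt_int (ν : Measure ℝ) [IsProbabilityMeasure ν] {b ζp : ℝ} (hv : ∀ᵐ v ∂ν, v ≤ b)
    (hb : b < ζp) : Integrable (fun v : ℝ => ((v - ζp)^2)⁻¹) ν := by
  refine Integrable.of_bound (C := ((ζp - b)^2)⁻¹) ?_ ?_
  · exact Measurable.aestronglyMeasurable (by fun_prop)
  · filter_upwards [hv] with v hv
    rw [Real.norm_of_nonneg (by positivity)]
    exact wt_le hb hv

lemma kk_eq (ν : Measure ℝ) [IsProbabilityMeasure ν] {b ζp L : ℝ} (hv : ∀ᵐ v ∂ν, v ≤ b)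
    (hb : b < ζp) (hζp : ∫ v, ((v - ζp) ^ 2)⁻¹ ∂ν = 1)
    (hL : L = ζp - ∫ v, (v - ζp)⁻¹ ∂ν) (ζ : ℂ) (hζ : b < ζ.re) :
    ζ - ∫ v : ℝ, ((v:ℂ) - ζ)⁻¹ ∂ν = L + (ζ - ζp)^2 * kk ν ζp ζ := by
  have h1 : (ζ - ζp) * ((∫ v, ((v - ζp) ^ 2)⁻¹ ∂ν : ℝ) : ℂ) = ζ - ζp := by rw [hζp]; simp
  have h2 : (L:ℂ) = ζp - ∫ v : ℝ, ((v:ℂ) - ((ζp:ℝ):ℂ))⁻¹ ∂ν := by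
    rw [hL]; push_cast
    rw [← integral_complex_ofReal]
    simp
  have hb' : b < ((ζp:ℝ):ℂ).re := by simpa using hb
  rw [← integral_complex_ofReal] at h1
  have h3 : (∫ v : ℝ, ((v:ℂ) - ζ)⁻¹ ∂ν) - ∫ v : ℝ, ((v:ℂ) - ((ζp:ℝ):ℂ))⁻¹ ∂ν
    = (ζ - ζp) * (∫ v : ℝ, ((((v - ζp) ^ 2)⁻¹ : ℝ) : ℂ) ∂ν) - (ζ - ζp)^2 * kk ν ζp ζ := by
    have hwi : Integrable (fun v : ℝ => ((((v - ζp) ^ 2)⁻¹ : ℝ) : ℂ)) ν :=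
      Integrable.ofReal (𝕜 := ℂ) (wt_int ν hv hb)
    rw [kk, ← integral_const_mul, ← integral_const_mul,
      ← integral_sub (inv_int ν hv ζ hζ) (inv_int ν hv _ hb'),
      ← integral_sub (hwi.const_mul _)
        ((kk_int ν hv hb ζ hζ).const_mul _)]
    refine integral_congr_ae ?_
    filter_upwards [hv] with v hv
    have e1 : (v:ℂ) - ζ ≠ 0 := fun h => by have := congrArg Complex.re h; simp at this; linarith
    have e1' : ζ - v ≠ 0 := fun h => by have := congrArg Complex.re h; simp at this; linarith
    have e2 : (v:ℂ) - ζp ≠ 0 := fun h => by have := congrArg Complex.re h; simp at this; linarith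
    push_cast
    have e3 : (ζ - v)⁻¹ = - ((v:ℂ) - ζ)⁻¹ := by rw [← inv_neg]; ring_nf
    rw [e3]
    field_simp
    ring
  rw [h1] at h3
  linear_combination -h3 - h2

lemma exists_h (ν : Measure ℝ) [IsProbabilityMeasure ν] {b ζp : ℝ} (hv : ∀ᵐ v ∂ν, v ≤ b)
    (hb : b < ζp) : ∃ h : ℂ → ℂ, AnalyticAt ℂ h 0 ∧ h 0 = ζp ∧ ∃ c : ℝ, 0 < c ∧ deriv h 0 = c ∧
      ∀ᶠ w in nhds (0:ℂ), h (conj w) = conj (h w) ∧ b < (h w).re ∧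
        (h w - ζp)^2 * kk ν ζp (h w) = w^2 ∧ (0 < w.im → 0 < (h w).im) := by
  set U : Set ℂ := {ζ | b < ζ.re} with hU
  have hUo : IsOpen U := isOpen_lt continuous_const Complex.continuous_re
  have hpU : (ζp:ℂ) ∈ U := by simpa [hU] using hb
  set S : ℂ → ℂ := fun ζ => kk ν ζp ζ ^ (1/2 : ℂ) with hS
  set g : ℂ → ℂ := fun ζ => (ζ - ζp) * S ζ with hg
  have hSd : ∀ ζ ∈ U, DifferentiableAt ℂ S ζ := fun ζ hζ =>
    (kk_diff ν hv hb ζ hζ).cpow_const (Or.inl (kk_re ν hv hb ζ hζ))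
  have hgd : DifferentiableOn ℂ g U := fun ζ hζ =>
    ((differentiableAt_id.sub_const _).mul (hSd ζ hζ)).differentiableWithinAt
  have hga : AnalyticAt ℂ g ζp := hgd.analyticAt (hUo.mem_nhds hpU)
  have hg0 : g ζp = 0 := by simp [hg]
  have hgc : ∀ ζ ∈ U, g (conj ζ) = conj (g ζ) := by
    intro ζ hζ
    have h1 : (kk ν ζp ζ).arg ≠ Real.pi := by
      intro h
      have := (Complex.arg_eq_pi_iff.1 h).1
      linarith [kk_re ν hv hb ζ hζ]
    simp only [hg, hS]
    have h2 : conj (1/2 : ℂ) = 1/2 := by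
      rw [show (1/2 : ℂ) = ((1/2 : ℝ) : ℂ) by norm_num, Complex.conj_ofReal]
    rw [kk_conj, Complex.conj_cpow _ _ h1, h2, map_mul, map_sub, Complex.conj_ofReal]
  have hgsq : ∀ ζ, g ζ ^ 2 = (ζ - ζp)^2 * kk ν ζp ζ := by
    intro ζ
    simp only [hg, hS]
    rw [mul_pow, ← Complex.cpow_nat_mul]
    norm_num
  set k0 : ℝ := (kk ν ζp ζp).re with hk0
  have hk0p : 0 < k0 := kk_re ν hv hb _ hpU
  have hk0e : kk ν ζp ζp = (k0 : ℂ) := by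
    have := kk_conj ν ζp ζp
    rw [Complex.conj_ofReal] at this
    exact (Complex.conj_eq_iff_re.1 this.symm).symm
  have hderiv : deriv g ζp = ((k0 ^ (1/2 : ℝ) : ℝ) : ℂ) := by
    have := ((hasDerivAt_id (ζp:ℂ)).sub_const (ζp:ℂ)).mul (hSd _ hpU).hasDerivAt
    rw [show g = (fun x => id x - (ζp:ℂ)) * S from rfl, this.deriv]
    simp only [id, sub_self, zero_mul, add_zero, one_mul, hS]
    rw [hk0e, Complex.ofReal_cpow hk0p.le]
    norm_num
  have hdpos : 0 < k0 ^ (1/2 : ℝ) := by positivity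
  have hdne : deriv g ζp ≠ 0 := by
    rw [hderiv]; exact_mod_cast hdpos.ne'
  set h := hga.hasStrictDerivAt.localInverse _ _ _ hdne with hh
  have hha : AnalyticAt ℂ h 0 := by
    have := hga.analyticAt_localInverse hdne
    rwa [hg0] at this
  have hh0 : h 0 = ζp := by
    have : h (g ζp) = ζp := HasStrictFDerivAt.localInverse_apply_image ..
    rwa [hg0] at this
  have hr : ∀ᶠ w in nhds (0:ℂ), g (h w) = w := by
    have := HasStrictDerivAt.eventually_right_inverse hga.hasStrictDerivAt hdne
    rwa [hg0] at this
  have hl : ∀ᶠ ζ in nhds (ζp:ℂ), h (g ζ) = ζ :=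
    HasStrictDerivAt.eventually_left_inverse hga.hasStrictDerivAt hdne
  have hd : HasStrictDerivAt h (deriv g ζp)⁻¹ 0 := by
    have := hga.hasStrictDerivAt.to_localInverse hdne
    rwa [hg0] at this
  set c := (k0 ^ (1/2 : ℝ))⁻¹ with hc
  have hc0 : 0 < c := by positivity
  have hdc : (deriv g ζp)⁻¹ = (c:ℂ) := by rw [hderiv, hc]; push_cast; rfl
  rw [hdc] at hd
  have hcont : Tendsto h (nhds 0) (nhds (ζp:ℂ)) := by
    have := hha.continuousAt.tendsto
    rwa [hh0] at this
  have hconjT : Tendsto (fun ζ : ℂ => conj ζ) (nhds (ζp:ℂ)) (nhds (ζp:ℂ)) := by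
    have := (Complex.continuous_conj.tendsto (ζp:ℂ))
    rwa [Complex.conj_ofReal] at this
  have hconj : ∀ᶠ w in nhds (0:ℂ), h (conj w) = conj (h w) := by
    filter_upwards [hr, (hconjT.comp hcont).eventually hl, hcont.eventually (hUo.mem_nhds hpU)]
      with w h1 h2 h3
    simp only [Function.comp] at h2
    rw [hgc _ h3, h1] at h2
    exact h2
  have hstr := hd.hasStrictFDerivAt.isLittleO
  have hT : Tendsto (fun w : ℂ => (w, conj w)) (nhds 0) (nhds ((0:ℂ),(0:ℂ))) := by
    have : Continuous (fun w : ℂ => (w, conj w)) := by fun_prop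
    simpa using this.tendsto 0
  have hb2 := hT.eventually (hstr.def (c := c/2) (by positivity))
  refine ⟨h, hha, hh0, c, hc0, hd.hasDerivAt.deriv, ?_⟩
  filter_upwards [hr, hconj, hb2, hcont.eventually (hUo.mem_nhds hpU)] with w h1 h2 h3 h4
  refine ⟨h2, h4, by rw [← hgsq, h1], fun hw => ?_⟩
  simp only [ContinuousLinearMap.toSpanSingleton_apply] at h3
  rw [h2] at h3
  have e1 : h w - conj (h w) - (w - conj w) • (c:ℂ) =
      ((2 * ((h w).im - c * w.im) : ℝ) : ℂ) * Complex.I := by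
    rw [Complex.sub_conj, Complex.sub_conj, smul_eq_mul]; push_cast; ring
  rw [e1, Complex.sub_conj, norm_mul, norm_mul, Complex.norm_I, Complex.norm_real,
    Complex.norm_real, mul_one, mul_one, Real.norm_eq_abs, Real.norm_eq_abs,
    abs_of_pos (show 0 < 2 * w.im by linarith)] at h3
  have := (abs_le.1 h3).1
  nlinarith [mul_pos hc0 hw]

lemma real_parts (h He Ho : ℂ → ℂ) (t ζp c : ℝ) (ht : 0 < t) (h0 : h 0 = ζp) (hc : Ho 0 = c)
    (hconj : ∀ w : ℂ, ‖w‖ < t → h (conj w) = conj (h w))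
    (hdec : ∀ w : ℂ, ‖w‖ < t → h w = He (w^2) + w * Ho (w^2)) (x : ℝ) (hx : |x| < t^2) :
    (He x).im = 0 ∧ (Ho x).im = 0 := by
  have key : ∀ y : ℝ, 0 < y → y^2 = |x| → ‖(y:ℂ)‖ < t := by
    intro y hy e
    rw [Complex.norm_real, Real.norm_of_nonneg hy.le]
    exact lt_of_pow_lt_pow_left₀ 2 ht.le (by rw [e]; exact hx)
  have hy2 : (√|x|)^2 = |x| := Real.sq_sqrt (abs_nonneg x)
  rcases lt_trichotomy x 0 with hx0 | hx0 | hx0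
  · set y := √|x| with hy
    have hy0 : 0 < y := Real.sqrt_pos.2 (abs_pos.2 hx0.ne)
    have hyt := key y hy0 hy2
    rw [abs_of_neg hx0] at hy2
    have hw : ((y:ℂ) * Complex.I)^2 = x := by
      rw [mul_pow, Complex.I_sq]
      have : ((y:ℂ))^2 = ((-x : ℝ) : ℂ) := by rw [← hy2]; push_cast; rfl
      rw [this]; push_cast; ring
    have hn : ‖(y:ℂ) * Complex.I‖ < t := by simpa using hyt
    have e1 := hdec _ hn
    have e2 := hdec (-((y:ℂ) * Complex.I)) (by rwa [norm_neg])
    have e3 := hconj _ hn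
    have e4 : conj ((y:ℂ) * Complex.I) = -((y:ℂ) * Complex.I) := by simp
    rw [neg_sq, hw] at e2
    rw [hw] at e1
    rw [e4, e2] at e3
    rw [e1] at e3
    have r1 := congrArg Complex.im e3
    have r2 := congrArg Complex.re e3
    simp at r1 r2
    refine ⟨by linarith, ?_⟩
    have : y * (Ho x).im = 0 := by linarith
    exact (mul_eq_zero.1 this).resolve_left hy0.ne'
  · have := hdec 0 (by simpa using ht)
    simp [h0] at this
    rw [hx0]
    simp [hc, ← this]
  · set y := √|x| with hy
    have hy0 : 0 < y := Real.sqrt_pos.2 (abs_pos.2 hx0.ne')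
    have hyt := key y hy0 hy2
    rw [abs_of_pos hx0] at hy2
    have hw : ((y:ℂ))^2 = x := by rw [← hy2]; push_cast; rfl
    have e1 := hdec _ hyt
    have e2 := hdec (-(y:ℂ)) (by rwa [norm_neg])
    have e3 := hconj _ hyt
    have e4 := hconj (-(y:ℂ)) (by rwa [norm_neg])
    rw [map_neg, Complex.conj_ofReal] at e4
    rw [Complex.conj_ofReal] at e3
    rw [neg_sq, hw] at e2
    rw [hw] at e1
    have r3 := Complex.conj_eq_iff_im.1 e3.symm
    have r4 := Complex.conj_eq_iff_im.1 e4.symm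
    rw [e1] at r3
    rw [e2] at r4
    simp at r3 r4
    refine ⟨by linarith, ?_⟩
    have : y * (Ho x).im = 0 := by linarith
    exact (mul_eq_zero.1 this).resolve_left hy0.ne'

lemma sqrt_im (u : ℂ) (hu : 0 < u.im) : 0 < (u ^ (1/2 : ℂ)).im := by
  have hne : u ≠ 0 := fun h => by simp [h] at hu
  have h1 : u.arg ≠ 0 := fun h => by
    have := (Complex.arg_eq_zero_iff.1 h).2; linarith
  have h2 : 0 < u.arg := lt_of_le_of_ne (Complex.arg_nonneg_iff.2 hu.le) h1.symm
  have h3 := Complex.arg_le_pi u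
  rw [Complex.cpow_def_of_ne_zero hne, Complex.exp_im]
  have : (Complex.log u * (1/2)).im = u.arg / 2 := by
    rw [show (1/2 : ℂ) = ((1/2 : ℝ) : ℂ) by norm_num, Complex.im_mul_ofReal, Complex.log_im]; ring
  rw [this]
  exact mul_pos (Real.exp_pos _) (Real.sin_pos_of_pos_of_lt_pi (by linarith) (by linarith))

lemma sqrt_re (u : ℂ) (hu : u.im < 0) : 0 < (u ^ (1/2 : ℂ)).re := by
  have hne : u ≠ 0 := fun h => by simp [h] at hu
  have h1 : u.arg < 0 := Complex.arg_neg_iff.2 hu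
  have h3 := Complex.neg_pi_lt_arg u
  rw [Complex.cpow_def_of_ne_zero hne, Complex.exp_re]
  have : (Complex.log u * (1/2)).im = u.arg / 2 := by
    rw [show (1/2 : ℂ) = ((1/2 : ℝ) : ℂ) by norm_num, Complex.im_mul_ofReal, Complex.log_im]; ring
  rw [this]
  exact mul_pos (Real.exp_pos _) (Real.cos_pos_of_mem_Ioo ⟨by linarith, by linarith [Real.pi_pos]⟩)

lemma sqrt_sq' (u : ℂ) : (u ^ (1/2 : ℂ))^2 = u := by
  rw [← Complex.cpow_nat_mul]; norm_num

lemma sqrt_real (x : ℝ) (hx : 0 ≤ x) : (x:ℂ) ^ (1/2 : ℂ) = (√x : ℝ) := by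
  rw [Real.sqrt_eq_rpow, Complex.ofReal_cpow hx]; norm_num

lemma sqrt_cont (x : ℝ) (hx : 0 ≤ x) : ContinuousAt (fun u : ℂ => u ^ (1/2 : ℂ)) x :=
  Complex.continuousAt_cpow_const_of_re_pos (Or.inl (by simpa using hx)) (by norm_num)

/-- (Square-root edge expansion at the upper edge `L+`.)  Under the
standing assumptions there exist `r > 0`, `c₊ > 0` and functions `Bf, Cf` analytic on the
disc `{|w| < r}`, real-valued on the reals, with `Bf 0 = 0`, `c₊ + Bf > 0` and `Cf < 0` on
`(−r, r)`, such that for every real `E` with `|E − L+| < r` the boundary limits of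
`Im m(E+iη)` and `Re m(E+iη)` as `η ↓ 0` exist and are given by
`√(L+−E)(c₊ + Bf(−(L+−E)))` and `Cf(−(L+−E))` for `E ≤ L+`, and by `0` and
`√(E−L+)(c₊ + Bf(E−L+)) + Cf(E−L+)` for `E ≥ L+`. -/
theorem stmt_11 (ν : Measure ℝ) [IsProbabilityMeasure ν]
    -- `[a,b]` is the smallest closed interval containing `supp ν`
    (a b : ℝ) (hab : a ≤ b)
    (hsupp : ν (Set.Icc a b)ᶜ = 0)
    (hmin : ∀ a' b' : ℝ, ν (Set.Icc a' b')ᶜ = 0 → Set.Icc a b ⊆ Set.Icc a' b')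
    -- `ν` is centered
    (hcent : ∫ v, v ∂ν = 0)
    -- edge assumption: `∫ dν(v)/(v − x)² ≥ 1 + ϖ` on `[a,b]` (value possibly `+∞`)
    (ϖ : ℝ) (hϖ : 0 < ϖ)
    (hedge : ∀ x ∈ Set.Icc a b,
      ENNReal.ofReal (1 + ϖ) ≤ ∫⁻ v, (ENNReal.ofReal ((v - x) ^ 2))⁻¹ ∂ν)
    -- `m` is the Stieltjes transform of the deformed semicircle law
    (m : ℂ → ℂ)
    (hholo : DifferentiableOn ℂ m {z : ℂ | 0 < z.im})
    (him : ∀ z : ℂ, 0 < z.im → 0 ≤ (m z).im)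
    (heq : ∀ z : ℂ, 0 < z.im → m z = ∫ v : ℝ, ((v : ℂ) - z - m z)⁻¹ ∂ν)
    (hbdd : ∀ E : ℝ, IsBoundedUnder (· ≤ ·) (nhdsWithin (0:ℝ) (Set.Ioi 0))
      (fun η : ℝ => (m (E + η * Complex.I)).im))
    -- `ζ− < ζ+` are the two real solutions of `∫ dν(v)/(v − ζ)² = 1`, outside `[a,b]`
    (ζm ζp : ℝ) (hζζ : ζm < ζp)
    (hζm_out : ζm < a) (hζp_out : b < ζp)
    (hζm : ∫ v, ((v - ζm) ^ 2)⁻¹ ∂ν = 1)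
    (hζp : ∫ v, ((v - ζp) ^ 2)⁻¹ ∂ν = 1)
    -- `L± := ζ± − ∫ dν(v)/(v − ζ±)` are the edges of the support of `ρ_fc`
    (Lm Lp : ℝ)
    (hLm : Lm = ζm - ∫ v, (v - ζm)⁻¹ ∂ν)
    (hLp : Lp = ζp - ∫ v, (v - ζp)⁻¹ ∂ν) :
    ∃ r : ℝ, 0 < r ∧ ∃ cp : ℝ, 0 < cp ∧ ∃ Bf Cf : ℂ → ℂ,
      AnalyticOnNhd ℂ Bf (Metric.ball 0 r) ∧ AnalyticOnNhd ℂ Cf (Metric.ball 0 r) ∧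
      (∀ x : ℝ, |x| < r → (Bf (x : ℂ)).im = 0 ∧ (Cf (x : ℂ)).im = 0) ∧
      Bf 0 = 0 ∧
      (∀ x : ℝ, |x| < r → 0 < cp + (Bf (x : ℂ)).re ∧ (Cf (x : ℂ)).re < 0) ∧
      ∀ E : ℝ, |E - Lp| < r →
        (E ≤ Lp →
          Tendsto (fun η : ℝ => (m (E + η * Complex.I)).im) (nhdsWithin 0 (Set.Ioi 0))
            (nhds (Real.sqrt (Lp - E) * (cp + (Bf ((-(Lp - E) : ℝ) : ℂ)).re))) ∧
          Tendsto (fun η : ℝ => (m (E + η * Complex.I)).re) (nhdsWithin 0 (Set.Ioi 0))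
            (nhds ((Cf ((-(Lp - E) : ℝ) : ℂ)).re))) ∧
        (Lp ≤ E →
          Tendsto (fun η : ℝ => (m (E + η * Complex.I)).im) (nhdsWithin 0 (Set.Ioi 0))
            (nhds 0) ∧
          Tendsto (fun η : ℝ => (m (E + η * Complex.I)).re) (nhdsWithin 0 (Set.Ioi 0))
            (nhds (Real.sqrt (E - Lp) * (cp + (Bf ((E - Lp : ℝ) : ℂ)).re)
              + (Cf ((E - Lp : ℝ) : ℂ)).re))) := by
  have hv : ∀ᵐ v ∂ν, v ≤ b := by
    have : ∀ᵐ v ∂ν, v ∈ Set.Icc a b := mem_ae_iff.2 hsupp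
    exact this.mono fun v h => h.2
  obtain ⟨h, hha, hh0, c, hc0, hdc, hev⟩ := exists_h ν hv hζp_out
  obtain ⟨s, hs0, He, Ho, hHe, hHo, hHo0, hdec⟩ := even_odd h hha
  rw [hdc] at hHo0
  obtain ⟨ρ, hρ0, hρ⟩ := Metric.eventually_nhds_iff_ball.1 (hev.and hha.eventually_analyticAt)
  set t := min ρ s with ht
  have ht0 : 0 < t := lt_min hρ0 hs0
  have hP : ∀ w : ℂ, ‖w‖ < t → _ := fun w hw => hρ w (by
    rw [Metric.mem_ball, dist_zero_right]; exact lt_of_lt_of_le hw (min_le_left _ _))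
  have hdec' : ∀ w : ℂ, ‖w‖ < t → h w = He (w^2) + w * Ho (w^2) := fun w hw =>
    hdec w (lt_of_lt_of_le hw (min_le_right _ _))
  have hHe0 : He 0 = ζp := by
    have := hdec' 0 (by simpa using ht0)
    simpa [hh0] using this.symm
  have hneg : ζp - Lp < 0 := by
    have h1 : 0 < ∫ v, -(v - ζp)⁻¹ ∂ν := by
      refine int_pos ν ?_ ?_
      · have := (inv_int ν hv (ζp:ℂ) (by simpa using hζp_out)).re.neg
        refine this.congr (ae_of_all _ fun v => ?_)
        simp only [Pi.neg_apply, RCLike.re_eq_complex_re]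
        rw [← Complex.ofReal_sub, ← Complex.ofReal_inv, Complex.ofReal_re]
      · filter_upwards [hv] with v hv
        have : v - ζp < 0 := by linarith
        simpa using this
    rw [integral_neg] at h1
    linarith
  have hs2 : (0:ℝ) < s^2 := by positivity
  have hHeD := hHe.differentiableAt (Metric.ball_mem_nhds (0:ℂ) hs2)
  have hHoD := hHo.differentiableAt (Metric.ball_mem_nhds (0:ℂ) hs2)
  have ev1 : ∀ᶠ x in nhds (0:ℂ), 0 < (Ho x).re := by
    have : ContinuousAt (fun x => (Ho x).re) 0 :=
      Complex.continuous_re.continuousAt.comp hHoD.continuousAt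
    refine this.eventually (lt_mem_nhds ?_)
    show 0 < (Ho 0).re
    rw [hHo0]; simpa using hc0
  have ev2 : ∀ᶠ x in nhds (0:ℂ), (He x - Lp - x).re < 0 := by
    have : ContinuousAt (fun x => (He x - Lp - x).re) 0 :=
      Complex.continuous_re.continuousAt.comp
        ((hHeD.continuousAt.sub continuousAt_const).sub continuousAt_id)
    refine this.eventually (gt_mem_nhds ?_)
    show (He 0 - Lp - 0).re < 0
    rw [hHe0]; simpa using hneg
  obtain ⟨δ, hδ0, hδ⟩ := Metric.eventually_nhds_iff_ball.1 (ev1.and ev2)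
  have hreal := real_parts h He Ho t ζp c ht0 hh0 hHo0 (fun w hw => (hP w hw).1.1) hdec'
  have hkey : ∀ z : ℂ, 0 < z.im → ∀ w : ℂ, ‖w‖ < t → 0 < w.im → w^2 = z - Lp →
      m z = h w - z := by
    intro z hz w hw hwi hwz
    obtain ⟨⟨_, p2, p3, p4⟩, _⟩ := hP w hw
    have : z + m z = h w := by
      refine uniq ν z _ _ hz ?_ (p4 hwi) ?_ ?_
      · rw [Complex.add_im]; linarith [him z hz]
      · have e := heq z hz
        simp only [sub_sub] at e
        rw [← e]; ring
      · rw [kk_eq ν hv hζp_out hζp hLp _ p2, p3, hwz]; ring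
    rw [← this]; ring
  have hlim : ∀ (E : ℝ) (W : ℂ → ℂ) (w0 : ℂ), ‖w0‖ < t → ContinuousAt W E → W E = w0 →
      (∀ z : ℂ, 0 < z.im → 0 < (W z).im ∧ (W z)^2 = z - Lp) →
      Tendsto (fun η : ℝ => m (E + η * Complex.I)) (nhdsWithin 0 (Set.Ioi 0))
        (nhds (He (w0^2) + w0 * Ho (w0^2) - E)) := by
    intro E W w0 hw0 hW hWE hWp
    have hz : Tendsto (fun η : ℝ => (E:ℂ) + η * Complex.I) (nhdsWithin 0 (Set.Ioi 0))
        (nhds (E:ℂ)) := by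
      have : Continuous (fun η : ℝ => (E:ℂ) + η * Complex.I) := by fun_prop
      have := this.tendsto 0
      simp only [Complex.ofReal_zero, zero_mul, add_zero] at this
      exact this.mono_left nhdsWithin_le_nhds
    have hWt : Tendsto (fun η : ℝ => W ((E:ℂ) + η * Complex.I)) (nhdsWithin 0 (Set.Ioi 0))
        (nhds w0) := by
      rw [ContinuousAt, hWE] at hW
      exact hW.comp hz
    have hcont := (hP w0 hw0).2.continuousAt.tendsto.comp hWt
    rw [← hdec' w0 hw0]
    refine (hcont.sub hz).congr' ?_
    have hn : ∀ᶠ w in nhds w0, ‖w‖ < t := continuous_norm.continuousAt.eventually (gt_mem_nhds hw0)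
    filter_upwards [hWt.eventually hn, self_mem_nhdsWithin] with η h1 h2
    have hzi : 0 < ((E:ℂ) + η * Complex.I).im := by simpa using h2
    obtain ⟨q1, q2⟩ := hWp _ hzi
    exact (hkey _ hzi _ h1 q1 q2).symm
  have hnorm : ∀ y : ℝ, 0 ≤ y → y < t^2 → ‖((√y : ℝ) : ℂ)‖ < t := by
    intro y hy hyt
    rw [Complex.norm_real, Real.norm_of_nonneg (Real.sqrt_nonneg _)]
    exact (Real.sqrt_lt' ht0).2 hyt
  have hrt : min (t^2) δ ≤ t^2 := min_le_left _ _
  have hts : t^2 ≤ s^2 := by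
    have : t ≤ s := min_le_right _ _
    gcongr
  have hsub : Metric.ball (0:ℂ) (min (t^2) δ) ⊆ Metric.ball 0 (s^2) :=
    Metric.ball_subset_ball (hrt.trans hts)
  have hHeA : AnalyticOnNhd ℂ He (Metric.ball 0 (min (t^2) δ)) :=
    (hHe.mono hsub).analyticOnNhd Metric.isOpen_ball
  have hHoA : AnalyticOnNhd ℂ Ho (Metric.ball 0 (min (t^2) δ)) :=
    (hHo.mono hsub).analyticOnNhd Metric.isOpen_ball
  refine ⟨min (t^2) δ, lt_min (by positivity) hδ0, c, hc0, fun x => Ho x - c,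
    fun x => He x - Lp - x, hHoA.sub analyticOnNhd_const,
    (hHeA.sub analyticOnNhd_const).sub analyticOnNhd_id, ?_, ?_, ?_, ?_⟩
  · intro x hx
    obtain ⟨q1, q2⟩ := hreal x (lt_of_lt_of_le hx hrt)
    simp [q1, q2]
  · simp [hHo0]
  · intro x hx
    obtain ⟨q1, q2⟩ := hδ x (by
      rw [Metric.mem_ball, dist_zero_right, Complex.norm_real]
      exact lt_of_lt_of_le hx (min_le_right _ _))
    refine ⟨?_, q2⟩
    simpa using q1
  · intro E hE
    have hEt : |E - Lp| < t^2 := lt_of_lt_of_le hE hrt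
    obtain ⟨q1, q2⟩ := hreal (E - Lp) hEt
    refine ⟨fun hEL => ?_, fun hEL => ?_⟩
    · have hy : 0 ≤ Lp - E := by linarith
      have hyt : Lp - E < t^2 := by rw [abs_of_nonpos (by linarith)] at hEt; linarith
      have hsq : (((√(Lp - E) : ℝ) : ℂ) * Complex.I)^2 = ((E - Lp : ℝ) : ℂ) := by
        rw [mul_pow, Complex.I_sq, ← Complex.ofReal_pow, Real.sq_sqrt hy]; push_cast; ring
      have T := hlim E (fun z => ((Lp:ℂ) - z) ^ (1/2 : ℂ) * Complex.I)
        (((√(Lp - E) : ℝ) : ℂ) * Complex.I) (by simpa using hnorm _ hy hyt) (by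
          refine ContinuousAt.mul ?_ continuousAt_const
          refine ContinuousAt.comp (g := fun u : ℂ => u ^ (1/2 : ℂ)) (f := fun z : ℂ => (Lp:ℂ) - z)
            ?_ (by fun_prop)
          rw [← Complex.ofReal_sub]
          exact sqrt_cont _ hy) (by
          rw [← Complex.ofReal_sub, sqrt_real _ hy]) (by
          intro z hz
          constructor
          · have := sqrt_re ((Lp:ℂ) - z) (by simpa using hz)
            simpa using this
          · rw [mul_pow, sqrt_sq', Complex.I_sq]; ring)
      rw [hsq] at T
      rw [neg_sub]
      have hXr : (((E - Lp : ℝ) : ℂ)).re = E - Lp := Complex.ofReal_re _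
      have hXi : (((E - Lp : ℝ) : ℂ)).im = 0 := Complex.ofReal_im _
      generalize ((E - Lp : ℝ) : ℂ) = X at *
      have T1 := (Complex.continuous_im.tendsto _).comp T
      have T2 := (Complex.continuous_re.tendsto _).comp T
      simp only [Complex.add_re, Complex.add_im, Complex.sub_re, Complex.sub_im, Complex.mul_re,
        Complex.mul_im, Complex.ofReal_re, Complex.ofReal_im, Complex.I_re, Complex.I_im,
        q1, q2, hXr, hXi] at T1 T2 ⊢
      constructor
      · convert! T1 using 2
        ring
      · convert! T2 using 2
        ring
    · have hy : 0 ≤ E - Lp := by linarith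
      have hyt : E - Lp < t^2 := lt_of_le_of_lt (le_abs_self _) hEt
      have hsq : ((√(E - Lp) : ℝ) : ℂ)^2 = ((E - Lp : ℝ) : ℂ) := by
        rw [← Complex.ofReal_pow, Real.sq_sqrt hy]
      have T := hlim E (fun z => (z - (Lp:ℂ)) ^ (1/2 : ℂ))
        ((√(E - Lp) : ℝ) : ℂ) (hnorm _ hy hyt) (by
          refine ContinuousAt.comp (g := fun u : ℂ => u ^ (1/2 : ℂ)) (f := fun z : ℂ => z - (Lp:ℂ))
            ?_ (by fun_prop)
          rw [← Complex.ofReal_sub]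
          exact sqrt_cont _ hy) (by
          rw [← Complex.ofReal_sub, sqrt_real _ hy]) (by
          intro z hz
          exact ⟨sqrt_im _ (by simpa using hz), sqrt_sq' _⟩)
      rw [hsq] at T
      have hXr : (((E - Lp : ℝ) : ℂ)).re = E - Lp := Complex.ofReal_re _
      have hXi : (((E - Lp : ℝ) : ℂ)).im = 0 := Complex.ofReal_im _
      generalize ((E - Lp : ℝ) : ℂ) = X at *
      have T1 := (Complex.continuous_im.tendsto _).comp T
      have T2 := (Complex.continuous_re.tendsto _).comp T
      simp only [Complex.add_re, Complex.add_im, Complex.sub_re, Complex.sub_im, Complex.mul_re,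
        Complex.mul_im, Complex.ofReal_re, Complex.ofReal_im, Complex.I_re, Complex.I_im,
        q1, q2, hXr, hXi] at T1 T2 ⊢
      constructor
      · convert! T1 using 2
        ring
      · convert! T2 using 2
        ring
end

section
/- Let N ≥ 2 be an integer, β ≥ 1, and let U ∈ C²(ℝ) be such that |U(x)| + |U′(x)| + |U″(x)| ≤ C(1 + |x|)^k for some constants C, k. Let μ be the probability measure on ℝ^N with density proportional to ∏_{1 ≤ i < j ≤ N} |λ_i − λ_j|^β · exp(−βN ∑_{i=1}^N (U(λ_i)/2 + λ_i²/4)) with respect to Lebesgue measure. Then E^μ[ −(1/2) ∑_{i=1}^N U″(λ_i) + (βN/4) ∑_{i=1}^N U′(λ_i) ( U′(λ_i) + λ_i − (2/N) ∑_{j ≠ i} 1/(λ_i − λ_j) ) ] = 0. -/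
open MeasureTheory

lemma aux_cutoff : ∃ (g g1 g2 : ℝ → ℝ) (K : ℝ), (∀ x, HasDerivAt g (g1 x) x) ∧
    (∀ x, HasDerivAt g1 (g2 x) x) ∧ Continuous g2 ∧
    (∀ x, x < 1 → g x = 1 ∧ g1 x = 0 ∧ g2 x = 0) ∧
    (∀ x, 2 < x → g x = 0 ∧ g1 x = 0 ∧ g2 x = 0) ∧ 
    (∀ x, |g x| ≤ 1) ∧ (∀ x, |g1 x| ≤ K) ∧ (∀ x, |g2 x| ≤ K) := by
  set g : ℝ → ℝ := fun x => Real.smoothTransition (2 - x) with hg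
  have hc : ContDiff ℝ 2 g := by
    have : ContDiff ℝ 2 Real.smoothTransition := Real.smoothTransition.contDiff (n := 2)
    exact this.comp (contDiff_const.sub contDiff_id)
  have hc1 : ContDiff ℝ 1 (deriv g) := by
    have : ContDiff ℝ (1+1) g := by simpa [one_add_one_eq_two] using hc
    exact (contDiff_succ_iff_deriv.1 this).2.2
  have hc2 : Continuous (deriv (deriv g)) := hc1.continuous_deriv le_rfl
  have hlo : ∀ x, x < 1 → g =ᶠ[nhds x] fun _ => 1 := by
    intro x hx
    filter_upwards [Iio_mem_nhds hx] with y hy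
    exact Real.smoothTransition.one_of_one_le (by simp at hy; linarith)
  have hhi : ∀ x, 2 < x → g =ᶠ[nhds x] fun _ => 0 := by
    intro x hx
    filter_upwards [Ioi_mem_nhds hx] with y hy
    exact Real.smoothTransition.zero_of_nonpos (by simp at hy; linarith)
  have hlo' : ∀ x, x < 1 → g x = 1 ∧ deriv g x = 0 ∧ deriv (deriv g) x = 0 := by
    intro x hx
    refine ⟨(hlo x hx).self_of_nhds, ?_, ?_⟩
    · rw [(hlo x hx).deriv_eq]; simp
    · rw [(hlo x hx).deriv.deriv_eq]; simp
  have hhi' : ∀ x, 2 < x → g x = 0 ∧ deriv g x = 0 ∧ deriv (deriv g) x = 0 := by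
    intro x hx
    refine ⟨(hhi x hx).self_of_nhds, ?_, ?_⟩
    · rw [(hhi x hx).deriv_eq]; simp
    · rw [(hhi x hx).deriv.deriv_eq]; simp
  have hs1 : HasCompactSupport (deriv g) := by
    refine HasCompactSupport.intro (isCompact_Icc (a := (1:ℝ)) (b := 2)) fun x hx => ?_
    simp only [Set.mem_Icc, not_and_or, not_le] at hx
    rcases hx with h | h
    · exact (hlo' x h).2.1
    · exact (hhi' x h).2.1
  obtain ⟨K1, hK1⟩ := hs1.exists_bound_of_continuous hc1.continuous
  have hs2 : HasCompactSupport (deriv (deriv g)) := hs1.deriv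
  obtain ⟨K2, hK2⟩ := hs2.exists_bound_of_continuous hc2
  refine ⟨g, deriv g, deriv (deriv g), max K1 K2, ?_, ?_, hc2, hlo', hhi', ?_, ?_, ?_⟩
  · intro x; exact (hc.differentiable (by norm_num) x).hasDerivAt
  · intro x; exact (hc1.differentiable (by norm_num) x).hasDerivAt
  · intro x
    rw [abs_of_nonneg (Real.smoothTransition.nonneg _)]
    exact Real.smoothTransition.le_one _
  · intro x; exact (hK1 x).trans (le_max_left _ _)
  · intro x; exact (hK2 x).trans (le_max_right _ _)

lemma aux_one_dim (f f' : ℝ → ℝ) (s : Set ℝ) (hs : s.Countable) (hf : Continuous f)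
    (hd : ∀ x, x ∉ s → HasDerivAt f (f' x) x) (M : ℝ) (hM : ∀ x, M < |x| → f x = 0) :
    ∫ x, f' x = 0 := by
  by_cases hi : Integrable f'
  swap
  · exact integral_undef hi
  have h1 := intervalIntegral_tendsto_integral hi Filter.tendsto_neg_atTop_atBot
    (Filter.tendsto_id (α := ℝ))
  refine tendsto_nhds_unique h1 ?_
  refine tendsto_const_nhds.congr' ?_
  filter_upwards [Filter.eventually_gt_atTop (max M 0)] with b hb
  have hb1 : M < b := (le_max_left _ _).trans_lt hb
  have hb0 : 0 < b := (le_max_right _ _).trans_lt hb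
  rw [integral_eq_of_hasDerivAt_off_countable f f' hs hf.continuousOn
    (fun x hx => hd x hx.2) hi.intervalIntegrable]
  rw [hM, hM] <;> simp [abs_of_pos hb0, hb1]

lemma aux_slice (n : ℕ) (i : Fin (n + 1)) (G : (Fin (n + 1) → ℝ) → ℝ) (hG : Integrable G)
    (h : ∀ l : Fin (n + 1) → ℝ, ∫ t, G (Function.update l i t) = 0) : ∫ l, G l = 0 := by
  have hmp := (volume_preserving_piFinSuccAbove (fun _ : Fin (n + 1) => ℝ) i).symm
  rw [← hmp.integral_comp (MeasurableEquiv.measurableEmbedding _)]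
  have hG' := (hmp.integrable_comp_emb (MeasurableEquiv.measurableEmbedding _)).2 hG
  rw [Measure.volume_eq_prod] at hG' ⊢
  refine (integral_prod_symm _ hG').trans ?_
  refine integral_eq_zero_of_ae (Filter.Eventually.of_forall fun y => ?_)
  have := h (i.insertNth 0 y)
  simp only [Fin.update_insertNth] at this
  simpa [MeasurableEquiv.piFinSuccAbove_symm_apply, Fin.insertNthEquiv] using this

/-- the index set of pairs -/
abbrev Pr (N : ℕ) : Finset (Fin N × Fin N) :=
  Finset.univ.filter (fun p : Fin N × Fin N => p.1 < p.2)

/-- indicator -/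
noncomputable def dl {N : ℕ} (i a : Fin N) : ℝ := if a = i then 1 else 0

lemma aux_pairs {N : ℕ} (i : Fin N) (l : Fin N → ℝ) :
    ∑ p ∈ Pr N, (dl i p.1 - dl i p.2) * (l p.1 - l p.2)⁻¹
      = ∑ j ∈ Finset.univ.erase i, (l i - l j)⁻¹ := by
  have e : Finset.univ.erase i = Finset.univ.filter (fun j : Fin N => j ≠ i) := by
    ext j; simp
  rw [e, Finset.sum_filter, Finset.sum_filter, Fintype.sum_prod_type]
  have h1 : ∀ a b : Fin N, (if a < b then (dl i a - dl i b) * (l a - l b)⁻¹ else 0)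
      = (if a = i then (if a < b then (l a - l b)⁻¹ else 0) else 0)
        + (if b = i then (if a < b then (l b - l a)⁻¹ else 0) else 0) := by
    intro a b
    unfold dl
    have : (l b - l a)⁻¹ = -(l a - l b)⁻¹ := by rw [← inv_neg, neg_sub]
    rw [this]
    split_ifs <;> ring
  simp only [h1, Finset.sum_add_distrib]
  rw [Finset.sum_comm]
  simp only [Finset.sum_ite_eq', Finset.mem_univ, if_true]
  rw [← Finset.sum_add_distrib]
  refine Finset.sum_congr rfl fun j _ => ?_
  rcases lt_trichotomy i j with h | h | h
  · simp [h, h.ne', h.not_gt]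
  · simp [h]
  · simp [h, h.ne, h.not_gt]

lemma aux_euler {N : ℕ} (l : Fin N → ℝ) :
    |∑ i, l i * ∑ j ∈ Finset.univ.erase i, (l i - l j)⁻¹| ≤ (Pr N).card := by
  simp only [← aux_pairs, Finset.mul_sum]
  rw [Finset.sum_comm]
  refine (Finset.abs_sum_le_sum_abs _ _).trans ?_
  rw [Finset.card_eq_sum_ones]
  push_cast
  refine Finset.sum_le_sum fun p _ => ?_
  have : ∑ i, l i * ((dl i p.1 - dl i p.2) * (l p.1 - l p.2)⁻¹)
     = (l p.1 - l p.2) * (l p.1 - l p.2)⁻¹ := by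
    simp only [← mul_assoc, ← Finset.sum_mul, mul_sub, Finset.sum_sub_distrib, dl]
    simp
  rw [this]
  by_cases h : l p.1 - l p.2 = 0
  · simp [h]
  · rw [mul_inv_cancel₀ h]; simp

lemma aux_prod_deriv {ι : Type*} [DecidableEq ι] (s : Finset ι) (f : ι → ℝ → ℝ) (d : ι → ℝ) (x : ℝ)
    (h : ∀ p ∈ s, HasDerivAt (f p) (f p x * d p) x) :
    HasDerivAt (fun t => ∏ p ∈ s, f p t) ((∏ p ∈ s, f p x) * ∑ p ∈ s, d p) x := by
  induction s using Finset.induction_on with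
  | empty => simpa using hasDerivAt_const x (1:ℝ)
  | insert a s ha ih =>
    simp only [Finset.prod_insert ha, Finset.sum_insert ha]
    have h1 := h a (Finset.mem_insert_self _ _)
    have h2 := ih fun p hp => h p (Finset.mem_insert_of_mem hp)
    exact (h1.mul h2).congr_deriv (by ring)

lemma aux_upd {N : ℕ} (l : Fin N → ℝ) (i a : Fin N) :
    HasDerivAt (fun t => Function.update l i t a) (dl i a) (l i) := by
  by_cases h : a = i
  · subst h; simpa [dl] using hasDerivAt_id' (l a)
  · simpa [dl, h] using hasDerivAt_const (l i) (l a)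

lemma aux_abs_rpow (β x : ℝ) (hx : x ≠ 0) :
    HasDerivAt (fun y : ℝ => |y| ^ β) (|x| ^ β * (β * x⁻¹)) x := by
  have h1 := (Real.hasStrictDerivAt_rpow_const (x := |x|) (p := β)
    (Or.inl (abs_ne_zero.2 hx))).hasDerivAt
  have h2 := h1.comp x (hasDerivAt_abs hx)
  refine h2.congr_deriv ?_
  rw [Real.rpow_sub_one (abs_ne_zero.2 hx)]
  rcases lt_or_gt_of_ne hx with h | h
  · simp [h, abs_of_neg h]; field_simp
  · simp [h, abs_of_pos h]; field_simp

/-- Vandermonde factor -/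
noncomputable def VV {N : ℕ} (β : ℝ) (l : Fin N → ℝ) : ℝ := ∏ p ∈ Pr N, |l p.1 - l p.2| ^ β

lemma aux_VV_deriv {N : ℕ} (β : ℝ) (l : Fin N → ℝ) (i : Fin N) (hl : ∀ j, j ≠ i → l i ≠ l j) :
    HasDerivAt (fun t => VV β (Function.update l i t))
      (VV β l * (β * ∑ j ∈ Finset.univ.erase i, (l i - l j)⁻¹)) (l i) := by
  unfold VV
  rw [← aux_pairs, Finset.mul_sum]
  have := aux_prod_deriv (Pr N)
    (fun p t => |Function.update l i t p.1 - Function.update l i t p.2| ^ β)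
    (fun p => β * ((dl i p.1 - dl i p.2) * (l p.1 - l p.2)⁻¹)) (l i) ?_
  · simpa [Function.update_eq_self] using this
  intro p hp
  have hlt : p.1 < p.2 := by simpa using hp
  simp only [Function.update_eq_self]
  by_cases h : p.1 ≠ i ∧ p.2 ≠ i
  · simp only [dl, h.1, h.2, Function.update_of_ne, if_false, ne_eq, not_false_eq_true]
    simpa using hasDerivAt_const (l i) (|l p.1 - l p.2| ^ β)
  have hne : l p.1 - l p.2 ≠ 0 := by
    by_cases h1 : p.1 = i
    · have := hl p.2 (h1 ▸ hlt.ne'); rw [h1]; exact sub_ne_zero.2 this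
    · have h2 : p.2 = i := by by_contra h2; exact h ⟨h1, h2⟩
      have := hl p.1 h1; rw [h2]; exact sub_ne_zero.2 this.symm
  have h3 := (aux_upd l i p.1).sub (aux_upd l i p.2)
  have h4 := aux_abs_rpow β (l p.1 - l p.2) hne
  have h5 := HasDerivAt.comp_of_eq (l i) h4 h3 (by simp)
  exact h5.congr_deriv (by ring)

/-- unnormalised density -/
noncomputable def pp {N : ℕ} (β : ℝ) (U : ℝ → ℝ) (l : Fin N → ℝ) : ℝ :=
  VV β l * Real.exp (-(β * N) * ∑ i, (U (l i) / 2 + (l i) ^ 2 / 4))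

lemma aux_VV_cont {N : ℕ} (β : ℝ) (hβ : 1 ≤ β) : Continuous (VV β : (Fin N → ℝ) → ℝ) := by
  unfold VV
  refine continuous_finsetProd _ fun p _ => ?_
  refine Continuous.rpow_const (by fun_prop) fun x => Or.inr (by linarith)

lemma aux_pp_cont {N : ℕ} (β : ℝ) (hβ : 1 ≤ β) (U : ℝ → ℝ) (hU : Continuous U) :
    Continuous (pp β U : (Fin N → ℝ) → ℝ) := by
  unfold pp
  have := aux_VV_cont (N := N) β hβ
  fun_prop

lemma aux_pp_deriv {N : ℕ} (β : ℝ) (U : ℝ → ℝ) (hU : Differentiable ℝ U)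
    (l : Fin N → ℝ) (i : Fin N) (hl : ∀ j, j ≠ i → l i ≠ l j) :
    HasDerivAt (fun t => pp β U (Function.update l i t))
      (pp β U l * (β * (∑ j ∈ Finset.univ.erase i, (l i - l j)⁻¹)
        - (β * N / 2) * (deriv U (l i) + l i))) (l i) := by
  unfold pp
  have h1 := aux_VV_deriv β l i hl
  have h2 : HasDerivAt (fun t => ∑ a, (U (Function.update l i t a) / 2
      + (Function.update l i t a) ^ 2 / 4)) ((deriv U (l i) + l i) / 2) (l i) := by
    have : ∀ a ∈ (Finset.univ : Finset (Fin N)),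
        HasDerivAt (fun t => (U (Function.update l i t a) / 2
          + (Function.update l i t a) ^ 2 / 4)) (dl i a * ((deriv U (l a) + l a) / 2)) (l i) := by
      intro a _
      have h3 := aux_upd l i a
      have h4 : HasDerivAt U (deriv U (l a)) (l a) := (hU _).hasDerivAt
      have h5 := HasDerivAt.comp_of_eq (l i) h4 h3 (by simp)
      have h6 := (h5.div_const 2).add ((h3.pow 2).div_const 4)
      refine h6.congr_deriv ?_
      simp
      ring
    refine (HasDerivAt.fun_sum this).congr_deriv ?_
    simp [dl]
  have h3 := h1.mul ((h2.const_mul (-(β * N))).exp)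
  refine h3.congr_deriv ?_
  simp only [Function.update_eq_self]
  ring

lemma aux_VV_inv {N : ℕ} (β : ℝ) (hβ : 1 ≤ β) (i j : Fin N) (hij : j ≠ i) :
    ∃ H : (Fin N → ℝ) → ℝ, Continuous H ∧ ∀ l, |VV β l * (l i - l j)⁻¹| ≤ H l := by
  have key : ∀ q ∈ Pr N, ∃ H : (Fin N → ℝ) → ℝ, Continuous H ∧
      ∀ l, |VV β l * (l q.1 - l q.2)⁻¹| ≤ H l := by
    intro q hq
    refine ⟨fun l => |l q.1 - l q.2| ^ (β - 1) * ∏ p ∈ (Pr N).erase q, |l p.1 - l p.2| ^ β, ?_, ?_⟩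
    · refine Continuous.mul ?_ (continuous_finsetProd _ fun p _ => ?_)
      · exact Continuous.rpow_const (by fun_prop) fun x => Or.inr (by linarith)
      · exact Continuous.rpow_const (by fun_prop) fun x => Or.inr (by linarith)
    · intro l
      have hnn : 0 ≤ ∏ p ∈ (Pr N).erase q, |l p.1 - l p.2| ^ β :=
        Finset.prod_nonneg fun p _ => by positivity
      unfold VV
      rw [← Finset.mul_prod_erase _ _ hq, mul_right_comm, abs_mul, abs_of_nonneg hnn]
      refine mul_le_mul_of_nonneg_right ?_ hnn
      by_cases h : l q.1 - l q.2 = 0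
      · simp only [h, inv_zero, mul_zero, abs_zero]; positivity
      · rw [abs_mul, abs_inv, Real.rpow_sub_one (abs_ne_zero.2 h),
          abs_of_nonneg (by positivity), div_eq_mul_inv]
  rcases lt_or_gt_of_ne hij with h | h
  · obtain ⟨H, h1, h2⟩ := key (j, i) (by simp [h])
    refine ⟨H, h1, fun l => ?_⟩
    have := h2 l
    simp only [abs_mul, abs_inv] at this ⊢
    rwa [abs_sub_comm]
  · exact key (i, j) (by simp [h])

lemma aux_supp {N : ℕ} (f : (Fin N → ℝ) → ℝ) (M : ℝ) (h : ∀ l, M < ‖l‖ → f l = 0) :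
    HasCompactSupport f :=
  HasCompactSupport.intro (isCompact_closedBall 0 M) fun l hl => h l (by simpa using hl)

lemma aux_ibp {n : ℕ} (β : ℝ) (hβ : 1 ≤ β) (U : ℝ → ℝ) (hU : ContDiff ℝ 2 U)
    (i : Fin (n + 1)) (A B : (Fin (n + 1) → ℝ) → ℝ) (hA : Continuous A) (hB : Continuous B)
    (M : ℝ) (hAM : ∀ l, M < ‖l‖ → A l = 0) (hBM : ∀ l, M < ‖l‖ → B l = 0)
    (hd : ∀ l, HasDerivAt (fun t => B (Function.update l i t)) (A l) (l i)) :
    Integrable (fun l => pp β U l * (A l + B l *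
      (β * (∑ j ∈ Finset.univ.erase i, (l i - l j)⁻¹)
        - (β * (n + 1 : ℕ) / 2) * (deriv U (l i) + l i)))) ∧
    ∫ l, pp β U l * (A l + B l * (β * (∑ j ∈ Finset.univ.erase i, (l i - l j)⁻¹)
        - (β * (n + 1 : ℕ) / 2) * (deriv U (l i) + l i))) = 0 := by
  have hUd : Differentiable ℝ U := hU.differentiable (by norm_num)
  have hU1 : Continuous (deriv U) := hU.continuous_deriv (by norm_num)
  have hpc := aux_pp_cont (N := n + 1) β hβ U hU.continuous
  have hVc := aux_VV_cont (N := n + 1) β hβ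
  have hint : Integrable (fun l => pp β U l * (A l + B l *
      (β * (∑ j ∈ Finset.univ.erase i, (l i - l j)⁻¹)
        - (β * (n + 1 : ℕ) / 2) * (deriv U (l i) + l i)))) := by
    have e : (fun l => pp β U l * (A l + B l *
      (β * (∑ j ∈ Finset.univ.erase i, (l i - l j)⁻¹)
        - (β * (n + 1 : ℕ) / 2) * (deriv U (l i) + l i)))) = fun l =>
        pp β U l * (A l - B l * ((β * (n + 1 : ℕ) / 2) * (deriv U (l i) + l i)))
        + ∑ j ∈ Finset.univ.erase i, β * (pp β U l * B l * (l i - l j)⁻¹) := by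
      ext l
      rw [← Finset.mul_sum, ← Finset.mul_sum]
      ring
    rw [e]
    refine Integrable.add ?_ (integrable_finsetSum _ fun j hj => Integrable.const_mul ?_ _)
    · refine Continuous.integrable_of_hasCompactSupport (by fun_prop) (aux_supp _ M fun l hl => ?_)
      simp [hAM l hl, hBM l hl]
    · obtain ⟨H, hH, hH'⟩ := aux_VV_inv β hβ i j (Finset.ne_of_mem_erase hj)
      have h1 : Integrable (fun l : Fin (n + 1) → ℝ => H l *
          (B l * Real.exp (-(β * (n + 1 : ℕ)) * ∑ i, (U (l i) / 2 + (l i) ^ 2 / 4)))) := by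
        have := hU.continuous
        refine Continuous.integrable_of_hasCompactSupport (by fun_prop)
          (aux_supp _ M fun l hl => ?_)
        simp [hBM l hl]
      refine h1.mono ?_ (Filter.Eventually.of_forall fun l => ?_)
      · refine Measurable.aestronglyMeasurable ?_
        have := hpc.measurable
        have := hB.measurable
        fun_prop
      · have e2 : pp β U l * B l * (l i - l j)⁻¹ = (VV β l * (l i - l j)⁻¹) *
          (B l * Real.exp (-(β * (n + 1 : ℕ)) * ∑ i, (U (l i) / 2 + (l i) ^ 2 / 4))) := by
          unfold pp; ring
        rw [e2, norm_mul, norm_mul (H l)]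
        have hh : ‖VV β l * (l i - l j)⁻¹‖ ≤ ‖H l‖ := (hH' l).trans (le_abs_self _)
        exact mul_le_mul_of_nonneg_right hh (norm_nonneg _)
  refine ⟨hint, aux_slice n i _ hint fun l => ?_⟩
  refine aux_one_dim (fun t => pp β U (Function.update l i t) * B (Function.update l i t)) _
    (Set.range l) (Set.finite_range l).countable ?_ ?_ M ?_
  · have : Continuous fun t : ℝ => Function.update l i t := by fun_prop
    exact (hpc.comp this).mul (hB.comp this)
  · intro t ht
    set m := Function.update l i t with hm
    have hmi : m i = t := by simp [hm]
    have hne : ∀ j, j ≠ i → m i ≠ m j := by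
      intro j hj h
      rw [hmi] at h
      exact ht ⟨j, by rw [h]; simp [hm, hj]⟩
    have h1 := (aux_pp_deriv β U hUd m i hne).mul (hd m)
    rw [hmi] at h1
    have e3 : ∀ t', Function.update m i t' = Function.update l i t' := by
      intro t'; simp [hm]
    have e4 : Function.update m i t = m := by rw [e3]
    simp only [e4, hmi] at h1 ⊢
    rw [show (fun t => pp β U (Function.update l i t) * B (Function.update l i t)) =
      (fun t => pp β U (Function.update m i t)) * (fun t => B (Function.update m i t)) by
        ext t'; simp [e3]]
    refine h1.congr_deriv ?_
    ring
  · intro t ht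
    rw [hBM, mul_zero]
    refine ht.trans_le ?_
    have := norm_le_pi_norm (Function.update l i t) i
    simpa using this

lemma aux_norm_sq {N : ℕ} (l : Fin N → ℝ) : ‖l‖ ≤ 1 + ∑ a, l a ^ 2 := by
  have hs : 0 ≤ ∑ a, l a ^ 2 := Finset.sum_nonneg fun a _ => sq_nonneg _
  rw [pi_norm_le_iff_of_nonneg (by linarith)]
  intro i
  have : l i ^ 2 ≤ ∑ a, l a ^ 2 :=
    Finset.single_le_sum (f := fun a => l a ^ 2) (fun a _ => sq_nonneg _) (Finset.mem_univ i)
  rw [Real.norm_eq_abs, abs_le]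
  constructor <;> nlinarith

/-- the integrand -/
noncomputable def II {N : ℕ} (β : ℝ) (U : ℝ → ℝ) (l : Fin N → ℝ) : ℝ :=
  -(1 / 2) * ∑ i, deriv (deriv U) (l i)
        + (β * N / 4) * ∑ i, deriv U (l i) *
            (deriv U (l i) + l i - (2 / N) * ∑ j ∈ Finset.univ.erase i, (l i - l j)⁻¹)

/-- the error term -/
noncomputable def EE {N : ℕ} (β : ℝ) (g1 g2 : ℝ → ℝ) (ε : ℝ) (l : Fin N → ℝ) : ℝ :=
  (2 / (β * N)) * (4 * ε * ((ε * ∑ a, l a ^ 2) * g2 (ε * ∑ a, l a ^ 2))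
      + 2 * ε * N * g1 (ε * ∑ a, l a ^ 2))
    - 2 * ((ε * ∑ a, l a ^ 2) * g1 (ε * ∑ a, l a ^ 2))
    + (2 / (β * N)) * β * (2 * ε) * (g1 (ε * ∑ a, l a ^ 2) *
      ∑ i, l i * ∑ j ∈ Finset.univ.erase i, (l i - l j)⁻¹)

lemma aux_div {n : ℕ} (β : ℝ) (hβ : 1 ≤ β) (U : ℝ → ℝ) (hU : ContDiff ℝ 2 U)
    (g g1 g2 : ℝ → ℝ) (hg : ∀ x, HasDerivAt g (g1 x) x)
    (hg1 : ∀ x, HasDerivAt g1 (g2 x) x) (hg2 : Continuous g2)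
    (hhi : ∀ x, 2 < x → g x = 0 ∧ g1 x = 0 ∧ g2 x = 0) (ε : ℝ) (hε : 0 < ε) :
    ∫ l : Fin (n + 1) → ℝ, pp β U l * (-2 * (g (ε * ∑ a, l a ^ 2) * II β U l)
      + EE β g1 g2 ε l) = 0 := by
  have hU1 : ContDiff ℝ 1 (deriv U) := by
    have : ContDiff ℝ (1+1) U := by simpa [one_add_one_eq_two] using hU
    exact (contDiff_succ_iff_deriv.1 this).2.2
  have hU2 : Continuous (deriv (deriv U)) := hU1.continuous_deriv le_rfl
  have hU1c := hU1.continuous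
  have hU1d : Differentiable ℝ (deriv U) := hU1.differentiable (by norm_num)
  have hgc : Continuous g := continuous_iff_continuousAt.2 fun x => (hg x).continuousAt
  have hg1c : Continuous g1 := continuous_iff_continuousAt.2 fun x => (hg1 x).continuousAt
  have hN : (0:ℝ) < (n + 1 : ℕ) := by positivity
  set K : ℝ := 2 / (β * (n + 1 : ℕ)) with hK
  have hKc : K * (β * (n + 1 : ℕ) / 2) = 1 := by
    rw [hK]; field_simp
  let s : (Fin (n + 1) → ℝ) → ℝ := fun l => ε * ∑ a, l a ^ 2
  have hsc : Continuous s := by fun_prop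
  let B : Fin (n + 1) → (Fin (n + 1) → ℝ) → ℝ := fun i l =>
    g (s l) * deriv U (l i) + K * (2 * ε) * (g1 (s l) * l i)
  let A : Fin (n + 1) → (Fin (n + 1) → ℝ) → ℝ := fun i l =>
    g1 (s l) * (ε * (2 * l i)) * deriv U (l i) + g (s l) * deriv (deriv U) (l i)
      + K * (2 * ε) * (g2 (s l) * (ε * (2 * l i)) * l i + g1 (s l))
  have hfar : ∀ l : Fin (n + 1) → ℝ, 1 + 2 / ε < ‖l‖ → 2 < s l := by
    intro l hl
    have h1 := aux_norm_sq l
    have h2 : 2 / ε < ∑ a, l a ^ 2 := by linarith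
    rw [div_lt_iff₀ hε] at h2
    change 2 < ε * ∑ a, l a ^ 2
    linarith
  have main := fun i => aux_ibp β hβ U hU i (A i) (B i) (by fun_prop) (by fun_prop) (1 + 2 / ε)
    (fun l hl => by simp [A, hhi _ (hfar l hl)]) (fun l hl => by simp [B, hhi _ (hfar l hl)])
    (by
      intro l
      have hs : HasDerivAt (fun t => s (Function.update l i t)) (ε * (2 * l i)) (l i) := by
        have : ∀ a ∈ (Finset.univ : Finset (Fin (n + 1))),
            HasDerivAt (fun t => (Function.update l i t a) ^ 2) (dl i a * (2 * l a)) (l i) := by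
          intro a _
          refine ((aux_upd l i a).pow 2).congr_deriv ?_
          simp
          ring
        refine ((HasDerivAt.fun_sum this).const_mul ε).congr_deriv ?_
        simp [dl]
      have hi : HasDerivAt (fun t => Function.update l i t i) 1 (l i) := by
        simpa [dl] using aux_upd l i i
      have e1 := HasDerivAt.comp_of_eq (l i) (hg (s l)) hs (by simp)
      have e2 := HasDerivAt.comp_of_eq (l i) (hg1 (s l)) hs (by simp)
      have e3 := HasDerivAt.comp_of_eq (l i) (hU1d (l i)).hasDerivAt hi (by simp)
      refine ((e1.mul e3).add ((e2.mul hi).const_mul (K * (2 * ε)))).congr_deriv ?_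
      simp [A])
  have hsum := integral_finsetSum Finset.univ (fun i _ => (main i).1)
  simp only [(main _).2, Finset.sum_const_zero] at hsum
  rw [← hsum]
  congr 1
  ext l
  rw [← Finset.mul_sum]
  congr 1
  have hAB : ∀ i, A i l + B i l * (β * (∑ j ∈ Finset.univ.erase i, (l i - l j)⁻¹)
        - (β * (n + 1 : ℕ) / 2) * (deriv U (l i) + l i))
      = g (s l) * deriv (deriv U) (l i)
        + (-(β * (n + 1 : ℕ) / 2) * g (s l)) * (deriv U (l i) *
            (deriv U (l i) + l i - (2 / (n + 1 : ℕ)) * ∑ j ∈ Finset.univ.erase i, (l i - l j)⁻¹))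
        + (K * 4 * ε * ε * g2 (s l) - 2 * ε * g1 (s l)) * (l i ^ 2) + K * (2 * ε) * g1 (s l)
        + (K * β * (2 * ε) * g1 (s l)) * (l i * ∑ j ∈ Finset.univ.erase i, (l i - l j)⁻¹) := by
    intro i
    generalize (∑ j ∈ Finset.univ.erase i, (l i - l j)⁻¹) = S
    have h2 : (β * (n + 1 : ℕ) / 2) * (2 / (n + 1 : ℕ)) = β := by field_simp
    simp only [A, B]
    generalize (2 / ((n + 1 : ℕ) : ℝ)) = r at h2 ⊢
    generalize (β * ((n + 1 : ℕ) : ℝ) / 2) = c at h2 hKc ⊢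
    linear_combination (-(2 * ε * g1 (s l) * l i * (deriv U (l i) + l i))) * hKc
      - (g (s l) * deriv U (l i) * S) * h2
  simp only [hAB, Finset.sum_add_distrib, ← Finset.mul_sum, II, EE]
  rw [← hK]
  change -2 * (g (s l) * _) + (K * (4 * ε * (s l * g2 (s l)) + 2 * ε * _ * g1 (s l)) -
    2 * (s l * g1 (s l)) + K * β * (2 * ε) * (g1 (s l) * _)) = _
  have hs' : s l = ε * ∑ a, l a ^ 2 := rfl
  generalize (∑ a, l a ^ 2) = Q at hs' ⊢
  simp only [Finset.sum_const, Finset.card_univ, Fintype.card_fin, nsmul_eq_mul]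
  generalize s l = x at hs' ⊢
  linear_combination (K * 4 * ε * g2 x - 2 * g1 x) * hs'

lemma aux_EE_bound {N : ℕ} (hN : 0 < N) (β : ℝ) (hβ : 1 ≤ β) (g1 g2 : ℝ → ℝ) (K : ℝ)
    (hhi : ∀ x, 2 < x → g1 x = 0 ∧ g2 x = 0)
    (h1 : ∀ x, |g1 x| ≤ K) (h2 : ∀ x, |g2 x| ≤ K) :
    ∃ C : ℝ, ∀ ε, 0 < ε → ε ≤ 1 → ∀ l : Fin N → ℝ, |EE β g1 g2 ε l| ≤ C := by
  have hN' : (0:ℝ) < N := by exact_mod_cast hN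
  have hK : 0 ≤ K := (abs_nonneg _).trans (h1 0)
  have hk : 0 < 2 / (β * N) := by positivity
  refine ⟨(2 / (β * N)) * (4 * 1 * (2 * K) + 2 * 1 * N * K) + 2 * (2 * K)
    + (2 / (β * N)) * β * (2 * 1) * (K * (Pr N).card), fun ε h0 hε1 l => ?_⟩
  have hT := aux_euler l
  unfold EE
  have hx : 0 ≤ ε * ∑ a, l a ^ 2 := mul_nonneg h0.le (Finset.sum_nonneg fun a _ => sq_nonneg _)
  generalize (ε * ∑ a, l a ^ 2) = x at hx ⊢
  generalize (∑ i, l i * ∑ j ∈ Finset.univ.erase i, (l i - l j)⁻¹) = T at hT ⊢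
  have b1 : |x * g1 x| ≤ 2 * K := by
    by_cases h : 2 < x
    · simp [hhi x h, hK]
    · rw [abs_mul, abs_of_nonneg hx]
      exact mul_le_mul (not_lt.1 h) (h1 x) (abs_nonneg _) (by norm_num)
  have b2 : |x * g2 x| ≤ 2 * K := by
    by_cases h : 2 < x
    · simp [hhi x h, hK]
    · rw [abs_mul, abs_of_nonneg hx]
      exact mul_le_mul (not_lt.1 h) (h2 x) (abs_nonneg _) (by norm_num)
  have b3 : |g1 x * T| ≤ K * (Pr N).card := by
    rw [abs_mul]; exact mul_le_mul (h1 x) hT (abs_nonneg _) hK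
  refine (abs_add_le _ _).trans (add_le_add ((abs_sub _ _).trans (add_le_add ?_ ?_)) ?_)
  · rw [abs_mul, abs_of_pos hk]
    refine mul_le_mul_of_nonneg_left ((abs_add_le _ _).trans (add_le_add ?_ ?_)) hk.le
    · rw [abs_mul, abs_of_pos (by positivity : 0 < 4 * ε)]; gcongr
    · rw [abs_mul, abs_of_pos (by positivity : 0 < 2 * ε * N)]; gcongr; exact h1 x
  · rw [abs_mul, abs_of_pos (by norm_num : (0:ℝ) < 2)]; gcongr
  · rw [abs_mul, abs_of_pos (by positivity : 0 < 2 / (β * N) * β * (2 * ε))]; gcongr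

theorem stmt_15 (N : ℕ) (hN : 2 ≤ N) (β : ℝ) (hβ : 1 ≤ β)
    (U : ℝ → ℝ) (hU : ContDiff ℝ 2 U)
    (Cg k : ℝ)
    (hgrowth : ∀ x : ℝ, |U x| + |deriv U x| + |deriv (deriv U) x| ≤ Cg * (1 + |x|) ^ k)
    (Z : ℝ) (hZ : 0 < Z)
    (μ : Measure (Fin N → ℝ)) [IsProbabilityMeasure μ]
    (hμ : μ = volume.withDensity (fun l =>
      ENNReal.ofReal (Z⁻¹ *
        (∏ p ∈ Finset.univ.filter (fun p : Fin N × Fin N => p.1 < p.2), |l p.1 - l p.2| ^ β) *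
        Real.exp (-(β * N) * ∑ i, (U (l i) / 2 + (l i) ^ 2 / 4))))) :
    ∫ l, (-(1 / 2) * ∑ i, deriv (deriv U) (l i)
        + (β * N / 4) * ∑ i, deriv U (l i) *
            (deriv U (l i) + l i - (2 / N) * ∑ j ∈ Finset.univ.erase i, (l i - l j)⁻¹)) ∂μ
      = 0 := by
  change ∫ l, II β U l ∂μ = 0
  by_cases hI : Integrable (fun l => II β U l) μ
  swap
  · exact integral_undef hI
  obtain ⟨n, rfl⟩ : ∃ n, N = n + 1 := ⟨N - 1, by omega⟩
  have hμ' : μ = volume.withDensity (fun l => ENNReal.ofReal (Z⁻¹ * pp β U l)) := by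
    rw [hμ]; congr 1; ext l; unfold pp VV; rw [mul_assoc]
  have hpc := aux_pp_cont (N := n + 1) β hβ U hU.continuous
  have hpn : ∀ l : Fin (n + 1) → ℝ, 0 ≤ pp β U l := fun l => by
    unfold pp VV
    exact mul_nonneg (Finset.prod_nonneg fun p _ => by positivity) (Real.exp_pos _).le
  obtain ⟨g, g1, g2, K, hg, hg1, hg2, hlo, hhi, b0, b1, b2⟩ := aux_cutoff
  have hgc : Continuous g := continuous_iff_continuousAt.2 fun x => (hg x).continuousAt
  have hg1c : Continuous g1 := continuous_iff_continuousAt.2 fun x => (hg1 x).continuousAt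
  obtain ⟨C, hC⟩ := aux_EE_bound (N := n + 1) (by omega) β hβ g1 g2 K (fun x hx => (hhi x hx).2) b1 b2
  let e : ℕ → ℝ := fun m => 1 / ((m : ℝ) + 1)
  have he0 : ∀ m, 0 < e m := fun m => by positivity
  have he1 : ∀ m, e m ≤ 1 := fun m => by
    simp only [e]; rw [div_le_one (by positivity)]; linarith [(Nat.cast_nonneg m : (0:ℝ) ≤ m)]
  have helim : Filter.Tendsto e Filter.atTop (nhds 0) := tendsto_one_div_add_atTop_nhds_zero_nat
  let F : ℕ → (Fin (n + 1) → ℝ) → ℝ := fun m l =>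
    -2 * (g (e m * ∑ a, l a ^ 2) * II β U l) + EE β g1 g2 (e m) l
  have hF0 : ∀ m, ∫ l, F m l ∂μ = 0 := by
    intro m
    rw [hμ', integral_withDensity_eq_integral_toReal_smul (by fun_prop) (by simp)]
    have : ∀ l, (ENNReal.ofReal (Z⁻¹ * pp β U l)).toReal • F m l = Z⁻¹ * (pp β U l * F m l) := by
      intro l
      rw [ENNReal.toReal_ofReal (mul_nonneg (by positivity) (hpn l)), smul_eq_mul, mul_assoc]
    simp only [this]
    rw [integral_const_mul, aux_div β hβ U hU g g1 g2 hg hg1 hg2 hhi (e m) (he0 m), mul_zero]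
  have hlim := tendsto_integral_of_dominated_convergence (μ := μ) (F := F)
    (f := fun l => -2 * II β U l) (fun l => 2 * |II β U l| + C) ?_ ?_ ?_ ?_
  · simp only [hF0] at hlim
    have := tendsto_nhds_unique hlim tendsto_const_nhds
    rw [integral_const_mul] at this
    linarith
  · intro m
    refine AEStronglyMeasurable.add (AEStronglyMeasurable.const_mul (AEStronglyMeasurable.mul ?_ hI.1) _) ?_
    · exact Continuous.aestronglyMeasurable (by fun_prop)
    · refine Measurable.aestronglyMeasurable ?_
      unfold EE
      have := hg1c.measurable
      have := hg2.measurable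
      fun_prop
  · exact (hI.abs.const_mul 2).add (integrable_const C)
  · intro m
    refine Filter.Eventually.of_forall fun l => ?_
    refine (norm_add_le _ _).trans (add_le_add ?_ (hC _ (he0 m) (he1 m) l))
    rw [Real.norm_eq_abs, abs_mul, abs_mul]
    have := mul_le_mul_of_nonneg_right (b0 (e m * ∑ a, l a ^ 2)) (abs_nonneg (II β U l))
    have h2 : |(-2:ℝ)| = 2 := by norm_num
    rw [h2]; linarith
  · refine Filter.Eventually.of_forall fun l => ?_
    refine tendsto_const_nhds.congr' ?_
    have h1 : Filter.Tendsto (fun m => e m * ∑ a, l a ^ 2) Filter.atTop (nhds 0) := by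
      simpa using helim.mul_const (∑ a, l a ^ 2)
    filter_upwards [h1.eventually (gt_mem_nhds (zero_lt_one))] with m hm
    obtain ⟨q0, q1, q2⟩ := hlo _ hm
    simp [F, EE, q0, q1, q2]
end
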